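/- For every integer k ≥ 1, every (theta, triangle, S_{k,k,k})-free graph G has treewidth at most 2·(R(3, 4k−1))^3 − 1, where R(3, 4k−1) is the Ramsey number. -/

import Mathlib

open SimpleGraph

variable {V : Type} [Fintype V] [DecidableEq V]

/-- `p` is a chordless (induced) path in `G`: a path such that the only edges of `G`
between its vertices are the edges of the path. -/
def IsInducedPathW (G : SimpleGraph V) {a b : V} (p : G.Walk a b) : Prop :=
  p.IsPath ∧ ∀ u v : V, u ∈ p.support → v ∈ p.support → G.Adj u v → p.toSubgraph.Adj u v

/-- A hole of length `n` in `G`: an induced (chordless) cycle of length `n ≥ 4`,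
given by an injection of `ZMod n` into `G` whose adjacencies are exactly the consecutive ones. -/
def IsHoleEmb (G : SimpleGraph V) (n : ℕ) (f : ZMod n → V) : Prop :=
  4 ≤ n ∧ Function.Injective f ∧
    ∀ i j : ZMod n, G.Adj (f i) (f j) ↔ (j = i + 1 ∨ i = j + 1)

/-- `G` contains an even hole (induced even cycle of length at least 4). -/
def ContainsEvenHole (G : SimpleGraph V) : Prop :=
  ∃ (n : ℕ) (f : ZMod n → V), IsHoleEmb G n f ∧ Even n

/-- `G` contains a square (hole of length 4). -/
def ContainsSquare (G : SimpleGraph V) : Prop :=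
  ∃ f : ZMod 4 → V, IsHoleEmb G 4 f

/-- `G` contains a theta as an induced subgraph: three internally vertex-disjoint chordless
paths from `a` to `b`, each of length at least 2, with no edges between the paths other than
those incident to `a` or `b` specified by the paths. -/
def ContainsTheta (G : SimpleGraph V) : Prop :=
  ∃ (a b : V) (p₁ p₂ p₃ : G.Walk a b),
    (IsInducedPathW G p₁ ∧ IsInducedPathW G p₂ ∧ IsInducedPathW G p₃) ∧
    (2 ≤ p₁.length ∧ 2 ≤ p₂.length ∧ 2 ≤ p₃.length) ∧
    (∀ w : V, ((w ∈ p₁.support ∧ w ∈ p₂.support) ∨ (w ∈ p₁.support ∧ w ∈ p₃.support) ∨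
          (w ∈ p₂.support ∧ w ∈ p₃.support)) → (w = a ∨ w = b)) ∧
    (∀ u w : V, u ≠ a → u ≠ b → w ≠ a → w ≠ b →
      ((u ∈ p₁.support ∧ w ∈ p₂.support) ∨ (u ∈ p₁.support ∧ w ∈ p₃.support) ∨
       (u ∈ p₂.support ∧ w ∈ p₃.support)) → ¬G.Adj u w)

/-- `G` contains a prism as an induced subgraph. -/
def ContainsPrism (G : SimpleGraph V) : Prop :=
  ∃ (a₁ b₁ a₂ b₂ a₃ b₃ : V) (p₁ : G.Walk a₁ b₁) (p₂ : G.Walk a₂ b₂) (p₃ : G.Walk a₃ b₃),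
    (IsInducedPathW G p₁ ∧ IsInducedPathW G p₂ ∧ IsInducedPathW G p₃) ∧
    (1 ≤ p₁.length ∧ 1 ≤ p₂.length ∧ 1 ≤ p₃.length) ∧
    (G.Adj a₁ a₂ ∧ G.Adj a₂ a₃ ∧ G.Adj a₁ a₃) ∧
    (G.Adj b₁ b₂ ∧ G.Adj b₂ b₃ ∧ G.Adj b₁ b₃) ∧
    (∀ w : V, ¬(w ∈ p₁.support ∧ w ∈ p₂.support) ∧ ¬(w ∈ p₁.support ∧ w ∈ p₃.support) ∧
          ¬(w ∈ p₂.support ∧ w ∈ p₃.support)) ∧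
    (∀ u w : V, u ∈ p₁.support → w ∈ p₂.support → G.Adj u w →
      (u = a₁ ∧ w = a₂) ∨ (u = b₁ ∧ w = b₂)) ∧
    (∀ u w : V, u ∈ p₁.support → w ∈ p₃.support → G.Adj u w →
      (u = a₁ ∧ w = a₃) ∨ (u = b₁ ∧ w = b₃)) ∧
    (∀ u w : V, u ∈ p₂.support → w ∈ p₃.support → G.Adj u w →
      (u = a₂ ∧ w = a₃) ∨ (u = b₂ ∧ w = b₃))

/-- `G` contains a pyramid as an induced subgraph. -/
def ContainsPyramid (G : SimpleGraph V) : Prop :=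
  ∃ (a b₁ b₂ b₃ : V) (p₁ : G.Walk a b₁) (p₂ : G.Walk a b₂) (p₃ : G.Walk a b₃),
    (IsInducedPathW G p₁ ∧ IsInducedPathW G p₂ ∧ IsInducedPathW G p₃) ∧
    (1 ≤ p₁.length ∧ 1 ≤ p₂.length ∧ 1 ≤ p₃.length) ∧
    ((2 ≤ p₁.length ∧ 2 ≤ p₂.length) ∨ (2 ≤ p₁.length ∧ 2 ≤ p₃.length) ∨
     (2 ≤ p₂.length ∧ 2 ≤ p₃.length)) ∧
    (G.Adj b₁ b₂ ∧ G.Adj b₂ b₃ ∧ G.Adj b₁ b₃) ∧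
    (∀ w : V, ((w ∈ p₁.support ∧ w ∈ p₂.support) ∨ (w ∈ p₁.support ∧ w ∈ p₃.support) ∨
          (w ∈ p₂.support ∧ w ∈ p₃.support)) → w = a) ∧
    (∀ u w : V, u ∈ p₁.support → w ∈ p₂.support → u ≠ a → w ≠ a → G.Adj u w →
      u = b₁ ∧ w = b₂) ∧
    (∀ u w : V, u ∈ p₁.support → w ∈ p₃.support → u ≠ a → w ≠ a → G.Adj u w →
      u = b₁ ∧ w = b₃) ∧
    (∀ u w : V, u ∈ p₂.support → w ∈ p₃.support → u ≠ a → w ≠ a → G.Adj u w →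
      u = b₂ ∧ w = b₃)

/-- `G` contains the cube as an induced subgraph: a hole of length 6 together with
two non-adjacent vertices `u, v` outside it, `u` adjacent to the even positions and
`v` adjacent to the odd positions. -/
def ContainsCube (G : SimpleGraph V) : Prop :=
  ∃ (f : ZMod 6 → V) (u v : V), IsHoleEmb G 6 f ∧
    u ∉ Set.range f ∧ v ∉ Set.range f ∧ ¬G.Adj u v ∧
    (∀ m : ZMod 6, G.Adj u (f m) ↔ (m = 0 ∨ m = 2 ∨ m = 4)) ∧
    (∀ m : ZMod 6, G.Adj v (f m) ↔ (m = 1 ∨ m = 3 ∨ m = 5))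

/-- `G` contains an even wheel: a hole plus a vertex outside it having at least 3 and
an even number of neighbors on the hole. -/
def ContainsEvenWheel (G : SimpleGraph V) : Prop :=
  ∃ (n : ℕ) (f : ZMod n → V) (u : V), IsHoleEmb G n f ∧ u ∉ Set.range f ∧
    3 ≤ {m : ZMod n | G.Adj u (f m)}.ncard ∧ Even {m : ZMod n | G.Adj u (f m)}.ncard

/-- `G` contains a butterfly: a wheel `(H,v)` with `N_H(v) = {a,b,c,d}`,
`ab, cd ∈ E(G)` and `bc, da ∉ E(G)`. -/
def ContainsButterfly (G : SimpleGraph V) : Prop :=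
  ∃ (n : ℕ) (f : ZMod n → V) (u : V), IsHoleEmb G n f ∧ u ∉ Set.range f ∧
    ∃ i j : ZMod n, i ≠ j ∧ i ≠ j + 1 ∧ i + 1 ≠ j ∧ i + 1 ≠ j + 1 ∧
      ¬G.Adj (f (i + 1)) (f j) ∧ ¬G.Adj (f (j + 1)) (f i) ∧
      (∀ m : ZMod n, G.Adj u (f m) ↔ (m = i ∨ m = i + 1 ∨ m = j ∨ m = j + 1))

/-- A 2-wheel in `G`: a hole `f` together with two distinct centers `u, v` outside the hole,
each having at least three neighbors on the hole. -/
def Is2WheelCfg (G : SimpleGraph V) (n : ℕ) (f : ZMod n → V) (u v : V) : Prop :=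
  IsHoleEmb G n f ∧ u ≠ v ∧ u ∉ Set.range f ∧ v ∉ Set.range f ∧
  3 ≤ {m : ZMod n | G.Adj u (f m)}.ncard ∧ 3 ≤ {m : ZMod n | G.Adj v (f m)}.ncard

/-- The 2-wheel `(f, {u,v})` is nested: the hole splits at `f i` and `f (i+d)` into two arcs,
with all neighbors of `u` on one arc and all neighbors of `v` on the other. -/
def NestedCfg (G : SimpleGraph V) (n : ℕ) (f : ZMod n → V) (u v : V) : Prop :=
  ∃ (i : ZMod n) (d : ℕ), 1 ≤ d ∧ d < n ∧
    (∀ m : ZMod n, G.Adj u (f m) → ∃ e : ℕ, e ≤ d ∧ m = i + (e : ZMod n)) ∧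
    (∀ m : ZMod n, G.Adj v (f m) → ∃ e : ℕ, e ≤ n - d ∧ m = i + (d : ZMod n) + (e : ZMod n))

/-- The 2-wheel `(f, {u,v})` is the cube. -/
def CubeCfg (G : SimpleGraph V) (n : ℕ) (f : ZMod n → V) (u v : V) : Prop :=
  n = 6 ∧ ∃ i : ZMod n,
    (∀ m : ZMod n, G.Adj u (f m) ↔ (m = i ∨ m = i + 2 ∨ m = i + 4)) ∧
    (∀ m : ZMod n, G.Adj v (f m) ↔ (m = i + 1 ∨ m = i + 3 ∨ m = i + 5))

/-- The 2-wheel `(f, {u,v})` is a cousin wheel: `N_H(u) = {h₁,h₂,h₃}` and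
`N_H(v) = {h₂,h₃,h₄}` for four consecutive vertices of the hole (or with `u, v` swapped). -/
def CousinCfg (G : SimpleGraph V) (n : ℕ) (f : ZMod n → V) (u v : V) : Prop :=
  (∃ i : ZMod n,
    (∀ m : ZMod n, G.Adj u (f m) ↔ (m = i ∨ m = i + 1 ∨ m = i + 2)) ∧
    (∀ m : ZMod n, G.Adj v (f m) ↔ (m = i + 1 ∨ m = i + 2 ∨ m = i + 3))) ∨
  (∃ i : ZMod n,
    (∀ m : ZMod n, G.Adj v (f m) ↔ (m = i ∨ m = i + 1 ∨ m = i + 2)) ∧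
    (∀ m : ZMod n, G.Adj u (f m) ↔ (m = i + 1 ∨ m = i + 2 ∨ m = i + 3)))

/-- A `u`-sector of the hole `f`: a subpath from `f i` to `f (i+d)` (`1 ≤ d < n`)
whose two ends are adjacent to `u` and whose internal vertices are not. -/
def IsSector (G : SimpleGraph V) (n : ℕ) (f : ZMod n → V) (u : V) (i : ZMod n) (d : ℕ) : Prop :=
  1 ≤ d ∧ d < n ∧ G.Adj u (f i) ∧ G.Adj u (f (i + (d : ZMod n))) ∧
    ∀ m : ℕ, 0 < m → m < d → ¬G.Adj u (f (i + (m : ZMod n)))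

/-- The class 𝒞: (theta, prism, pyramid, butterfly)-free graphs in which every 2-wheel
with non-adjacent centers is a nested wheel or a cousin wheel. -/
def InClassC (G : SimpleGraph V) : Prop :=
  ¬ContainsTheta G ∧ ¬ContainsPrism G ∧ ¬ContainsPyramid G ∧ ¬ContainsButterfly G ∧
  ∀ (n : ℕ) (f : ZMod n → V) (u v : V), Is2WheelCfg G n f u v → ¬G.Adj u v →
    (NestedCfg G n f u v ∨ CousinCfg G n f u v)

/-- `G` contains `S_{k,k,k}` as an induced subgraph: a root `r` and three legs of `k` edges
each, with no other adjacencies among these vertices. -/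
def ContainsSpider (G : SimpleGraph V) (k : ℕ) : Prop :=
  ∃ (r : V) (f : Fin 3 → Fin k → V),
    (∀ (j : Fin 3) (m : Fin k), f j m ≠ r) ∧
    (∀ (j₁ : Fin 3) (m₁ : Fin k) (j₂ : Fin 3) (m₂ : Fin k),
      f j₁ m₁ = f j₂ m₂ → j₁ = j₂ ∧ m₁ = m₂) ∧
    (∀ (j : Fin 3) (m : Fin k), G.Adj r (f j m) ↔ (m : ℕ) = 0) ∧
    (∀ (j₁ : Fin 3) (m₁ : Fin k) (j₂ : Fin 3) (m₂ : Fin k),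
      G.Adj (f j₁ m₁) (f j₂ m₂) ↔
        (j₁ = j₂ ∧ ((m₁ : ℕ) + 1 = (m₂ : ℕ) ∨ (m₂ : ℕ) + 1 = (m₁ : ℕ))))

/-- A `k`-span-wheel in `G`: a hole `f` of length `n`, with `x = f 0` and `y = f p`
non-adjacent, the two paths `P_A = f 0, f 1, …, f p` and `P_B = f 0, f (n-1), …, f p`,
and centers `c 0, …, c (k-1)` outside the hole such that `{c i} ∪ {x,y}` is independent,
every center has at least three neighbors on the hole and neighbors in the interiors of
both `P_A` and `P_B`, and the neighbors of the centers appear along both `P_A` and `P_B`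
(from `x` to `y`) in the order of the centers. -/
def IsSpanWheel (G : SimpleGraph V) (k n p : ℕ) (f : ZMod n → V) (c : Fin k → V) : Prop :=
  IsHoleEmb G n f ∧
  2 ≤ p ∧ p ≤ n - 2 ∧
  ¬G.Adj (f 0) (f (p : ZMod n)) ∧
  Function.Injective c ∧
  (∀ i : Fin k, c i ∉ Set.range f) ∧
  (∀ i j : Fin k, i ≠ j → ¬G.Adj (c i) (c j)) ∧
  (∀ i : Fin k, ¬G.Adj (c i) (f 0)) ∧
  (∀ i : Fin k, ¬G.Adj (c i) (f (p : ZMod n))) ∧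
  (∀ i : Fin k, 3 ≤ {m : ZMod n | G.Adj (c i) (f m)}.ncard) ∧
  (∀ i : Fin k, ∃ a : ℕ, 0 < a ∧ a < p ∧ G.Adj (c i) (f (a : ZMod n))) ∧
  (∀ i : Fin k, ∃ b : ℕ, p < b ∧ b < n ∧ G.Adj (c i) (f (b : ZMod n))) ∧
  (∀ i j : Fin k, i < j → ∀ a₁ a₂ : ℕ, a₁ ≤ p → a₂ ≤ p →
    G.Adj (c i) (f (a₁ : ZMod n)) → G.Adj (c j) (f (a₂ : ZMod n)) → a₁ ≤ a₂) ∧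
  (∀ i j : Fin k, i < j → ∀ b₁ b₂ : ℕ, p ≤ b₁ → b₁ ≤ n → p ≤ b₂ → b₂ ≤ n →
    G.Adj (c i) (f (b₁ : ZMod n)) → G.Adj (c j) (f (b₂ : ZMod n)) → b₂ ≤ b₁)

/-- `X` separates `s` from `t` in `G`: neither is in `X` and every walk from `s` to `t`
meets `X`. -/
def Separates (G : SimpleGraph V) (X : Set V) (s t : V) : Prop :=
  s ∉ X ∧ t ∉ X ∧ ∀ p : G.Walk s t, ∃ w ∈ p.support, w ∈ X

/-- `X` is a minimal separator of `G`: for some pair `s, t` it is an inclusion-wise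
minimal `st`-separator. -/
def MinSeparator (G : SimpleGraph V) (X : Set V) : Prop :=
  ∃ s t : V, Separates G X s t ∧ ∀ Y ⊆ X, Separates G Y s t → Y = X

/-- `A` is a connected component of `G ∖ C` that is full to `C`. -/
def IsFullComponent (G : SimpleGraph V) (C A : Set V) : Prop :=
  A.Nonempty ∧ Disjoint A C ∧ (G.induce A).Connected ∧
  (∀ a ∈ A, ∀ w : V, G.Adj a w → w ∈ A ∪ C) ∧
  (∀ x ∈ C, ∃ a ∈ A, G.Adj x a)

/-- A tree decomposition of `G` with tree `T` and bags `B`. -/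
def IsTreeDecomp (G : SimpleGraph V) {ι : Type} (T : SimpleGraph ι) (B : ι → Finset V) : Prop :=
  T.IsTree ∧
  (∀ v : V, ∃ i, v ∈ B i) ∧
  (∀ u v : V, G.Adj u v → ∃ i, u ∈ B i ∧ v ∈ B i) ∧
  (∀ (v : V) (i j : ι), v ∈ B i → v ∈ B j →
    ∀ (p : T.Walk i j), p.IsPath → ∀ x ∈ p.support, v ∈ B x)

/-- The treewidth of a finite graph: the least `w` such that `G` has a tree decomposition
all of whose bags have size at most `w + 1`. -/
noncomputable def treewidth (G : SimpleGraph V) : ℕ :=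
  sInf {w : ℕ | ∃ (m : ℕ) (T : SimpleGraph (Fin m)) (B : Fin m → Finset V),
    IsTreeDecomp G T B ∧ ∀ i, (B i).card ≤ w + 1}

/-- A graph is chordal iff it has no hole. -/
def IsChordal (G : SimpleGraph V) : Prop :=
  ¬∃ (n : ℕ) (f : ZMod n → V), IsHoleEmb G n f

/-- `H` is obtained from `G` by a minimal fill-in (minimal chordal completion). -/
def IsMinimalChordalCompletion (G H : SimpleGraph V) : Prop :=
  G ≤ H ∧ IsChordal H ∧ ∀ H' : SimpleGraph V, G ≤ H' → H' ≤ H → IsChordal H' → H' = H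

/-- `Ω` is a potential maximal clique of `G`: a maximal clique of some minimal chordal
completion of `G`. -/
def IsPMC (G : SimpleGraph V) (Ω : Set V) : Prop :=
  ∃ H : SimpleGraph V, IsMinimalChordalCompletion G H ∧ H.IsClique Ω ∧
    ∀ Ω' : Set V, H.IsClique Ω' → Ω ⊆ Ω' → Ω' = Ω

/-- `n` satisfies the Ramsey property for `(t, k)`: every graph on `n` vertices has a
clique of size `t` or an independent set of size `k`. -/
def RamseyProp (n t k : ℕ) : Prop :=
  ∀ G : SimpleGraph (Fin n),
    (∃ S : Finset (Fin n), G.IsNClique t S) ∨ (∃ S : Finset (Fin n), Gᶜ.IsNClique k S)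

/-- The Ramsey number `R(t, k)`. -/
noncomputable def ramseyNumber (t k : ℕ) : ℕ := sInf {n : ℕ | RamseyProp n t k}

namespace S14

/-! ### Connected sets, touching, anticomplete sets -/

section basics
variable {U : Type} {G : SimpleGraph U}

/-- one step inside `D` -/
def Stp (G : SimpleGraph U) (D : Set U) (a b : U) : Prop := G.Adj a b ∧ a ∈ D ∧ b ∈ D

/-- connected (possibly empty) set of vertices -/
def Conn (G : SimpleGraph U) (D : Set U) : Prop :=
  ∀ x ∈ D, ∀ y ∈ D, Relation.ReflTransGen (Stp G D) x y

/-- `v` has a neighbour in `D` -/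
def Tch (G : SimpleGraph U) (D : Set U) (v : U) : Prop := ∃ d ∈ D, G.Adj v d

/-- disjoint and anticomplete -/
def Anti (G : SimpleGraph U) (D E : Set U) : Prop :=
  ∀ d ∈ D, ∀ e ∈ E, d ≠ e ∧ ¬ G.Adj d e

theorem Anti.symm {D E : Set U} (h : Anti G D E) : Anti G E D :=
  fun d hd e he => ⟨(h e he d hd).1.symm, fun hh => (h e he d hd).2 hh.symm⟩

theorem Anti.mono {D E D' E' : Set U} (h : Anti G D E) (h1 : D' ⊆ D) (h2 : E' ⊆ E) :
    Anti G D' E' := fun d hd e he => h d (h1 hd) e (h2 he)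

theorem Anti.union_left {D E F : Set U} (h1 : Anti G D F) (h2 : Anti G E F) :
    Anti G (D ∪ E) F := by
  intro d hd e he
  rcases hd with hd | hd
  · exact h1 d hd e he
  · exact h2 d hd e he

theorem Anti.union_right {D E F : Set U} (h1 : Anti G F D) (h2 : Anti G F E) :
    Anti G F (D ∪ E) := (h1.symm.union_left h2.symm).symm

theorem Tch.mono {D E : Set U} {v : U} (h : Tch G D v) (hs : D ⊆ E) : Tch G E v := by
  obtain ⟨d, hd, h⟩ := h
  exact ⟨d, hs hd, h⟩

theorem Stp.symm {D : Set U} {a b : U} (h : Stp G D a b) : Stp G D b a :=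
  ⟨h.1.symm, h.2.2, h.2.1⟩

theorem rtg_symm {D : Set U} {a b : U} (h : Relation.ReflTransGen (Stp G D) a b) :
    Relation.ReflTransGen (Stp G D) b a := by
  induction h with
  | refl => exact .refl
  | tail _ h ih => exact .head h.symm ih

theorem rtg_mono {D E : Set U} (hs : D ⊆ E) {a b : U}
    (h : Relation.ReflTransGen (Stp G D) a b) : Relation.ReflTransGen (Stp G E) a b := by
  induction h with
  | refl => exact .refl
  | tail _ h ih => exact ih.tail ⟨h.1, hs h.2.1, hs h.2.2⟩

theorem Conn.empty : Conn G (∅ : Set U) := fun _ hx => hx.elim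

theorem Conn.singleton (v : U) : Conn G {v} := by
  intro x hx y hy
  rw [Set.mem_singleton_iff] at hx hy
  subst hx hy
  exact .refl

theorem Conn.union {D E : Set U} (h1 : Conn G D) (h2 : Conn G E)
    (h : ∃ d ∈ D, ∃ e ∈ E, d = e ∨ G.Adj d e) : Conn G (D ∪ E) := by
  obtain ⟨d, hd, e, he, hde⟩ := h
  have hDE : Relation.ReflTransGen (Stp G (D ∪ E)) d e := by
    rcases hde with rfl | hde
    · exact .refl
    · exact .single ⟨hde, Or.inl hd, Or.inr he⟩
  have key : ∀ x ∈ D ∪ E, Relation.ReflTransGen (Stp G (D ∪ E)) x d := by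
    intro x hx
    rcases hx with hx | hx
    · exact rtg_mono Set.subset_union_left (h1 x hx d hd)
    · exact (rtg_mono Set.subset_union_right (h2 x hx e he)).trans (rtg_symm hDE)
  intro x hx y hy
  exact (key x hx).trans (rtg_symm (key y hy))

theorem Conn.insert {D : Set U} {v : U} (h1 : Conn G D) (h : Tch G D v) :
    Conn G (insert v D) := by
  obtain ⟨d, hd, h⟩ := h
  rw [Set.insert_eq]
  exact (Conn.singleton v).union h1 ⟨v, rfl, d, hd, Or.inr h⟩

theorem Conn.star {P E : Set U} (h1 : Conn G P) (hs : P ⊆ E)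
    (h : ∀ e ∈ E, e ∈ P ∨ Tch G P e) : Conn G E := by
  have key : ∀ x ∈ E, ∃ p ∈ P, Relation.ReflTransGen (Stp G E) x p := by
    intro x hx
    rcases h x hx with hp | ⟨p, hp, ha⟩
    · exact ⟨x, hp, .refl⟩
    · exact ⟨p, hp, .single ⟨ha, hx, hs hp⟩⟩
  intro x hx y hy
  obtain ⟨p, hp, h3⟩ := key x hx
  obtain ⟨q, hq, h4⟩ := key y hy
  exact (h3.trans (rtg_mono hs (h1 p hp q hq))).trans (rtg_symm h4)

/-- closedness principle -/
theorem Conn.subset_of_closed {D A : Set U} (h : Conn G D) (hm : ∃ d ∈ D, d ∈ A)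
    (hc : ∀ a ∈ A, ∀ b ∈ D, G.Adj a b → b ∈ A) : D ⊆ A := by
  obtain ⟨d, hd, hA⟩ := hm
  intro y hy
  have := h d hd y hy
  induction this with
  | refl => exact hA
  | tail _ hst ih => exact hc _ (ih hst.2.1) _ hst.2.2 hst.1

/-- segment of a path -/
def seg (f : ℕ → U) (i j : ℕ) : Set U := {v | ∃ t, i ≤ t ∧ t ≤ j ∧ v = f t}

theorem mem_seg {f : ℕ → U} {i j t : ℕ} (h1 : i ≤ t) (h2 : t ≤ j) : f t ∈ seg f i j :=
  ⟨t, h1, h2, rfl⟩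

/-- induced path -/
def IndP (G : SimpleGraph U) (f : ℕ → U) (n : ℕ) : Prop :=
  ∀ i j, i < j → j ≤ n → f i ≠ f j ∧ (G.Adj (f i) (f j) ↔ j = i + 1)

theorem conn_seg_of_adj {f : ℕ → U} {i j : ℕ}
    (h : ∀ t, i ≤ t → t < j → G.Adj (f t) (f (t + 1))) : Conn G (seg f i j) := by
  have key : ∀ d, i + d ≤ j → Relation.ReflTransGen (Stp G (seg f i j)) (f i) (f (i + d)) := by
    intro d
    induction d with
    | zero => intro _; exact .refl
    | succ d ih =>
      intro hd
      exact (ih (by omega)).tail ⟨h _ (by omega) (by omega), mem_seg (by omega) (by omega),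
        mem_seg (by omega) (by omega)⟩
  rintro _ ⟨s, h1, h2, rfl⟩ _ ⟨t, h3, h4, rfl⟩
  have e1 := key (s - i) (by omega)
  have e2 := key (t - i) (by omega)
  rw [Nat.add_sub_cancel' h1] at e1
  rw [Nat.add_sub_cancel' h3] at e2
  exact (rtg_symm e1).trans e2

theorem IndP.adj {f : ℕ → U} {n : ℕ} (h : IndP G f n) {i : ℕ} (hi : i < n) :
    G.Adj (f i) (f (i + 1)) := (h i (i + 1) (by omega) (by omega)).2.2 rfl

theorem IndP.conn {f : ℕ → U} {n : ℕ} (h : IndP G f n) (i : ℕ) {j : ℕ} (hj : j ≤ n) :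
    Conn G (seg f i j) := conn_seg_of_adj fun _ _ ht => h.adj (by omega)

theorem IndP.inj {f : ℕ → U} {n : ℕ} (h : IndP G f n) {i j : ℕ} (hi : i ≤ n) (hj : j ≤ n)
    (he : f i = f j) : i = j := by
  rcases lt_trichotomy i j with h1 | h1 | h1
  · exact absurd he (h i j h1 hj).1
  · exact h1
  · exact absurd he.symm (h j i h1 hi).1

theorem IndP.adj_iff {f : ℕ → U} {n : ℕ} (h : IndP G f n) {i j : ℕ} (hi : i ≤ n) (hj : j ≤ n) :
    G.Adj (f i) (f j) ↔ (j = i + 1 ∨ i = j + 1) := by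
  rcases lt_trichotomy i j with h1 | h1 | h1
  · rw [(h i j h1 hj).2]; omega
  · subst h1; simp
  · rw [G.adj_comm, (h j i h1 hi).2]; omega

theorem IndP.anti {f : ℕ → U} {n : ℕ} (h : IndP G f n) {i j i' j' : ℕ} (h1 : j + 1 < i')
    (h2 : j' ≤ n) : Anti G (seg f i j) (seg f i' j') := by
  rintro _ ⟨s, h3, h4, rfl⟩ _ ⟨t, h5, h6, rfl⟩
  refine ⟨fun he => ?_, fun ha => ?_⟩
  · have := h.inj (by omega) (by omega) he; omega
  · have := (h.adj_iff (by omega) (by omega)).1 ha; omega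

theorem IndP.mono {f : ℕ → U} {n m : ℕ} (h : IndP G f n) (hm : m ≤ n) : IndP G f m :=
  fun i j h1 h2 => h i j h1 (h2.trans hm)

theorem IndP.reverse {f : ℕ → U} {n : ℕ} (h : IndP G f n) : IndP G (fun t => f (n - t)) n := by
  intro i j h1 h2
  refine ⟨fun he => ?_, ?_⟩
  · have := h.inj (by omega) (by omega) he; omega
  · rw [h.adj_iff (by omega) (by omega)]; omega

theorem seg_reverse {f : ℕ → U} {n i j : ℕ} (hij : i ≤ j) (hj : j ≤ n) :
    seg (fun t => f (n - t)) i j = seg f (n - j) (n - i) := by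
  ext v
  constructor
  · rintro ⟨t, h1, h2, rfl⟩
    exact ⟨n - t, by omega, by omega, rfl⟩
  · rintro ⟨t, h1, h2, rfl⟩
    exact ⟨n - t, by omega, by omega, by show f t = f (n - (n - t)); congr 1; omega⟩

theorem seg_subset {f : ℕ → U} {i j i' j' : ℕ} (h1 : i' ≤ i) (h2 : j ≤ j') :
    seg f i j ⊆ seg f i' j' := by
  rintro _ ⟨t, h3, h4, rfl⟩
  exact mem_seg (by omega) (by omega)

theorem exists_walkfun {D : Set U} {x y : U} (hx : x ∈ D)
    (h : Relation.ReflTransGen (Stp G D) x y) :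
    ∃ (n : ℕ) (f : ℕ → U), (∀ i ≤ n, f i ∈ D) ∧ (∀ i < n, G.Adj (f i) (f (i + 1))) ∧
      f 0 = x ∧ f n = y := by
  induction h with
  | refl => exact ⟨0, fun _ => x, fun _ _ => hx, fun i hi => by omega, rfl, rfl⟩
  | @tail b c _ hst ih =>
    obtain ⟨n, f, h1, h2, h3, h4⟩ := ih
    refine ⟨n + 1, fun i => if i ≤ n then f i else c, ?_, ?_, ?_, ?_⟩
    · intro i hi
      by_cases hh : i ≤ n
      · simp only [hh, if_true]; exact h1 i hh
      · simp only [hh, if_false]; exact hst.2.2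
    · intro i hi
      by_cases hh : i = n
      · subst hh
        simp [h4, hst.1]
      · simp only [show i ≤ n by omega, show i + 1 ≤ n by omega, if_true]
        exact h2 i (by omega)
    · simp [h3]
    · simp

/-- Path lemma -/
theorem PL {D : Set U} (hD : Conn G D) (S T : U → Prop) (hS : ∃ d ∈ D, S d)
    (hT : ∃ d ∈ D, T d) :
    ∃ (n : ℕ) (f : ℕ → U), (∀ i ≤ n, f i ∈ D) ∧ IndP G f n ∧
      (∀ i ≤ n, (S (f i) ↔ i = 0)) ∧ (∀ i ≤ n, (T (f i) ↔ i = n)) := by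
  classical
  obtain ⟨d, hd, hSd⟩ := hS
  obtain ⟨e, he, hTe⟩ := hT
  let Q : ℕ → Prop := fun n => ∃ f : ℕ → U, (∀ i ≤ n, f i ∈ D) ∧
    (∀ i < n, G.Adj (f i) (f (i + 1))) ∧ S (f 0) ∧ T (f n)
  have hQ : ∃ n, Q n := by
    obtain ⟨n, f, h1, h2, h3, h4⟩ := exists_walkfun hd (hD d hd e he)
    exact ⟨n, f, h1, h2, h3 ▸ hSd, h4 ▸ hTe⟩
  obtain ⟨f, h1, h2, h3, h4⟩ := Nat.find_spec hQ
  have hmin : ∀ m, m < Nat.find hQ → ¬ Q m := fun m hm => Nat.find_min hQ hm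
  generalize Nat.find hQ = n at *
  have hTi : ∀ i ≤ n, (T (f i) ↔ i = n) := by
    intro i hi
    refine ⟨fun ht => ?_, fun h => h ▸ h4⟩
    by_contra hne
    exact hmin i (by omega) ⟨f, fun j hj => h1 j (by omega), fun j hj => h2 j (by omega), h3, ht⟩
  have hSi : ∀ i ≤ n, (S (f i) ↔ i = 0) := by
    intro i hi
    refine ⟨fun ht => ?_, fun h => h ▸ h3⟩
    by_contra hne
    refine hmin (n - i) (by omega) ⟨fun j => f (j + i), fun j hj => h1 _ (by omega),
      fun j hj => ?_, by simpa using ht, ?_⟩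
    · have := h2 (j + i) (by omega)
      rwa [show j + i + 1 = j + 1 + i by omega] at this
    · simpa [Nat.sub_add_cancel hi] using h4
  have hadj : ∀ i j, i + 1 < j → j ≤ n → ¬ G.Adj (f i) (f j) := by
    intro i j hij hj ha
    have hd : i + 1 + (j - i - 1) = j := by omega
    refine hmin (n - (j - i - 1)) (by omega)
      ⟨fun t => if t ≤ i then f t else f (t + (j - i - 1)), ?_, ?_, ?_, ?_⟩
    · intro t ht
      by_cases h : t ≤ i
      · simp only [h, if_true]; exact h1 _ (by omega)
      · simp only [h, if_false]; exact h1 _ (by omega)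
    · intro t ht
      rcases lt_trichotomy t i with h | h | h
      · simp only [show t ≤ i by omega, show t + 1 ≤ i by omega, if_true]
        exact h2 _ (by omega)
      · subst h
        simpa [hd] using ha
      · simp only [show ¬ t ≤ i by omega, show ¬ t + 1 ≤ i by omega, if_false]
        have := h2 (t + (j - i - 1)) (by omega)
        rwa [show t + (j - i - 1) + 1 = t + 1 + (j - i - 1) by omega] at this
    · simpa using h3
    · simp only [show ¬ n - (j - i - 1) ≤ i by omega, if_false]
      rwa [show n - (j - i - 1) + (j - i - 1) = n by omega]
  refine ⟨n, f, h1, ?_, hSi, hTi⟩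
  intro i j hij hj
  refine ⟨fun he => ?_, fun ha => ?_, fun h => h ▸ h2 i (by omega)⟩
  · by_cases hjn : j = n
    · subst hjn
      have := (hTi i (by omega)).1 (he ▸ h4); omega
    · have := h2 j (by omega)
      rw [← he] at this
      exact hadj i (j + 1) (by omega) (by omega) this
  · by_contra hne
    exact hadj i j (by omega) hj ha

/-- Path from a function. -/
theorem exists_walk {h : ℕ → U} (N : ℕ) (hh : IndP G h N) :
    ∃ p : G.Walk (h 0) (h N), p.length = N ∧ p.support = (List.range (N + 1)).map h ∧
      ∀ i < N, s(h i, h (i + 1)) ∈ p.edges := by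
  induction N with
  | zero => exact ⟨.nil, rfl, by simp, fun i hi => by omega⟩
  | succ N ih =>
    obtain ⟨p, h1, h2, h3⟩ := ih (hh.mono (by omega))
    refine ⟨p.concat (hh.adj (by omega)), by simp [h1], ?_, ?_⟩
    · rw [Walk.support_concat, h2, List.range_succ (n := N + 1)]
      simp
    · intro i hi
      rw [Walk.edges_concat]
      by_cases hiN : i = N
      · subst hiN; simp
      · have := h3 i (by omega)
        simp [this]

theorem exists_indpath {h : ℕ → U} (N : ℕ) (hh : IndP G h N) {a b : U} (ha : h 0 = a)
    (hb : h N = b) :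
    ∃ p : G.Walk a b, (p.IsPath ∧ ∀ u v : U, u ∈ p.support → v ∈ p.support → G.Adj u v →
      p.toSubgraph.Adj u v) ∧ p.length = N ∧ ∀ w, w ∈ p.support ↔ ∃ i ≤ N, w = h i := by
  subst ha hb
  obtain ⟨p, h1, h2, h3⟩ := exists_walk N hh
  have hsup : ∀ w, w ∈ p.support ↔ ∃ i ≤ N, w = h i := by
    intro w
    rw [h2]
    simp only [List.mem_map, List.mem_range]
    constructor
    · rintro ⟨i, hi, rfl⟩; exact ⟨i, by omega, rfl⟩
    · rintro ⟨i, hi, rfl⟩; exact ⟨i, by omega, rfl⟩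
  refine ⟨p, ⟨?_, ?_⟩, h1, hsup⟩
  · rw [Walk.isPath_def, h2]
    refine List.Nodup.map_on ?_ List.nodup_range
    intro x hx y hy hxy
    rw [List.mem_range] at hx hy
    exact hh.inj (by omega) (by omega) hxy
  · intro u v hu hv huv
    rw [hsup] at hu hv
    obtain ⟨i, hi, rfl⟩ := hu
    obtain ⟨j, hj, rfl⟩ := hv
    rw [Walk.adj_toSubgraph_iff_mem_edges]
    rcases (hh.adj_iff hi hj).1 huv with rfl | rfl
    · exact h3 i (by omega)
    · rw [Sym2.eq_swap]; exact h3 j (by omega)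

theorem leg_path {a b : U} (hab : a ≠ b) (hna : ¬ G.Adj a b) {D : Set U} (hD : Conn G D)
    (h1 : Tch G D a) (h2 : Tch G D b) (ha : a ∉ D) (hb : b ∉ D) :
    ∃ p : G.Walk a b, (p.IsPath ∧ ∀ u v : U, u ∈ p.support → v ∈ p.support → G.Adj u v →
      p.toSubgraph.Adj u v) ∧ 2 ≤ p.length ∧ ∀ w, w ∈ p.support → w = a ∨ w = b ∨ w ∈ D := by
  obtain ⟨n, f, hf, hI, hS, hT⟩ := PL hD (G.Adj a) (G.Adj b) h1 h2
  let h : ℕ → U := fun i => if i = 0 then a else if i ≤ n + 1 then f (i - 1) else b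
  have e0 : h 0 = a := by simp [h]
  have e1 : ∀ i ≤ n, h (i + 1) = f i := by intro i hi; simp [h, hi]
  have e2 : h (n + 2) = b := by simp [h]
  have hI' : IndP G h (n + 2) := by
    intro i j hij hj
    obtain ⟨j, rfl⟩ : ∃ j', j = j' + 1 := ⟨j - 1, by omega⟩
    rcases Nat.eq_zero_or_pos i with rfl | hi
    · rw [e0]
      rcases Nat.lt_or_ge n j with hjn | hjn
      · have : j = n + 1 := by omega
        subst this
        rw [e2]
        exact ⟨hab, by simp [hna]⟩
      · rw [e1 j hjn]
        exact ⟨fun hh => ha (hh ▸ hf j hjn), by rw [hS j hjn]; omega⟩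
    · obtain ⟨i, rfl⟩ : ∃ i', i = i' + 1 := ⟨i - 1, by omega⟩
      rw [e1 i (by omega)]
      rcases Nat.lt_or_ge n j with hjn | hjn
      · have : j = n + 1 := by omega
        subst this
        rw [e2]
        refine ⟨fun hh => hb (hh ▸ hf i (by omega)), ?_⟩
        rw [G.adj_comm, hT i (by omega)]; omega
      · rw [e1 j hjn]
        refine ⟨(hI i j (by omega) hjn).1, ?_⟩
        rw [(hI i j (by omega) hjn).2]; omega
  obtain ⟨p, h3, h4, h5⟩ := exists_indpath (n + 2) hI' e0 e2
  refine ⟨p, h3, by omega, ?_⟩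
  intro w hw
  obtain ⟨i, hi, rfl⟩ := (h5 w).1 hw
  rcases Nat.eq_zero_or_pos i with rfl | hi0
  · exact Or.inl e0
  · rcases Nat.lt_or_ge (n + 1) i with hin | hin
    · have : i = n + 2 := by omega
      subst this; exact Or.inr (Or.inl e2)
    · obtain ⟨i, rfl⟩ : ∃ i', i = i' + 1 := ⟨i - 1, by omega⟩
      rw [e1 i (by omega)]
      exact Or.inr (Or.inr (hf i (by omega)))

theorem theta {a b : U} {D1 D2 D3 : Set U} (hT : ¬ ContainsTheta G) (hab : a ≠ b)
    (hna : ¬ G.Adj a b)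
    (c1 : Conn G D1) (c2 : Conn G D2) (c3 : Conn G D3)
    (a1 : Tch G D1 a) (b1 : Tch G D1 b) (a2 : Tch G D2 a) (b2 : Tch G D2 b)
    (a3 : Tch G D3 a) (b3 : Tch G D3 b)
    (h12 : Anti G D1 D2) (h13 : Anti G D1 D3) (h23 : Anti G D2 D3) : False := by
  have na : ∀ {D E : Set U} {v : U}, Anti G D E → Tch G E v → v ∉ D := by
    rintro D E v h ⟨e, he, hv⟩ hvD
    exact (h v hvD e he).2 hv
  obtain ⟨p1, q1, l1, s1⟩ := leg_path hab hna c1 a1 b1 (na h12 a2) (na h12 b2)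
  obtain ⟨p2, q2, l2, s2⟩ := leg_path hab hna c2 a2 b2 (na h12.symm a1) (na h12.symm b1)
  obtain ⟨p3, q3, l3, s3⟩ := leg_path hab hna c3 a3 b3 (na h13.symm a1) (na h13.symm b1)
  apply hT
  refine ⟨a, b, p1, p2, p3, ⟨q1, q2, q3⟩, ⟨l1, l2, l3⟩, ?_, ?_⟩
  · have aux : ∀ {D E : Set U}, Anti G D E → ∀ w, (w = a ∨ w = b ∨ w ∈ D) →
        (w = a ∨ w = b ∨ w ∈ E) → w = a ∨ w = b := by
      intro D E h w h1 h2
      rcases h1 with h1 | h1 | h1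
      · exact Or.inl h1
      · exact Or.inr h1
      · rcases h2 with h2 | h2 | h2
        · exact Or.inl h2
        · exact Or.inr h2
        · exact absurd rfl (h w h1 w h2).1
    rintro w (⟨h1, h2⟩ | ⟨h1, h2⟩ | ⟨h1, h2⟩)
    · exact aux h12 w (s1 w h1) (s2 w h2)
    · exact aux h13 w (s1 w h1) (s3 w h2)
    · exact aux h23 w (s2 w h1) (s3 w h2)
  · intro u w hua hub hwa hwb
    rintro (⟨h1, h2⟩ | ⟨h1, h2⟩ | ⟨h1, h2⟩)
    · exact (h12 u (((s1 u h1).resolve_left hua).resolve_left hub) w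
        (((s2 w h2).resolve_left hwa).resolve_left hwb)).2
    · exact (h13 u (((s1 u h1).resolve_left hua).resolve_left hub) w
        (((s3 w h2).resolve_left hwa).resolve_left hwb)).2
    · exact (h23 u (((s2 u h1).resolve_left hua).resolve_left hub) w
        (((s3 w h2).resolve_left hwa).resolve_left hwb)).2

/-- a non-cut vertex outside a connected subset -/
theorem NC [Finite U] {A P : Set U} (hA : Conn G A) (hP : Conn G P) (hPn : P.Nonempty)
    (hPA : P ⊆ A) (hne : P ≠ A) : ∃ e ∈ A, e ∉ P ∧ Conn G (A \ {e}) := by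
  have hfin : Set.Finite {Q : Set U | P ⊆ Q ∧ Q ⊆ A ∧ Q ≠ A ∧ Conn G Q} := Set.toFinite _
  obtain ⟨Q, hQm⟩ := hfin.exists_maximal ⟨P, subset_rfl, hPA, hne, hP⟩
  obtain ⟨⟨hPQ, hQA, hQne, hQ⟩, hmax⟩ := hQm
  -- an element of `A \ Q` touching `Q`
  have : ∃ e ∈ A, e ∉ Q ∧ Tch G Q e := by
    by_contra hcon
    push Not at hcon
    apply hQne
    refine hQA.antisymm (hA.subset_of_closed ?_ ?_)
    · obtain ⟨p, hp⟩ := hPn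
      exact ⟨p, hPA hp, hPQ hp⟩
    · intro a ha b hb hab
      by_contra hbQ
      exact hcon b hb hbQ ⟨a, ha, hab.symm⟩
  obtain ⟨e, heA, heQ, het⟩ := this
  refine ⟨e, heA, fun h => heQ (hPQ h), ?_⟩
  have hins : insert e Q = A := by
    by_contra hne'
    have := hmax (y := insert e Q) ⟨hPQ.trans (Set.subset_insert _ _),
      Set.insert_subset heA hQA, hne', hQ.insert het⟩ (Set.subset_insert _ _)
    exact heQ (this (Set.mem_insert _ _))
  have : A \ {e} = Q := by
    rw [← hins]
    ext v
    simp only [Set.mem_sdiff, Set.mem_insert_iff, Set.mem_singleton_iff]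
    constructor
    · rintro ⟨h1 | h1, h2⟩
      · exact absurd h1 h2
      · exact h1
    · intro h
      exact ⟨Or.inr h, fun h' => heQ (h' ▸ h)⟩
  rw [this]
  exact hQ

end basics

end S14

namespace S14

/-! ### Tripods -/

section tripods
variable {U : Type} {G : SimpleGraph U}

def Leg (G : SimpleGraph U) (D : Set U) (t p : U) : Prop :=
  Conn G D ∧ ((D = ∅ ∧ G.Adj p t) ∨ (Tch G D t ∧ Tch G D p))

theorem Leg.conn {D : Set U} {t p : U} (h : Leg G D t p) : Conn G (insert t D) := by
  obtain ⟨h1, ⟨rfl, _⟩ | ⟨h2, _⟩⟩ := h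
  · simpa using Conn.singleton t
  · exact h1.insert h2

theorem Leg.tch {D : Set U} {t p : U} (h : Leg G D t p) : Tch G (insert t D) p := by
  obtain ⟨h1, ⟨rfl, h⟩ | ⟨_, h⟩⟩ := h
  · exact ⟨t, by simp, h⟩
  · exact h.mono (Set.subset_insert _ _)

theorem Leg.of_not_adj {D : Set U} {t p : U} (h : Leg G D t p) (hn : ¬ G.Adj p t) :
    Tch G D t ∧ Tch G D p := by
  obtain ⟨h1, ⟨rfl, h⟩ | h⟩ := h
  · exact absurd h hn
  · exact h

theorem Leg.empty {t p : U} (h : G.Adj p t) : Leg G ∅ t p := ⟨Conn.empty, Or.inl ⟨rfl, h⟩⟩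

def Inner (G : SimpleGraph U) (A : Set U) (x y z p : U) : Prop :=
  p ∈ A ∧ ∃ Dx Dy Dz : Set U, Dx ⊆ A ∧ Dy ⊆ A ∧ Dz ⊆ A ∧ Leg G Dx x p ∧ Leg G Dy y p ∧
    Leg G Dz z p ∧ Anti G (insert x Dx) (insert y Dy) ∧ Anti G (insert x Dx) (insert z Dz) ∧
    Anti G (insert y Dy) (insert z Dz)

/-- `Mid A x y z`: a tripod with center `z` and legs to `x` and `y`. -/
def Mid (G : SimpleGraph U) (A : Set U) (x y z : U) : Prop :=
  ∃ Dx Dy : Set U, Dx ⊆ A ∧ Dy ⊆ A ∧ Conn G Dx ∧ Conn G Dy ∧ Tch G Dx x ∧ Tch G Dx z ∧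
    Tch G Dy y ∧ Tch G Dy z ∧ Anti G (insert x Dx) (insert y Dy)

theorem Inner.swap12 {A : Set U} {x y z p : U} (h : Inner G A x y z p) : Inner G A y x z p := by
  obtain ⟨hp, Dx, Dy, Dz, s1, s2, s3, l1, l2, l3, a1, a2, a3⟩ := h
  exact ⟨hp, Dy, Dx, Dz, s2, s1, s3, l2, l1, l3, a1.symm, a3, a2⟩

theorem Inner.swap23 {A : Set U} {x y z p : U} (h : Inner G A x y z p) : Inner G A x z y p := by
  obtain ⟨hp, Dx, Dy, Dz, s1, s2, s3, l1, l2, l3, a1, a2, a3⟩ := h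
  exact ⟨hp, Dx, Dz, Dy, s1, s3, s2, l1, l3, l2, a2, a1, a3.symm⟩

theorem Mid.swap {A : Set U} {x y z : U} (h : Mid G A x y z) : Mid G A y x z := by
  obtain ⟨Dx, Dy, s1, s2, c1, c2, t1, t2, t3, t4, a⟩ := h
  exact ⟨Dy, Dx, s2, s1, c2, c1, t3, t4, t1, t2, a.symm⟩

theorem Inner.mono {A B : Set U} (hs : A ⊆ B) {x y z p : U} (h : Inner G A x y z p) :
    Inner G B x y z p := by
  obtain ⟨hp, Dx, Dy, Dz, s1, s2, s3, r⟩ := h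
  exact ⟨hs hp, Dx, Dy, Dz, s1.trans hs, s2.trans hs, s3.trans hs, r⟩

theorem Mid.mono {A B : Set U} (hs : A ⊆ B) {x y z : U} (h : Mid G A x y z) :
    Mid G B x y z := by
  obtain ⟨Dx, Dy, s1, s2, r⟩ := h
  exact ⟨Dx, Dy, s1.trans hs, s2.trans hs, r⟩

theorem anti_cross {A B Dx Dy Ex Ey : Set U} {x y : U} (hAB : Anti G A B)
    (s1 : Dx ⊆ A) (s2 : Dy ⊆ A) (s3 : Ex ⊆ B) (s4 : Ey ⊆ B)
    (h1 : Anti G (insert x Dx) (insert y Dy)) (h2 : Anti G (insert x Ex) (insert y Ey)) :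
    Anti G (insert x Dx ∪ insert x Ex) (insert y Dy ∪ insert y Ey) := by
  refine Anti.union_left (Anti.union_right h1 ?_) (Anti.union_right ?_ h2)
  · rintro d (rfl | hd) e he
    · exact h2 d (Set.mem_insert _ _) e he
    · rcases he with rfl | he
      · exact h1 d (Or.inr hd) e (Set.mem_insert _ _)
      · exact hAB d (s1 hd) e (s4 he)
  · rintro d (rfl | hd) e he
    · exact h1 d (Set.mem_insert _ _) e he
    · rcases he with rfl | he
      · exact h2 d (Or.inr hd) e (Set.mem_insert _ _)
      · exact hAB.symm d (s3 hd) e (s2 he)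

theorem conn_cross {D E : Set U} {x : U} (h1 : Conn G (insert x D)) (h2 : Conn G (insert x E)) :
    Conn G (insert x D ∪ insert x E) :=
  h1.union h2 ⟨x, Set.mem_insert _ _, x, Set.mem_insert _ _, Or.inl rfl⟩

theorem inner_inner (hT : ¬ ContainsTheta G) {A B : Set U} (hAB : Anti G A B) {x y z p q : U}
    (h1 : Inner G A x y z p) (h2 : Inner G B x y z q) : False := by
  obtain ⟨hp, Dx, Dy, Dz, s1, s2, s3, l1, l2, l3, a1, a2, a3⟩ := h1
  obtain ⟨hq, Ex, Ey, Ez, r1, r2, r3, m1, m2, m3, b1, b2, b3⟩ := h2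
  exact theta hT (hAB p hp q hq).1 (hAB p hp q hq).2
    (conn_cross l1.conn m1.conn) (conn_cross l2.conn m2.conn) (conn_cross l3.conn m3.conn)
    (l1.tch.mono Set.subset_union_left) (m1.tch.mono Set.subset_union_right)
    (l2.tch.mono Set.subset_union_left) (m2.tch.mono Set.subset_union_right)
    (l3.tch.mono Set.subset_union_left) (m3.tch.mono Set.subset_union_right)
    (anti_cross hAB s1 s2 r1 r2 a1 b1) (anti_cross hAB s1 s3 r1 r3 a2 b2)
    (anti_cross hAB s2 s3 r2 r3 a3 b3)

theorem inner_mid (hT : ¬ ContainsTheta G) {A B : Set U} (hAB : Anti G A B) {x y z p : U}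
    (h1 : Inner G A x y z p) (h2 : Mid G B x y z) (hpz : ¬ G.Adj p z) : False := by
  obtain ⟨hp, Dx, Dy, Dz, s1, s2, s3, l1, l2, l3, a1, a2, a3⟩ := h1
  obtain ⟨Ex, Ey, r1, r2, c1, c2, t1, t2, t3, t4, b⟩ := h2
  have hne : p ≠ z := by
    rintro rfl
    obtain ⟨d, hd, hpd⟩ := t2
    exact (hAB p hp d (r1 hd)).2 hpd
  obtain ⟨u1, u2⟩ := l3.of_not_adj hpz
  have aux : ∀ {x : U} {Dx Ex : Set U}, Ex ⊆ B → Anti G (insert x Dx) (insert z Dz) →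
      Anti G (insert x Dx ∪ insert x Ex) Dz := by
    intro x Dx Ex hE h
    refine Anti.union_left (h.mono subset_rfl (Set.subset_insert _ _)) ?_
    rintro d (rfl | hd) e he
    · exact h d (Set.mem_insert _ _) e (Or.inr he)
    · exact hAB.symm d (hE hd) e (s3 he)
  exact theta hT hne hpz
    (conn_cross l1.conn (c1.insert t1)) (conn_cross l2.conn (c2.insert t3)) l3.1
    (l1.tch.mono Set.subset_union_left)
    (t2.mono ((Set.subset_insert _ _).trans Set.subset_union_right))
    (l2.tch.mono Set.subset_union_left)
    (t4.mono ((Set.subset_insert _ _).trans Set.subset_union_right))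
    u2 u1
    (anti_cross hAB s1 s2 r1 r2 a1 b) (aux r1 a2) (aux r2 a3)

theorem mid_mid (hT : ¬ ContainsTheta G) {A B : Set U} (hAB : Anti G A B) {x y z : U}
    (h1 : Mid G A x y z) (h2 : Mid G B x z y) (hyz : y ≠ z) (hnyz : ¬ G.Adj y z) : False := by
  obtain ⟨Dx, Dy, s1, s2, c1, c2, t1, t2, t3, t4, a⟩ := h1
  obtain ⟨Ex, Ez, r1, r2, d1, d2, u1, u2, u3, u4, b⟩ := h2
  refine theta (D1 := insert x Dx ∪ insert x Ex) (D2 := Dy) (D3 := Ez) hT hyz hnyz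
    (conn_cross (c1.insert t1) (d1.insert u1)) c2 d2
    (u2.mono ((Set.subset_insert _ _).trans Set.subset_union_right))
    (t2.mono ((Set.subset_insert _ _).trans Set.subset_union_left)) t3 t4 u4 u3 ?_ ?_ 
    (hAB.mono s2 r2)
  · refine Anti.union_left (a.mono subset_rfl (Set.subset_insert _ _)) ?_
    rintro d (rfl | hd) e he
    · exact a d (Set.mem_insert _ _) e (Or.inr he)
    · exact hAB.symm d (r1 hd) e (s2 he)
  · refine Anti.union_left ?_ (b.mono subset_rfl (Set.subset_insert _ _))
    rintro d (rfl | hd) e he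
    · exact b d (Set.mem_insert _ _) e (Or.inr he)
    · exact hAB d (s1 hd) e (r2 he)

def Trip (G : SimpleGraph U) (A : Set U) (x y z : U) : Prop :=
  (∃ p, Inner G A x y z p) ∨ Mid G A y z x ∨ Mid G A x z y ∨ Mid G A x y z

theorem Trip.swap12 {A : Set U} {x y z : U} (h : Trip G A x y z) : Trip G A y x z := by
  rcases h with ⟨p, h⟩ | h | h | h
  · exact Or.inl ⟨p, h.swap12⟩
  · exact Or.inr (Or.inr (Or.inl h))
  · exact Or.inr (Or.inl h)
  · exact Or.inr (Or.inr (Or.inr h.swap))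

theorem Trip.swap23 {A : Set U} {x y z : U} (h : Trip G A x y z) : Trip G A x z y := by
  rcases h with ⟨p, h⟩ | h | h | h
  · exact Or.inl ⟨p, h.swap23⟩
  · exact Or.inr (Or.inl h.swap)
  · exact Or.inr (Or.inr (Or.inr h))
  · exact Or.inr (Or.inr (Or.inl h))

theorem Trip.mono {A B : Set U} (hs : A ⊆ B) {x y z : U} (h : Trip G A x y z) :
    Trip G B x y z := by
  rcases h with ⟨p, h⟩ | h | h | h
  · exact Or.inl ⟨p, h.mono hs⟩
  · exact Or.inr (Or.inl (h.mono hs))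
  · exact Or.inr (Or.inr (Or.inl (h.mono hs)))
  · exact Or.inr (Or.inr (Or.inr (h.mono hs)))

/-- no triangles -/
def NoTri (G : SimpleGraph U) : Prop := ∀ a b c, G.Adj a b → G.Adj b c → ¬ G.Adj a c

/-- distinct and nonadjacent -/
def Ind2 (G : SimpleGraph U) (a b : U) : Prop := a ≠ b ∧ ¬ G.Adj a b

theorem Ind2.symm {a b : U} (h : Ind2 G a b) : Ind2 G b a :=
  ⟨h.1.symm, fun h' => h.2 h'.symm⟩

theorem anti_insert {D E : Set U} {a b : U} (h0 : Ind2 G a b) (h1 : ∀ e ∈ E, Ind2 G a e)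
    (h2 : ∀ d ∈ D, Ind2 G d b) (h3 : Anti G D E) : Anti G (insert a D) (insert b E) := by
  rintro d (rfl | hd) e (rfl | he)
  · exact h0
  · exact h1 e he
  · exact h2 d hd
  · exact h3 d hd e he

theorem anti_empty_left {E : Set U} : Anti G ∅ E := fun _ h => h.elim
theorem anti_empty_right {E : Set U} : Anti G E ∅ := fun _ _ _ h => h.elim

theorem ind2_of_not_tch {E : Set U} {z : U} (h : ¬ Tch G E z) (hz : z ∉ E) :
    ∀ e ∈ E, Ind2 G z e :=
  fun e he => ⟨fun heq => hz (heq ▸ he), fun heq => h ⟨e, he, heq⟩⟩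

/-- the case `e ~ x`, `e ~ z`, `e ≁ y` -/
theorem trip_aux (tri : NoTri G) {A : Set U} {x y z e : U} 
    (hxy : Ind2 G x y) (hxz : Ind2 G x z) (hyz : Ind2 G y z)
    (hx : x ∉ A) (hy : y ∉ A) (hz : z ∉ A) (heA : e ∈ A)
    (hE : Conn G (A \ {e})) (hzE : ¬ Tch G (A \ {e}) z) (hze : G.Adj e z) (hxe : G.Adj e x)
    (hye : ¬ G.Adj e y) (hyE : Tch G (A \ {e}) y) (heE : Tch G (A \ {e}) e) : Trip G A x y z := by
  classical
  obtain ⟨n, f, hf, hI, hS, hT⟩ := PL hE (G.Adj e) (G.Adj y) heE hyE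
  have hfA : ∀ i ≤ n, f i ∈ A := fun i hi => (hf i hi).1
  have hzi := ind2_of_not_tch hzE (fun h => hz h.1)
  by_cases hx' : ∃ i, i ≤ n ∧ G.Adj x (f i)
  · obtain ⟨i0, hi0, ha0⟩ := hx'
    have hv := Nat.findGreatest_spec (P := fun i => i ≤ n ∧ G.Adj x (f i)) hi0 ⟨hi0, ha0⟩
    generalize Nat.findGreatest (fun i => i ≤ n ∧ G.Adj x (f i)) n = v at hv
    have hv0 : v ≠ 0 := by
      rintro rfl
      exact tri e x (f 0) hxe hv.2 ((hS 0 (by omega)).2 rfl)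
    refine Or.inr (Or.inl ⟨seg f v n, {e}, ?_, ?_, hI.conn _ le_rfl, Conn.singleton _, ?_, ?_,
      ⟨e, rfl, hze.symm⟩, ⟨e, rfl, hxe.symm⟩, ?_⟩)
    · rintro _ ⟨t, h1, h2, rfl⟩; exact hfA t h2
    · simpa using heA
    · exact ⟨f n, mem_seg hv.1 le_rfl, (hT n le_rfl).2 rfl⟩
    · exact ⟨f v, mem_seg le_rfl hv.1, hv.2⟩
    · refine anti_insert hyz ?_ ?_ ?_
      · rintro _ rfl
        exact ⟨fun h => hy (h ▸ heA), fun h => hye h.symm⟩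
      · rintro _ ⟨t, h1, h2, rfl⟩
        exact (hzi _ (hf t h2)).symm
      · rintro _ ⟨t, h1, h2, rfl⟩ _ rfl
        refine ⟨(hf t h2).2, fun h => ?_⟩
        have := (hS t h2).1 h.symm
        omega
  · push Not at hx'
    refine Or.inl ⟨e, heA, ∅, seg f 0 n, ∅, by simp, ?_, by simp, Leg.empty hxe, ?_,
      Leg.empty hze, ?_, ?_, ?_⟩
    · rintro _ ⟨t, h1, h2, rfl⟩; exact hfA t h2
    · exact ⟨hI.conn _ le_rfl, Or.inr ⟨⟨f n, mem_seg (by omega) le_rfl, (hT n le_rfl).2 rfl⟩,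
        ⟨f 0, mem_seg le_rfl (by omega), (hS 0 (by omega)).2 rfl⟩⟩⟩
    · refine anti_insert hxy ?_ (by simp) anti_empty_left
      rintro _ ⟨t, h1, h2, rfl⟩
      exact ⟨fun h => hx (h ▸ hfA t h2), hx' t h2⟩
    · exact anti_insert hxz (by simp) (by simp) anti_empty_left
    · refine anti_insert hyz (by simp) ?_ anti_empty_right
      rintro _ ⟨t, h1, h2, rfl⟩
      exact (hzi _ (hf t h2)).symm

theorem trip_step (tri : NoTri G) {A : Set U} {x y z e : U} 
    (hA : Conn G A)
    (hxy : Ind2 G x y) (hxz : Ind2 G x z) (hyz : Ind2 G y z)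
    (hx : x ∉ A) (hy : y ∉ A) (hz : z ∉ A) 
    (tx : Tch G A x) (ty : Tch G A y) (tz : Tch G A z) (heA : e ∈ A)
    (hE : Conn G (A \ {e})) (hzE : ¬ Tch G (A \ {e}) z)
    (IH : ∀ x y z, Ind2 G x y → Ind2 G x z → Ind2 G y z → x ∉ A \ {e} → y ∉ A \ {e} →
      z ∉ A \ {e} → Tch G (A \ {e}) x → Tch G (A \ {e}) y → Tch G (A \ {e}) z →
      Trip G (A \ {e}) x y z) : Trip G A x y z := by
  have split : ∀ v, Tch G A v → ¬ G.Adj e v → Tch G (A \ {e}) v := by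
    rintro v ⟨d, hd, hv⟩ hne
    refine ⟨d, ⟨hd, ?_⟩, hv⟩
    rintro rfl
    exact hne hv.symm
  have hze : G.Adj e z := by
    by_contra h
    exact hzE (split z tz h)
  have hEA : A \ {e} ⊆ A := Set.sdiff_subset
  have heE : (A \ {e}).Nonempty → Tch G (A \ {e}) e := by
    intro hne
    by_contra hcon
    have : A ⊆ {e} := hA.subset_of_closed ⟨e, heA, rfl⟩ (by
      rintro _ rfl b hb hab
      by_contra hbe
      exact hcon ⟨b, ⟨hb, hbe⟩, hab⟩)
    obtain ⟨w, hw, hw'⟩ := hne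
    exact hw' (this hw)
  have tne : ∀ v, Tch G (A \ {e}) v → (A \ {e}).Nonempty := by
    rintro v ⟨d, hd, _⟩; exact ⟨d, hd⟩
  have hzi := ind2_of_not_tch hzE (fun h => hz h.1)
  by_cases hex : G.Adj e x
  · by_cases hey : G.Adj e y
    · exact Or.inl ⟨e, heA, ∅, ∅, ∅, by simp, by simp, by simp, Leg.empty hex, Leg.empty hey,
        Leg.empty hze, anti_insert hxy (by simp) (by simp) anti_empty_left,
        anti_insert hxz (by simp) (by simp) anti_empty_left,
        anti_insert hyz (by simp) (by simp) anti_empty_left⟩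
    · have h1 := split y ty hey
      exact trip_aux tri hxy hxz hyz hx hy hz heA hE hzE hze hex hey h1 (heE (tne _ h1))
  · have h1 := split x tx hex
    have h1' := heE (tne _ h1)
    by_cases hey : G.Adj e y
    · exact (trip_aux tri hxy.symm hyz hxz hy hx hz heA hE hzE hze hey hex h1 h1').swap12
    · have h2 := split y ty hey
      have hxe : Ind2 G x e := ⟨fun h => hx (h ▸ heA), fun h => hex h.symm⟩
      have hye : Ind2 G y e := ⟨fun h => hy (h ▸ heA), fun h => hey h.symm⟩
      have ext : ∀ {w : U} {D De : Set U}, Ind2 G w z → D ⊆ A \ {e} →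
          Anti G (insert w D) (insert e De) → De ⊆ A \ {e} →
          Anti G (insert w D) (insert z (insert e De)) := by
        rintro w D De hwz hD h hDe d hd c (rfl | hc)
        · rcases hd with rfl | hd
          · exact hwz
          · exact (hzi d (hD hd)).symm
        · exact h d hd c hc
      have insA : ∀ {De : Set U}, De ⊆ A \ {e} → insert e De ⊆ A := by
        intro De h
        exact Set.insert_subset heA (h.trans hEA)
      rcases IH x y e hxy hxe hye (fun h => hx h.1) (fun h => hy h.1) (fun h => h.2 rfl) h1 h2
        h1' with ⟨p, h⟩ | h | h | h
      · obtain ⟨hp, Dx, Dy, Dz, s1, s2, s3, l1, l2, l3, a1, a2, a3⟩ := h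
        exact Or.inl ⟨p, hEA hp, Dx, Dy, insert e Dz, s1.trans hEA, s2.trans hEA, insA s3,
          l1, l2, ⟨l3.conn, Or.inr ⟨⟨e, Set.mem_insert _ _, hze.symm⟩, l3.tch⟩⟩, a1,
          ext hxz s1 a2 s3, ext hyz s2 a3 s3⟩
      · obtain ⟨Dx, Dy, s1, s2, c1, c2, t1, t2, t3, t4, a⟩ := h
        exact Or.inr (Or.inl ⟨Dx, insert e Dy, s1.trans hEA, insA s2, c1, c2.insert t3, t1, t2,
          ⟨e, Set.mem_insert _ _, hze.symm⟩, t4.mono (Set.subset_insert _ _), ext hyz s1 a s2⟩)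
      · obtain ⟨Dx, Dy, s1, s2, c1, c2, t1, t2, t3, t4, a⟩ := h
        exact Or.inr (Or.inr (Or.inl ⟨Dx, insert e Dy, s1.trans hEA, insA s2, c1, c2.insert t3,
          t1, t2,
          ⟨e, Set.mem_insert _ _, hze.symm⟩, t4.mono (Set.subset_insert _ _), ext hxz s1 a s2⟩))
      · obtain ⟨Dx, Dy, s1, s2, c1, c2, t1, t2, t3, t4, a⟩ := h
        refine Or.inl ⟨e, heA, Dx, Dy, ∅, s1.trans hEA, s2.trans hEA, by simp,
          ⟨c1, Or.inr ⟨t1, t2⟩⟩, ⟨c2, Or.inr ⟨t3, t4⟩⟩, Leg.empty hze, a, ?_, ?_⟩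
        · exact anti_insert hxz (by simp) (fun d hd => (hzi d (s1 hd)).symm) anti_empty_right
        · exact anti_insert hyz (by simp) (fun d hd => (hzi d (s2 hd)).symm) anti_empty_right

theorem exists_noncut [Finite U] {A : Set U} (hA : Conn G A) (hne : A.Nonempty) :
    ∃ e ∈ A, Conn G (A \ {e}) := by
  obtain ⟨a, ha⟩ := hne
  by_cases h : {a} = A
  · refine ⟨a, ha, ?_⟩
    rw [← h, Set.sdiff_self]
    exact Conn.empty
  · obtain ⟨e, he, _, hc⟩ := NC hA (Conn.singleton a) ⟨a, rfl⟩ (by simpa using ha) h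
    exact ⟨e, he, hc⟩

theorem trip_exists [Finite U] (tri : NoTri G) (N : ℕ) : ∀ (A : Set U) (x y z : U),
    A.ncard = N → Conn G A →
    Ind2 G x y → Ind2 G x z → Ind2 G y z → x ∉ A → y ∉ A → z ∉ A →
    Tch G A x → Tch G A y → Tch G A z → Trip G A x y z := by
  induction N using Nat.strong_induction_on with
  | _ N ih =>
    intro A x y z hN hA hxy hxz hyz hx hy hz tx ty tz
    obtain ⟨e, heA, hE⟩ := exists_noncut hA (by obtain ⟨d, hd, _⟩ := tx; exact ⟨d, hd⟩)
    have hlt : (A \ {e}).ncard < N := by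
      rw [← hN]
      exact Set.ncard_sdiff_singleton_lt_of_mem heA
    have IH := fun x y z => ih _ hlt (A \ {e}) x y z rfl hE
    by_cases h1 : Tch G (A \ {e}) x
    · by_cases h2 : Tch G (A \ {e}) y
      · by_cases h3 : Tch G (A \ {e}) z
        · exact (IH x y z hxy hxz hyz (fun h => hx h.1) (fun h => hy h.1) (fun h => hz h.1)
            h1 h2 h3).mono Set.sdiff_subset
        · exact trip_step tri hA hxy hxz hyz hx hy hz tx ty tz heA hE h3 IH
      · exact (trip_step tri hA hxz hxy hyz.symm hx hz hy tx tz ty heA hE h2 IH).swap23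
    · exact (trip_step tri hA hyz hxy.symm hxz.symm hy hz hx ty tz tx heA hE h1
        IH).swap23.swap12
 
end tripods
end S14

namespace S14

/-! ### Minimal connected sets touching `C` are induced paths -/

section step1
variable {U : Type} {G : SimpleGraph U}

def MinT (G : SimpleGraph U) (A C : Set U) : Prop :=
  Conn G A ∧ (∀ c ∈ C, Tch G A c) ∧ ∀ e ∈ A, Conn G (A \ {e}) → ∃ c ∈ C, ¬ Tch G (A \ {e}) c

theorem exists_minT [Finite U] {A C : Set U} (hA : Conn G A) (hC : ∀ c ∈ C, Tch G A c) :
    ∃ A' ⊆ A, MinT G A' C := by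
  have hfin : Set.Finite {Q : Set U | Q ⊆ A ∧ Conn G Q ∧ ∀ c ∈ C, Tch G Q c} := Set.toFinite _
  obtain ⟨Q, ⟨hQA, hQ, hQC⟩, hmin⟩ := hfin.exists_minimal ⟨A, subset_rfl, hA, hC⟩
  refine ⟨Q, hQA, hQ, hQC, ?_⟩
  intro e he hce
  by_contra hcon
  push Not at hcon
  have := hmin (y := Q \ {e}) ⟨Set.sdiff_subset.trans hQA, hce, hcon⟩ Set.sdiff_subset
  exact (this he).2 rfl

theorem two_noncut [Finite U] {A : Set U} (hA : Conn G A) {u v : U} (hu : u ∈ A) (hv : v ∈ A)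
    (huv : u ≠ v) : ∃ a ∈ A, ∃ b ∈ A, a ≠ b ∧ Conn G (A \ {a}) ∧ Conn G (A \ {b}) := by
  have hns : ∀ w, {w} ≠ A := by
    rintro w rfl
    exact huv (hu.trans hv.symm)
  obtain ⟨a, ha, _, hca⟩ := NC hA (Conn.singleton u) ⟨u, rfl⟩ (by simpa using hu) (hns u)
  obtain ⟨b, hb, hba, hcb⟩ := NC hA (Conn.singleton a) ⟨a, rfl⟩ (by simpa using ha) (hns a)
  exact ⟨a, ha, b, hb, fun h => hba h.symm, hca, hcb⟩

def Sing (G : SimpleGraph U) (B : Set U) (c : U) : Prop :=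
  ∀ b ∈ B, ∀ b' ∈ B, G.Adj c b → G.Adj c b' → b = b'

theorem Mid.not_sing {B : Set U} {x y z : U} (h : Mid G B x y z) : ¬ Sing G B z := by
  obtain ⟨Dx, Dy, s1, s2, c1, c2, t1, ⟨d, hd, hzd⟩, t3, ⟨e, he, hze⟩, a⟩ := h
  intro hs
  exact (a d (Or.inr hd) e (Or.inr he)).1 (hs d (s1 hd) e (s2 he) hzd hze)

theorem path_of_min [Finite U] (hT : ¬ ContainsTheta G) (tri : NoTri G) {A B C : Set U}
    (hC : ∀ c ∈ C, ∀ c' ∈ C, c ≠ c' → ¬ G.Adj c c') (hCn : C.Nonempty)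
    (hAB : Anti G A B) (hA : MinT G A C) (hB : Conn G B) (hBC : ∀ c ∈ C, Tch G B c) :
    ∃ (n : ℕ) (f : ℕ → U), IndP G f n ∧ A = seg f 0 n := by
  classical
  obtain ⟨hAc, hAt, hAm⟩ := hA
  have hCA : ∀ c ∈ C, c ∉ A := by
    intro c hc hcA
    obtain ⟨b, hb, h⟩ := hBC c hc
    exact (hAB c hcA b hb).2 h
  have hCB : ∀ c ∈ C, c ∉ B := by
    intro c hc hcA
    obtain ⟨b, hb, h⟩ := hAt c hc
    exact (hAB b hb c hcA).2 h.symm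
  obtain ⟨c0, hc0⟩ := hCn
  obtain ⟨u0, hu0, _⟩ := hAt c0 hc0
  by_cases hsub : ∀ v ∈ A, v = u0
  · refine ⟨0, fun _ => u0, fun i j h1 h2 => by omega, ?_⟩
    ext v
    constructor
    · intro hv; exact ⟨0, le_rfl, le_rfl, hsub v hv⟩
    · rintro ⟨t, _, _, rfl⟩; exact hu0
  push Not at hsub
  obtain ⟨v0, hv0, hne0⟩ := hsub
  obtain ⟨q1, hq1A, q2, hq2A, hq12, hq1, hq2⟩ := two_noncut hAc hv0 hu0 hne0
  -- private vertices
  let M : Set U := {m | m ∈ A ∧ Conn G (A \ {m})}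
  have hpriv : ∀ m : U, ∃ c, m ∈ M → c ∈ C ∧ G.Adj c m ∧ ∀ a ∈ A, G.Adj c a → a = m := by
    intro m
    by_cases hm : m ∈ M
    · obtain ⟨c, hc, hct⟩ := hAm m hm.1 hm.2
      refine ⟨c, fun _ => ⟨hc, ?_, ?_⟩⟩
      · obtain ⟨a, ha, hca⟩ := hAt c hc
        by_cases h : a = m
        · exact h ▸ hca
        · exact absurd ⟨a, ⟨ha, h⟩, hca⟩ hct
      · intro a ha hca
        by_contra h
        exact hct ⟨a, ⟨ha, h⟩, hca⟩
    · exact ⟨m, fun h => absurd h hm⟩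
  choose c hc using hpriv
  have hcC : ∀ m ∈ M, c m ∈ C := fun m hm => (hc m hm).1
  have hcm : ∀ m ∈ M, G.Adj (c m) m := fun m hm => (hc m hm).2.1
  have hcu : ∀ m ∈ M, ∀ a ∈ A, G.Adj (c m) a → a = m := fun m hm => (hc m hm).2.2
  have hcinj : ∀ m ∈ M, ∀ m' ∈ M, c m = c m' → m = m' := by
    intro m hm m' hm' h
    exact hcu m' hm' m hm.1 (h ▸ hcm m hm)
  have hind : ∀ m ∈ M, ∀ m' ∈ M, m ≠ m' → Ind2 G (c m) (c m') := by
    intro m hm m' hm' hne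
    have : c m ≠ c m' := fun h => hne (hcinj m hm m' hm' h)
    exact ⟨this, hC _ (hcC m hm) _ (hcC m' hm') this⟩
  have hsingA : ∀ m ∈ M, Sing G A (c m) := by
    intro m hm b hb b' hb' h1 h2
    rw [hcu m hm b hb h1, hcu m hm b' hb' h2]
  obtain ⟨B', hB'B, hB'c, hB't, hB'm⟩ := exists_minT (C := c '' M) hB (by
    rintro _ ⟨m, hm, rfl⟩; exact hBC _ (hcC m hm))
  have hext : ∃ a ∈ M, ∃ a' ∈ M, a ≠ a' ∧ Sing G B' (c a) ∧ Sing G B' (c a') := by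
    by_cases hs : ∀ b ∈ B', ∀ b' ∈ B', b = b'
    · exact ⟨q1, ⟨hq1A, hq1⟩, q2, ⟨hq2A, hq2⟩, hq12, fun b hb b' hb' _ _ => hs b hb b' hb',
        fun b hb b' hb' _ _ => hs b hb b' hb'⟩
    · push Not at hs
      obtain ⟨b, hb, b', hb', hbb⟩ := hs
      obtain ⟨b1, hb1, b2, hb2, hb12, hn1, hn2⟩ := two_noncut hB'c hb hb' hbb
      obtain ⟨_, ⟨m1, hm1, rfl⟩, ht1⟩ := hB'm b1 hb1 hn1
      obtain ⟨_, ⟨m2, hm2, rfl⟩, ht2⟩ := hB'm b2 hb2 hn2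
      have aux : ∀ b m, ¬ Tch G (B' \ {b}) (c m) → ∀ d ∈ B', G.Adj (c m) d → d = b := by
        intro b m h d hd hcd
        by_contra hdb
        exact h ⟨d, ⟨hd, hdb⟩, hcd⟩
      refine ⟨m1, hm1, m2, hm2, ?_, ?_, ?_⟩
      · rintro rfl
        obtain ⟨d, hd, hcd⟩ := hB't (c m1) ⟨m1, hm1, rfl⟩
        exact hb12 ((aux b1 m1 ht1 d hd hcd).symm.trans (aux b2 m1 ht2 d hd hcd))
      · intro d hd d' hd' h h'
        rw [aux b1 m1 ht1 d hd h, aux b1 m1 ht1 d' hd' h']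
      · intro d hd d' hd' h h'
        rw [aux b2 m2 ht2 d hd h, aux b2 m2 ht2 d' hd' h']
  obtain ⟨a, haM, a', ha'M, haa', hsa, hsa'⟩ := hext
  have hAB' : Anti G A B' := hAB.mono subset_rfl hB'B
  have factT : ∀ m1 ∈ M, ∀ m2 ∈ M, ∀ m3 ∈ M, m1 ≠ m2 → m1 ≠ m3 → m2 ≠ m3 → ∀ p,
      Inner G A (c m1) (c m2) (c m3) p → (p = m1 ∧ ¬ Sing G B' (c m1)) ∨
        (p = m2 ∧ ¬ Sing G B' (c m2)) ∨ (p = m3 ∧ ¬ Sing G B' (c m3)) := by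
    intro m1 h1 m2 h2 m3 h3 h12 h13 h23 p hp
    have tr : Trip G B' (c m1) (c m2) (c m3) :=
      trip_exists tri _ B' _ _ _ rfl hB'c (hind _ h1 _ h2 h12) (hind _ h1 _ h3 h13)
        (hind _ h2 _ h3 h23) (fun h => hCB _ (hcC _ h1) (hB'B h))
        (fun h => hCB _ (hcC _ h2) (hB'B h)) (fun h => hCB _ (hcC _ h3) (hB'B h))
        (hB't _ ⟨_, h1, rfl⟩) (hB't _ ⟨_, h2, rfl⟩) (hB't _ ⟨_, h3, rfl⟩)
    rcases tr with ⟨q, hq⟩ | hq | hq | hq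
    · exact (inner_inner hT hAB' hp hq).elim
    · left
      refine ⟨?_, hq.not_sing⟩
      by_contra hne
      exact inner_mid hT hAB' hp.swap12.swap23 hq (fun h => hne (hcu m1 h1 p hp.1 h.symm))
    · right; left
      refine ⟨?_, hq.not_sing⟩
      by_contra hne
      exact inner_mid hT hAB' hp.swap23 hq (fun h => hne (hcu m2 h2 p hp.1 h.symm))
    · right; right
      refine ⟨?_, hq.not_sing⟩
      by_contra hne
      exact inner_mid hT hAB' hp hq (fun h => hne (hcu m3 h3 p hp.1 h.symm))
  -- the path
  obtain ⟨n, f, hf, hI, hS, hTT⟩ := PL hAc (G.Adj (c a)) (G.Adj (c a'))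
    ⟨a, haM.1, hcm a haM⟩ ⟨a', ha'M.1, hcm a' ha'M⟩
  have hf0 : f 0 = a := hcu a haM _ (hf 0 (by omega)) ((hS 0 (by omega)).2 rfl)
  have hfn : f n = a' := hcu a' ha'M _ (hf n le_rfl) ((hTT n le_rfl).2 rfl)
  have hPA : seg f 0 n ⊆ A := by rintro _ ⟨t, _, h, rfl⟩; exact hf t h
  have hPc : Conn G (seg f 0 n) := hI.conn 0 le_rfl
  have haP : a ∈ seg f 0 n := hf0 ▸ mem_seg le_rfl (by omega)
  have ha'P : a' ∈ seg f 0 n := hfn ▸ mem_seg (by omega) le_rfl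
  refine ⟨n, f, hI, ?_⟩
  by_contra hAP
  -- claim 1, core
  have core : ∀ m ∈ M, m ∉ seg f 0 n → ∀ A' : Set U, A' ⊆ A → Conn G A' → seg f 0 n ⊆ A' →
      m ∈ A' → ∃ d ∈ A', ∃ d' ∈ A', G.Adj m d ∧ G.Adj m d' ∧ Ind2 G d d' := by
    intro m hm hmP A' hA'A hA'c hPA' hmA'
    have hma : a ≠ m := fun h => hmP (h ▸ haP)
    have hma' : a' ≠ m := fun h => hmP (h ▸ ha'P)
    have tr : Trip G A' (c a) (c a') (c m) :=
      trip_exists tri _ A' _ _ _ rfl hA'c (hind _ haM _ ha'M haa') (hind _ haM _ hm hma)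
        (hind _ ha'M _ hm hma') (fun h => hCA _ (hcC _ haM) (hA'A h))
        (fun h => hCA _ (hcC _ ha'M) (hA'A h)) (fun h => hCA _ (hcC _ hm) (hA'A h))
        ⟨a, hPA' haP, hcm a haM⟩ ⟨a', hPA' ha'P, hcm a' ha'M⟩ ⟨m, hmA', hcm m hm⟩
    rcases tr with ⟨p, hp⟩ | hq | hq | hq
    · have hpm : p = m := by
        rcases factT a haM a' ha'M m hm haa' hma hma' p (hp.mono hA'A) with h | h | h
        · exact absurd hsa h.2
        · exact absurd hsa' h.2
        · exact h.1
      subst hpm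
      obtain ⟨_, Dx, Dy, Dz, s1, s2, s3, l1, l2, l3, a1, a2, a3⟩ := hp
      obtain ⟨_, d, hd, hpd⟩ := l1.of_not_adj
        (fun h => hma (hcu a haM p (hA'A hmA') h.symm).symm)
      obtain ⟨_, d', hd', hpd'⟩ := l2.of_not_adj
        (fun h => hma' (hcu a' ha'M p (hA'A hmA') h.symm).symm)
      exact ⟨d, s1 hd, d', s2 hd', hpd, hpd', a1 d (Or.inr hd) d' (Or.inr hd')⟩
    · exact absurd (hsingA a haM) (hq.mono hA'A).not_sing
    · exact absurd (hsingA a' ha'M) (hq.mono hA'A).not_sing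
    · exact absurd (hsingA m hm) (hq.mono hA'A).not_sing
  have claim1 : ∀ m ∈ M, m ∉ seg f 0 n → ∃ i j, i + 2 ≤ j ∧ j ≤ n ∧ G.Adj m (f i) ∧
      G.Adj m (f j) := by
    intro m hm hmP
    by_cases hmt : Tch G (seg f 0 n) m
    · obtain ⟨d, hd, d', hd', h1, h2, h3⟩ := core m hm hmP (insert m (seg f 0 n))
        (Set.insert_subset hm.1 hPA) (hPc.insert hmt) (Set.subset_insert _ _)
        (Set.mem_insert _ _)
      have e1 : d ∈ seg f 0 n := by
        rcases hd with rfl | hd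
        · exact absurd h1 (G.irrefl)
        · exact hd
      have e2 : d' ∈ seg f 0 n := by
        rcases hd' with rfl | hd
        · exact absurd h2 (G.irrefl)
        · exact hd
      obtain ⟨i, _, hi, rfl⟩ := e1
      obtain ⟨j, _, hj, rfl⟩ := e2
      have hne : i ≠ j := by rintro rfl; exact h3.1 rfl
      have hna := h3.2
      rw [hI.adj_iff hi hj] at hna
      rcases Nat.lt_or_ge i j with hij | hij
      · exact ⟨i, j, by omega, hj, h1, h2⟩
      · exact ⟨j, i, by omega, hi, h2, h1⟩
    · exfalso
      have haA : a ∈ A \ {m} := ⟨haM.1, fun h => hmP (h ▸ haP)⟩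
      have hmE : Tch G (A \ {m}) m := by
        by_contra hcon
        have : A ⊆ {m} := hAc.subset_of_closed ⟨m, hm.1, rfl⟩ (by
          rintro _ rfl b hb hab
          by_contra hbe
          exact hcon ⟨b, ⟨hb, hbe⟩, hab⟩)
        exact haA.2 (this haA.1)
      obtain ⟨l, g, hg, hgI, hgS, hgT⟩ := PL hm.2 (G.Adj m) (· ∈ seg f 0 n) hmE ⟨a, haA, haP⟩
      have hQ : Conn G (seg g 0 l ∪ seg f 0 n) :=
        (hgI.conn 0 le_rfl).union hPc ⟨g l, mem_seg (by omega) le_rfl, g l,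
          (hgT l le_rfl).2 rfl, Or.inl rfl⟩
      have hmQ : Tch G (seg g 0 l ∪ seg f 0 n) m :=
        ⟨g 0, Or.inl (mem_seg le_rfl (by omega)), (hgS 0 (by omega)).2 rfl⟩
      have key : ∀ d ∈ insert m (seg g 0 l ∪ seg f 0 n), G.Adj m d → d = g 0 := by
        rintro d (rfl | ⟨t, _, ht, rfl⟩ | hd) hmd
        · exact absurd hmd (G.irrefl)
        · rw [(hgS t ht).1 hmd]
        · exact absurd ⟨d, hd, hmd⟩ hmt
      obtain ⟨d, hd, d', hd', h1, h2, h3⟩ := core m hm hmP (insert m (seg g 0 l ∪ seg f 0 n))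
        (Set.insert_subset hm.1 (Set.union_subset (by
          rintro _ ⟨t, _, h, rfl⟩; exact (hg t h).1) hPA)) (hQ.insert hmQ)
        (Set.subset_union_right.trans (Set.subset_insert _ _))
        (Set.mem_insert _ _)
      exact h3.1 ((key d hd h1).trans (key d' hd' h2).symm)
  have claim2 : ∀ q ∈ A, q ∉ seg f 0 n → Tch G (seg f 0 n) q := by
    have hstar : Conn G {q | q ∈ A ∧ (q ∈ seg f 0 n ∨ Tch G (seg f 0 n) q)} :=
      hPc.star (fun q hq => ⟨hPA hq, Or.inl hq⟩) (fun q hq => hq.2)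
    by_contra hcon
    push Not at hcon
    obtain ⟨q, hqA, hqP, hqt⟩ := hcon
    obtain ⟨e, heA, hen, hec⟩ := NC hAc hstar ⟨a, hPA haP, Or.inl haP⟩ (fun q hq => hq.1) (by
      intro h
      rw [← h] at hqA
      rcases hqA.2 with h | h
      · exact hqP h
      · exact hqt h)
    have heP : e ∉ seg f 0 n := fun h => hen ⟨heA, Or.inl h⟩
    obtain ⟨i, j, h1, h2, h3, h4⟩ := claim1 e ⟨heA, hec⟩ heP
    exact hen ⟨heA, Or.inr ⟨f j, mem_seg (by omega) h2, h4⟩⟩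
  have claim3 : ∀ q ∈ A, q ∉ seg f 0 n → q ∈ M := by
    intro q hqA hqP
    refine ⟨hqA, hPc.star (fun p hp => ⟨hPA hp, fun h => hqP (h ▸ hp)⟩) ?_⟩
    intro e he
    by_cases h : e ∈ seg f 0 n
    · exact Or.inl h
    · exact Or.inr (claim2 e he.1 h)
  have : ∃ m ∈ A, m ∉ seg f 0 n := by
    by_contra hcon
    push Not at hcon
    exact hAP (Set.Subset.antisymm hcon hPA)
  obtain ⟨m, hmA, hmP⟩ := this
  have hmM := claim3 m hmA hmP
  have hex : ∃ u, u + 2 ≤ n ∧ G.Adj m (f u) := by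
    obtain ⟨i, j, h1, h2, h3, h4⟩ := claim1 m hmM hmP
    exact ⟨i, by omega, h3⟩
  have hj : ∃ j, Nat.find hex + 2 ≤ j ∧ j ≤ n ∧ G.Adj m (f j) := by
    obtain ⟨i, j, h1, h2, h3, h4⟩ := claim1 m hmM hmP
    have := Nat.find_min' hex ⟨by omega, h3⟩
    exact ⟨j, by omega, h2, h4⟩
  obtain ⟨hun, hmu⟩ := Nat.find_spec hex
  have humin : ∀ t, t < Nat.find hex → ¬ G.Adj m (f t) := by
    intro t ht h
    exact Nat.find_min hex ht ⟨by omega, h⟩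
  generalize Nat.find hex = u at *
  obtain ⟨j, huj, hjn, hmj⟩ := hj
  have hcK : Conn G (insert m (seg f 0 u) ∪ seg f (u + 2) n) :=
    ((hI.conn 0 (by omega : u ≤ n)).insert ⟨f u, mem_seg (by omega) le_rfl, hmu⟩).union
      (hI.conn _ le_rfl) ⟨m, Set.mem_insert _ _, f j, mem_seg huj hjn, Or.inr hmj⟩
  have hKP : ∀ t ≤ n, t ≠ u + 1 → f t ∈ insert m (seg f 0 u) ∪ seg f (u + 2) n := by
    intro t ht hne
    rcases Nat.lt_or_ge t (u + 1) with h | h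
    · exact Or.inl (Or.inr (mem_seg (by omega) (by omega)))
    · exact Or.inr (mem_seg (by omega) (by omega))
  have hpM : f (u + 1) ∈ M := by
    refine ⟨hf _ (by omega), hcK.star ?_ ?_⟩
    · rintro v ((rfl | ⟨t, _, ht, rfl⟩) | ⟨t, ht, ht', rfl⟩)
      · exact ⟨hmA, fun h => hmP (h ▸ mem_seg (by omega) (by omega))⟩
      · refine ⟨hf _ (by omega), fun h => ?_⟩
        have := hI.inj (by omega) (by omega) h; omega
      · refine ⟨hf _ (by omega), fun h => ?_⟩
        have := hI.inj (by omega) (by omega) h; omega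
    · rintro e ⟨heA, hep⟩
      by_cases heP : e ∈ seg f 0 n
      · obtain ⟨t, _, ht, rfl⟩ := heP
        exact Or.inl (hKP t ht (fun h => hep (by rw [h]; rfl)))
      · obtain ⟨i, j, h1, h2, h3, h4⟩ := claim1 e (claim3 e heA heP) heP
        right
        by_cases hi : i = u + 1
        · exact ⟨f j, hKP j h2 (by omega), h4⟩
        · exact ⟨f i, hKP i (by omega) hi, h3⟩
  have hap : a ≠ f (u + 1) := by
    rw [← hf0]; intro h
    have := hI.inj (by omega) (by omega) h; omega
  have ham : a ≠ m := fun h => hmP (h ▸ haP)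
  have hmp : m ≠ f (u + 1) := fun h => hmP (h ▸ mem_seg (by omega) (by omega))
  have hI' : ∀ q ∈ M, ∀ v ∈ A, v ≠ q → Ind2 G v (c q) := by
    intro q hq v hv hne
    exact ⟨fun h => hCA _ (hcC q hq) (h ▸ hv), fun h => hne (hcu q hq v hv h.symm)⟩
  let D : Set U := {v | ∃ t < u, v = f t}
  have hDA : D ⊆ A := by rintro _ ⟨t, ht, rfl⟩; exact hf t (by omega)
  have hleg : Leg G D (c a) (f u) := by
    rcases Nat.eq_zero_or_pos u with h0 | h0
    · have : D = ∅ := by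
        ext v; constructor
        · rintro ⟨t, ht, _⟩; omega
        · intro h; exact h.elim
      rw [this, h0, hf0]
      exact Leg.empty (hcm a haM).symm
    · have : D = seg f 0 (u - 1) := by
        ext v; constructor
        · rintro ⟨t, ht, rfl⟩; exact mem_seg (by omega) (by omega)
        · rintro ⟨t, ht, ht', rfl⟩; exact ⟨t, by omega, rfl⟩
      refine ⟨this ▸ hI.conn 0 (by omega), Or.inr ⟨⟨f 0, ⟨0, h0, rfl⟩, ?_⟩, ?_⟩⟩
      · rw [hf0]; exact hcm a haM
      · refine ⟨f (u - 1), ⟨u - 1, by omega, rfl⟩, ?_⟩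
        rw [hI.adj_iff (by omega) (by omega)]; omega
  have hinner : Inner G A (c a) (c m) (c (f (u + 1))) (f u) := by
    refine ⟨hf u (by omega), D, {m}, {f (u + 1)}, hDA, by simpa using hmA,
      by simpa using hf (u + 1) (by omega), hleg,
      ⟨Conn.singleton _, Or.inr ⟨⟨m, rfl, hcm m hmM⟩, ⟨m, rfl, hmu.symm⟩⟩⟩,
      ⟨Conn.singleton _, Or.inr ⟨⟨_, rfl, hcm _ hpM⟩, ⟨_, rfl, hI.adj (by omega)⟩⟩⟩, ?_, ?_, ?_⟩
    · refine anti_insert (hind _ haM _ hmM ham) ?_ ?_ ?_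
      · rintro _ rfl
        exact (hI' a haM _ hmA ham.symm).symm
      · intro d hd
        refine hI' m hmM d (hDA hd) ?_
        rintro rfl
        obtain ⟨t, ht, rfl⟩ := hd
        exact hmP (mem_seg (by omega) (by omega))
      · rintro _ ⟨t, ht, rfl⟩ _ rfl
        exact ⟨fun h => hmP (h ▸ mem_seg (by omega) (by omega)), fun h => humin t ht h.symm⟩
    · refine anti_insert (hind _ haM _ hpM hap) ?_ ?_ ?_
      · rintro _ rfl
        exact (hI' a haM _ hpM.1 hap.symm).symm
      · rintro _ ⟨t, ht, rfl⟩
        refine hI' _ hpM _ (hf t (by omega)) ?_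
        intro h
        have := hI.inj (by omega) (by omega) h; omega
      · rintro _ ⟨t, ht, rfl⟩ _ rfl
        refine ⟨(hI t (u + 1) (by omega) (by omega)).1, ?_⟩
        rw [(hI t (u + 1) (by omega) (by omega)).2]; omega
    · refine anti_insert (hind _ hmM _ hpM hmp) ?_ ?_ ?_
      · rintro _ rfl
        exact (hI' m hmM _ hpM.1 hmp.symm).symm
      · rintro _ rfl
        exact hI' _ hpM _ hmA hmp
      · rintro _ rfl _ rfl
        refine ⟨hmp, fun h => ?_⟩
        exact tri _ _ _ hmu (hI.adj (by omega)) h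
  rcases factT a haM m hmM _ hpM ham hap hmp _ hinner with h | h | h
  · exact h.2 hsa
  · exact hmP (h.1 ▸ mem_seg (by omega) (by omega))
  · have := hI.inj (by omega) (by omega) h.1; omega

end step1
end S14

namespace S14

/-! ### Two induced paths: common ends -/

section step2
variable {U : Type} {G : SimpleGraph U}

/-- `c` attaches to the path `f` only at `i` -/
def EndAt (G : SimpleGraph U) (C : Set U) (f : ℕ → U) (m i : ℕ) (c : U) : Prop :=
  c ∈ C ∧ ∀ j ≤ m, G.Adj c (f j) → j = i

structure Base (G : SimpleGraph U) (C : Set U) (f : ℕ → U) (m : ℕ) (g : ℕ → U) (l : ℕ) :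
    Prop where
  hT : ¬ ContainsTheta G
  tri : NoTri G
  hC : ∀ c ∈ C, ∀ c' ∈ C, c ≠ c' → ¬ G.Adj c c'
  hf : IndP G f m
  hg : IndP G g l
  hAB : Anti G (seg f 0 m) (seg g 0 l)
  tA : ∀ c ∈ C, ∃ i ≤ m, G.Adj c (f i)
  tB : ∀ c ∈ C, ∃ i ≤ l, G.Adj c (g i)
  eA0 : ∃ c, EndAt G C f m 0 c
  eA1 : ∃ c, EndAt G C f m m c
  eB0 : ∃ c, EndAt G C g l 0 c
  eB1 : ∃ c, EndAt G C g l l c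

variable {C : Set U} {f g : ℕ → U} {m l : ℕ}

theorem Base.swap (h : Base G C f m g l) : Base G C g l f m :=
  ⟨h.hT, h.tri, h.hC, h.hg, h.hf, h.hAB.symm, h.tB, h.tA, h.eB0, h.eB1, h.eA0, h.eA1⟩

theorem endAt_rev {c : U} {i : ℕ} (hi : i ≤ m) (h : EndAt G C f m i c) :
    EndAt G C (fun t => f (m - t)) m (m - i) c := by
  refine ⟨h.1, fun j hj hc => ?_⟩
  have := h.2 (m - j) (by omega) hc
  omega

theorem endAt_of_rev {c : U} {i : ℕ} (hi : i ≤ m)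
    (h : EndAt G C (fun t => f (m - t)) m (m - i) c) : EndAt G C f m i c := by
  refine ⟨h.1, fun j hj hc => ?_⟩
  have := h.2 (m - j) (by omega) (by
    show G.Adj c (f (m - (m - j)))
    rwa [show m - (m - j) = j by omega])
  omega

theorem seg_rev_all : seg (fun t => f (m - t)) 0 m = seg f 0 m := by
  rw [seg_reverse (by omega) le_rfl]; simp

theorem Base.revf (h : Base G C f m g l) : Base G C (fun t => f (m - t)) m g l := by
  refine ⟨h.hT, h.tri, h.hC, h.hf.reverse, h.hg, by rw [seg_rev_all]; exact h.hAB, ?_, h.tB, ?_,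
    ?_, h.eB0, h.eB1⟩
  · intro c hc
    obtain ⟨i, hi, ha⟩ := h.tA c hc
    refine ⟨m - i, by omega, ?_⟩
    show G.Adj c (f (m - (m - i)))
    rwa [show m - (m - i) = i by omega]
  · obtain ⟨c, hc⟩ := h.eA1
    exact ⟨c, by simpa using endAt_rev le_rfl hc⟩
  · obtain ⟨c, hc⟩ := h.eA0
    exact ⟨c, by simpa using endAt_rev (Nat.zero_le m) hc⟩

theorem Base.revg (h : Base G C f m g l) : Base G C f m (fun t => g (l - t)) l :=
  h.swap.revf.swap

theorem Base.connA (h : Base G C f m g l) : Conn G (seg f 0 m) := h.hf.conn 0 le_rfl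
theorem Base.connB (h : Base G C f m g l) : Conn G (seg g 0 l) := h.hg.conn 0 le_rfl

theorem Base.tchA (h : Base G C f m g l) {c : U} (hc : c ∈ C) : Tch G (seg f 0 m) c := by
  obtain ⟨i, hi, ha⟩ := h.tA c hc
  exact ⟨f i, mem_seg (by omega) hi, ha⟩

theorem Base.tchB (h : Base G C f m g l) {c : U} (hc : c ∈ C) : Tch G (seg g 0 l) c :=
  h.swap.tchA hc

theorem Base.notA (h : Base G C f m g l) {c : U} (hc : c ∈ C) : c ∉ seg f 0 m := by
  intro hcA
  obtain ⟨b, hb, ha⟩ := h.tchB hc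
  exact (h.hAB c hcA b hb).2 ha

theorem Base.notB (h : Base G C f m g l) {c : U} (hc : c ∈ C) : c ∉ seg g 0 l := h.swap.notA hc

theorem Base.neA (h : Base G C f m g l) {c : U} (hc : c ∈ C) {i : ℕ} (hi : i ≤ m) : c ≠ f i :=
  fun he => h.notA hc (he ▸ mem_seg (by omega) hi)

theorem Base.neB (h : Base G C f m g l) {c : U} (hc : c ∈ C) {i : ℕ} (hi : i ≤ l) : c ≠ g i :=
  h.swap.neA hc hi

theorem Base.ind (h : Base G C f m g l) {c c' : U} (hc : c ∈ C) (hc' : c' ∈ C) (hne : c ≠ c') :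
    Ind2 G c c' := ⟨hne, h.hC c hc c' hc' hne⟩

theorem no_consec (tri : NoTri G) (hf : IndP G f m) {c : U} {i : ℕ} (hi : i + 1 ≤ m)
    (h1 : G.Adj c (f i)) (h2 : G.Adj c (f (i + 1))) : False :=
  tri c (f i) (f (i + 1)) h1 (hf.adj hi) h2

theorem seg_tch {i j : ℕ} {c : U} {t : ℕ} (h1 : i ≤ t) (h2 : t ≤ j) (h : G.Adj c (f t)) :
    Tch G (seg f i j) c := ⟨f t, mem_seg h1 h2, h⟩

theorem end_aux (hT : ¬ ContainsTheta G) (tri : NoTri G) {A : Set U} (hA : Conn G A)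
    (hg : IndP G g l) (hAB : Anti G A (seg g 0 l)) {x y : U} (hxy : Ind2 G x y)
    (tx : Tch G A x) (ty : Tch G A y) (hy0 : G.Adj y (g 0))
    (hx1 : ∃ i ≤ l, G.Adj x (g i) ∧ i ≠ 0) (hy1 : ∃ i ≤ l, G.Adj y (g i) ∧ i ≠ 0)
    {Dx : Set U} (hDB : Dx ⊆ seg g 0 l) (hleg : Leg G Dx x (g 0))
    (hanti : ∀ d ∈ Dx, Ind2 G d y) : False := by
  classical
  have nB : ∀ c, Tch G A c → c ∉ seg g 0 l := by
    rintro c ⟨a, ha, hc⟩ hcB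
    exact (hAB a ha c hcB).2 hc.symm
  have aS : ∀ {i j : ℕ}, j ≤ l → Anti G (seg g i j) A := by
    intro i j hj
    exact (hAB.symm).mono (seg_subset (by omega) hj) subset_rfl
  obtain ⟨i1, hi1, hxi1, hi1n⟩ := hx1
  have hge2 : ∀ c, G.Adj c (g 0) → ∀ i ≤ l, G.Adj c (g i) → i ≠ 0 → 2 ≤ i := by
    intro c h0 i hi hci hne
    by_contra hlt
    have : i = 1 := by omega
    subst this
    exact no_consec tri hg hi h0 hci
  by_cases hx0 : G.Adj x (g 0)
  · obtain ⟨j, hj, hyj, hj0⟩ := hy1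
    have e1 := hge2 x hx0 i1 hi1 hxi1 hi1n
    have e2 := hge2 y hy0 j hj hyj hj0
    exact theta (D1 := seg g 0 0) (D2 := seg g (min i1 j) (max i1 j)) (D3 := A) hT hxy.1 hxy.2
      (hg.conn _ (by omega)) (hg.conn _ (by omega)) hA
      (seg_tch le_rfl le_rfl hx0) (seg_tch le_rfl le_rfl hy0)
      (seg_tch (min_le_left _ _) (le_max_left _ _) hxi1)
      (seg_tch (min_le_right _ _) (le_max_right _ _) hyj) tx ty
      (hg.anti (by omega) (by omega)) (aS (by omega)) (aS (by omega))
  · have hexj : ∃ j, j ≤ l ∧ G.Adj y (g j) ∧ j ≠ 0 := by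
      obtain ⟨j, h1, h2, h3⟩ := hy1; exact ⟨j, h1, h2, h3⟩
    obtain ⟨hjl, hyj, hj0⟩ := Nat.find_spec hexj
    have hjmin : ∀ t, t < Nat.find hexj → t ≠ 0 → ¬ G.Adj y (g t) := by
      intro t ht h0 h
      exact Nat.find_min hexj ht ⟨by omega, h, h0⟩
    generalize Nat.find hexj = j at *
    have hj2 := hge2 y hy0 j hjl hyj hj0
    obtain ⟨⟨dx, hdx, hxd⟩, ⟨d0, hd0, h0d⟩⟩ := hleg.of_not_adj (fun h => hx0 h.symm)
    -- `Dx` lies strictly between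
    have hDseg : Dx ⊆ seg g 1 (j - 1) := by
      refine hleg.1.subset_of_closed ⟨d0, hd0, ?_⟩ ?_
      · obtain ⟨t, _, ht, rfl⟩ := hDB hd0
        have := (hg.adj_iff (by omega) ht).1 h0d
        exact mem_seg (by omega) (by omega)
      · rintro _ ⟨s, hs1, hs2, rfl⟩ b hb hab
        obtain ⟨t, _, ht, rfl⟩ := hDB hb
        have h1 := (hg.adj_iff (by omega) ht).1 hab
        have h2 : t ≠ 0 := by
          rintro rfl; exact (hanti _ hb).2 hy0.symm
        have h3 : t ≠ j := by
          rintro rfl; exact (hanti _ hb).2 hyj.symm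
        exact mem_seg (by omega) (by omega)
    have hext : ∃ t, t < j ∧ G.Adj x (g t) := by
      obtain ⟨t, h1, h2, rfl⟩ := hDseg hdx
      exact ⟨t, by omega, hxd⟩
    obtain ⟨htj, hxt⟩ := Nat.find_spec hext
    have htmin : ∀ s, s < Nat.find hext → ¬ G.Adj x (g s) := by
      intro s hs h
      exact Nat.find_min hext hs ⟨by omega, h⟩
    generalize Nat.find hext = t at *
    have ht0 : t ≠ 0 := by rintro rfl; exact hx0 hxt
    have hgr := Nat.findGreatest_spec (P := fun s => G.Adj x (g s)) (le_of_lt htj) hxt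
    have hgle := Nat.findGreatest_le (P := fun s => G.Adj x (g s)) j
    have hgge := Nat.le_findGreatest (P := fun s => G.Adj x (g s)) (le_of_lt htj) hxt
    have hgmax : ∀ s, Nat.findGreatest (fun s => G.Adj x (g s)) j < s → s ≤ j →
        ¬ G.Adj x (g s) := fun s h1 h2 => Nat.findGreatest_is_greatest h1 h2
    generalize Nat.findGreatest (fun s => G.Adj x (g s)) j = t' at *
    rcases Nat.lt_or_ge t t' with hlt | hge
    · have : t' ≠ t + 1 := by
        rintro rfl
        exact no_consec tri hg (by omega) hxt hgr
      exact theta (D1 := seg g 0 t) (D2 := seg g t' j) (D3 := A) hT hxy.1 hxy.2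
        (hg.conn _ (by omega)) (hg.conn _ (by omega)) hA
        (seg_tch (by omega) le_rfl hxt) (seg_tch le_rfl (by omega) hy0)
        (seg_tch le_rfl (by omega) hgr) (seg_tch (by omega) (by omega) hyj) tx ty
        (hg.anti (by omega) (by omega)) (aS (by omega)) (aS (by omega))
    · have : t' = t := by omega
      subst this
      have hxB := nB x tx
      have aX : ∀ {i k : ℕ}, k ≤ l → (∀ s, i ≤ s → s ≤ k → ¬ G.Adj x (g s)) →
          Anti G (seg g i k) (insert x A) := by
        rintro i k hk hn _ ⟨s, h1, h2, rfl⟩ e (rfl | he)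
        · exact ⟨fun h => hxB (h ▸ mem_seg (by omega) (by omega)), fun h => hn s h1 h2 h.symm⟩
        · exact aS hk _ (mem_seg h1 h2) e he
      exact theta (a := g t') (b := y) (D1 := seg g 0 (t' - 1)) (D2 := seg g (t' + 1) j)
        (D3 := insert x A) hT
        (fun h => nB y ty (h ▸ mem_seg (by omega) (by omega)))
        (fun h => hjmin t' htj ht0 h.symm)
        (hg.conn _ (by omega)) (hg.conn _ (by omega)) (hA.insert tx)
        (seg_tch (t := t' - 1) (by omega) le_rfl (by
          rw [hg.adj_iff (by omega) (by omega)]; omega))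
        (seg_tch le_rfl (by omega) hy0)
        (seg_tch (t := t' + 1) (by omega) (by omega) (hg.adj (by omega)))
        (seg_tch (by omega) (by omega) hyj)
        ⟨x, Set.mem_insert _ _, hxt.symm⟩ (ty.mono (Set.subset_insert _ _))
        (hg.anti (by omega) (by omega))
        (aX (by omega) (fun s h1 h2 => htmin s (by omega)))
        (aX (by omega) (fun s h1 h2 => hgmax s (by omega) (by omega)))

theorem Base.trip [Finite U] (h : Base G C f m g l) {x y z : U} (hx : x ∈ C) (hy : y ∈ C)
    (hz : z ∈ C) (hxy : x ≠ y) (hxz : x ≠ z) (hyz : y ≠ z) : Trip G (seg f 0 m) x y z :=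
  trip_exists h.tri _ _ _ _ _ rfl h.connA (h.ind hx hy hxy) (h.ind hx hz hxz) (h.ind hy hz hyz)
    (h.notA hx) (h.notA hy) (h.notA hz) (h.tchA hx) (h.tchA hy) (h.tchA hz)

theorem end_lemma [Finite U] (h : Base G C f m g l) {x y x' : U} (hx : EndAt G C f m 0 x)
    (hy : EndAt G C f m m y) (hxy : x ≠ y) (hx' : EndAt G C g l 0 x') :
    ∃ c, EndAt G C g l 0 c ∧ (EndAt G C f m 0 c ∨ EndAt G C f m m c) := by
  classical
  by_contra hcon
  push Not at hcon
  have hxX : ¬ EndAt G C g l 0 x := fun h' => (hcon x h').1 hx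
  have hyX : ¬ EndAt G C g l 0 y := fun h' => (hcon y h').2 hy
  have hn0 := (hcon x' hx').1
  have hnm := (hcon x' hx').2
  have hxx' : x ≠ x' := by rintro rfl; exact hxX hx'
  have hyx' : y ≠ x' := by rintro rfl; exact hyX hx'
  have hx0 : G.Adj x (f 0) := by
    obtain ⟨i, hi, ha⟩ := h.tA x hx.1
    rwa [hx.2 i hi ha] at ha
  have hym : G.Adj y (f m) := by
    obtain ⟨i, hi, ha⟩ := h.tA y hy.1
    rwa [hy.2 i hi ha] at ha
  have trB := h.swap.trip hx.1 hy.1 hx'.1 hxy hxx' hyx'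
  have hsing : Sing G (seg g 0 l) x' := by
    rintro _ ⟨s, _, hs, rfl⟩ _ ⟨t, _, ht, rfl⟩ h1 h2
    rw [hx'.2 s hs h1, hx'.2 t ht h2]
  obtain ⟨i0, hi0, ha0⟩ := h.tA x' hx'.1
  have hex : ∃ i, i ≤ m ∧ G.Adj x' (f i) := ⟨i0, hi0, ha0⟩
  obtain ⟨hum, hxu⟩ := Nat.find_spec hex
  have humin : ∀ s, s < Nat.find hex → ¬ G.Adj x' (f s) := by
    intro s hs h'
    exact Nat.find_min hex hs ⟨by omega, h'⟩
  generalize Nat.find hex = u at *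
  have hv := Nat.findGreatest_spec (P := fun s => G.Adj x' (f s)) hum hxu
  have hvm := Nat.findGreatest_le (P := fun s => G.Adj x' (f s)) m
  have huv := Nat.le_findGreatest (P := fun s => G.Adj x' (f s)) hum hxu
  have hvmax : ∀ s, Nat.findGreatest (fun s => G.Adj x' (f s)) m < s → s ≤ m →
      ¬ G.Adj x' (f s) := fun s h1 h2 => Nat.findGreatest_is_greatest h1 h2
  generalize Nat.findGreatest (fun s => G.Adj x' (f s)) m = v at *
  have iX : ∀ {i j : ℕ}, 1 ≤ i → j ≤ m → ∀ e ∈ seg f i j, Ind2 G x e := by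
    rintro i j hi hj _ ⟨t, h1, h2, rfl⟩
    refine ⟨h.neA hx.1 (by omega), fun ha => ?_⟩
    have := hx.2 t (by omega) ha; omega
  have iY : ∀ {i j : ℕ}, j < m → ∀ e ∈ seg f i j, Ind2 G e y := by
    rintro i j hj _ ⟨t, h1, h2, rfl⟩
    refine ⟨(h.neA hy.1 (by omega)).symm, fun ha => ?_⟩
    have := hy.2 t (by omega) ha.symm; omega
  rcases Nat.eq_or_lt_of_le huv with huv | huv
  · -- single neighbour
    subst huv
    have hs : ∀ j ≤ m, G.Adj x' (f j) → j = u := by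
      intro j hj ha
      rcases lt_trichotomy j u with h1 | h1 | h1
      · exact absurd ha (humin j h1)
      · exact h1
      · exact absurd ha (hvmax j h1 hj)
    have hu0 : u ≠ 0 := by rintro rfl; exact hn0 ⟨hx'.1, hs⟩
    have hum' : u ≠ m := by rintro rfl; exact hnm ⟨hx'.1, hs⟩
    have hin : Inner G (seg f 0 m) x y x' (f u) := by
      refine ⟨mem_seg (by omega) hum, seg f 0 (u - 1), seg f (u + 1) m, ∅,
        seg_subset le_rfl (by omega), seg_subset (by omega) le_rfl, by simp,
        ⟨h.hf.conn _ (by omega), Or.inr ⟨seg_tch le_rfl (by omega) hx0,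
          seg_tch (t := u - 1) (by omega) le_rfl (by
            rw [h.hf.adj_iff (by omega) (by omega)]; omega)⟩⟩,
        ⟨h.hf.conn _ (by omega), Or.inr ⟨seg_tch (by omega) le_rfl hym,
          seg_tch (t := u + 1) le_rfl (by omega) (h.hf.adj (by omega))⟩⟩,
        Leg.empty hxu.symm, ?_, ?_, ?_⟩
      · exact anti_insert (h.ind hx.1 hy.1 hxy) (iX (by omega) le_rfl) (iY (by omega))
          (h.hf.anti (by omega) le_rfl)
      · refine anti_insert (h.ind hx.1 hx'.1 hxx') (by simp) ?_ anti_empty_right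
        rintro _ ⟨t, h1, h2, rfl⟩
        refine ⟨(h.neA hx'.1 (by omega)).symm, fun ha => ?_⟩
        have := hs t (by omega) ha.symm; omega
      · refine anti_insert (h.ind hy.1 hx'.1 hyx') (by simp) ?_ anti_empty_right
        rintro _ ⟨t, h1, h2, rfl⟩
        refine ⟨(h.neA hx'.1 (by omega)).symm, fun ha => ?_⟩
        have := hs t (by omega) ha.symm; omega
    rcases trB with ⟨q, hq⟩ | hq | hq | hq
    · exact inner_inner h.hT h.hAB hin hq
    · exact inner_mid h.hT h.hAB hin.swap12.swap23 hq (fun ha => hu0 (hx.2 u hum ha.symm))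
    · exact inner_mid h.hT h.hAB hin.swap23 hq (fun ha => hum' (hy.2 u hum ha.symm))
    · exact hq.not_sing hsing
  · have huv2 : v ≠ u + 1 := by
      rintro rfl
      exact no_consec h.tri h.hf hvm hxu hv
    have hmid : Mid G (seg f 0 m) x y x' := by
      refine ⟨seg f 0 u, seg f v m, seg_subset le_rfl (by omega), seg_subset (by omega) le_rfl,
        h.hf.conn _ (by omega), h.hf.conn _ le_rfl, seg_tch le_rfl (by omega) hx0,
        seg_tch (by omega) le_rfl hxu, seg_tch hvm le_rfl hym, seg_tch le_rfl hvm hv, ?_⟩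
      exact anti_insert (h.ind hx.1 hy.1 hxy) (iX (by omega) le_rfl) (iY (by omega))
          (h.hf.anti (by omega) le_rfl)
    rcases trB with ⟨q, hq⟩ | hq | hq | hq
    · have hqx : G.Adj q x' := by
        by_contra hn
        exact inner_mid h.hT h.hAB.symm hq hmid hn
      obtain ⟨hqB, Dx, Dy, Dz, s1, s2, s3, l1, l2, l3, a1, a2, a3⟩ := hq
      have hq0 : q = g 0 := by
        obtain ⟨t, _, ht, rfl⟩ := hqB
        rw [hx'.2 t ht hqx.symm]
      subst hq0
      have hx1 : ∃ i ≤ l, G.Adj x (g i) ∧ i ≠ 0 := by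
        by_contra hc
        push Not at hc
        exact hxX ⟨hx.1, hc⟩
      have hy1 : ∃ i ≤ l, G.Adj y (g i) ∧ i ≠ 0 := by
        by_contra hc
        push Not at hc
        exact hyX ⟨hy.1, hc⟩
      by_cases hy0 : G.Adj y (g 0)
      · exact end_aux h.hT h.tri h.connA h.hg h.hAB (h.ind hx.1 hy.1 hxy) (h.tchA hx.1)
          (h.tchA hy.1) hy0 hx1 hy1 s1 l1
          (fun d hd => a1 d (Or.inr hd) y (Set.mem_insert _ _))
      by_cases hxg0 : G.Adj x (g 0)
      · exact end_aux h.hT h.tri h.connA h.hg h.hAB (h.ind hy.1 hx.1 hxy.symm) (h.tchA hy.1)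
          (h.tchA hx.1) hxg0 hy1 hx1 s2 l2
          (fun d hd => a1.symm d (Or.inr hd) x (Set.mem_insert _ _))
      obtain ⟨_, d, hd, hgd⟩ := l1.of_not_adj (fun ha => hxg0 ha.symm)
      obtain ⟨_, e, he, hge⟩ := l2.of_not_adj (fun ha => hy0 ha.symm)
      obtain ⟨s, _, hs, rfl⟩ := s1 hd
      obtain ⟨t, _, ht, rfl⟩ := s2 he
      have e1 := (h.hg.adj_iff (by omega) hs).1 hgd
      have e2 := (h.hg.adj_iff (by omega) ht).1 hge
      have : s = t := by omega
      subst this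
      exact (a1 _ (Or.inr hd) _ (Or.inr he)).1 rfl
    · exact mid_mid h.hT h.hAB hmid.swap hq
        (fun he => hxx' he) (h.ind hx.1 hx'.1 hxx').2
    · exact mid_mid h.hT h.hAB hmid hq hyx' (h.ind hy.1 hx'.1 hyx').2
    · exact hq.not_sing hsing

theorem step2 [Finite U] (h : Base G C f m g l)
    (h3 : ∃ a ∈ C, ∃ b ∈ C, ∃ c ∈ C, a ≠ b ∧ a ≠ c ∧ b ≠ c) :
    ∃ g', Base G C f m g' l ∧ ∃ x y, x ≠ y ∧ EndAt G C f m 0 x ∧ EndAt G C g' l 0 x ∧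
      EndAt G C f m m y ∧ EndAt G C g' l l y := by
  have hdist : ∀ {f : ℕ → U} {m : ℕ}, (∀ c ∈ C, ∃ i ≤ m, G.Adj c (f i)) → m ≠ 0 → ∀ {x y : U},
      EndAt G C f m 0 x → EndAt G C f m m y → x ≠ y := by
    rintro f m ht hm x _ h1 h2 rfl
    obtain ⟨i, hi, ha⟩ := ht x h1.1
    exact hm ((h2.2 i hi ha).symm.trans (h1.2 i hi ha))
  obtain ⟨x, hx⟩ := h.eA0
  obtain ⟨y, hy⟩ := h.eA1
  obtain ⟨x', hx'⟩ := h.eB0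
  obtain ⟨y', hy'⟩ := h.eB1
  have triv : ∀ {f : ℕ → U} {m : ℕ}, m = 0 → ∀ c ∈ C, EndAt G C f m 0 c ∧ EndAt G C f m m c := by
    rintro f _ rfl c hc
    exact ⟨⟨hc, fun j hj _ => by omega⟩, ⟨hc, fun j hj _ => by omega⟩⟩
  by_cases hm : m = 0
  · by_cases hl : l = 0
    · exfalso
      obtain ⟨a, ha, b, hb, c, hc, hab, hac, hbc⟩ := h3
      have adjf : ∀ c ∈ C, G.Adj (f 0) c := by
        intro c hc
        obtain ⟨i, hi, h'⟩ := h.tA c hc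
        rw [show i = 0 by omega] at h'
        exact h'.symm
      have adjg : ∀ c ∈ C, G.Adj (g 0) c := by
        intro c hc
        obtain ⟨i, hi, h'⟩ := h.tB c hc
        rw [show i = 0 by omega] at h'
        exact h'.symm
      have hfg := h.hAB (f 0) (mem_seg le_rfl (by omega)) (g 0) (mem_seg le_rfl (by omega))
      have an : ∀ {a b : U}, a ∈ C → b ∈ C → a ≠ b → Anti G {a} {b} := by
        rintro a b ha hb hab _ rfl _ rfl
        exact h.ind ha hb hab
      exact theta (D1 := {a}) (D2 := {b}) (D3 := {c}) h.hT hfg.1 hfg.2 (Conn.singleton _)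
        (Conn.singleton _)
        (Conn.singleton _) ⟨a, rfl, adjf a ha⟩ ⟨a, rfl, adjg a ha⟩ ⟨b, rfl, adjf b hb⟩
        ⟨b, rfl, adjg b hb⟩ ⟨c, rfl, adjf c hc⟩ ⟨c, rfl, adjg c hc⟩ (an ha hb hab) (an ha hc hac)
        (an hb hc hbc)
    · exact ⟨g, h, x', y', hdist h.tB hl hx' hy', (triv hm _ hx'.1).1, hx', (triv hm _ hy'.1).2,
        hy'⟩
  · have hxy := hdist h.tA hm hx hy
    by_cases hl : l = 0
    · exact ⟨g, h, x, y, hxy, hx, (triv hl _ hx.1).1, hy, (triv hl _ hy.1).2⟩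
    · have hxy' := hdist h.tB hl hx' hy'
      have r1 := end_lemma h hx hy hxy hx'
      have r2 := end_lemma h.revg hx hy hxy (by simpa using endAt_rev le_rfl hy')
      have r3 := end_lemma h.swap hx' hy' hxy' hx
      have r4 := end_lemma h.swap.revg hx' hy' hxy' (by simpa using endAt_rev le_rfl hy)
      have bk : ∀ {f : ℕ → U} {m : ℕ} {c : U}, EndAt G C (fun t => f (m - t)) m 0 c →
          EndAt G C f m m c := by
        intro f m c h'
        exact endAt_of_rev le_rfl (by simpa using h')
      obtain ⟨c1, p1, q1⟩ := r1
      obtain ⟨c2, p2, q2⟩ := r2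
      obtain ⟨c3, p3, q3⟩ := r3
      obtain ⟨c4, p4, q4⟩ := r4
      replace p2 := bk p2
      replace p4 := bk p4
      have fin : ∀ {x y : U}, EndAt G C f m 0 x → EndAt G C g l 0 x → EndAt G C f m m y →
          EndAt G C g l l y → ∃ g', Base G C f m g' l ∧ ∃ x y, x ≠ y ∧ EndAt G C f m 0 x ∧
            EndAt G C g' l 0 x ∧ EndAt G C f m m y ∧ EndAt G C g' l l y := by
        intro x y h1 h2 h3 h4
        exact ⟨g, h, x, y, hdist h.tA hm h1 h3, h1, h2, h3, h4⟩
      have fin' : ∀ {x y : U}, EndAt G C f m 0 x → EndAt G C g l l x → EndAt G C f m m y →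
          EndAt G C g l 0 y → ∃ g', Base G C f m g' l ∧ ∃ x y, x ≠ y ∧ EndAt G C f m 0 x ∧
            EndAt G C g' l 0 x ∧ EndAt G C f m m y ∧ EndAt G C g' l l y := by
        intro x y h1 h2 h3 h4
        exact ⟨fun t => g (l - t), h.revg, x, y, hdist h.tA hm h1 h3, h1,
          by simpa using endAt_rev le_rfl h2, h3, by simpa using endAt_rev (Nat.zero_le l) h4⟩
      rcases q1 with q1 | q1
      · rcases q2 with q2 | q2
        · rcases q4 with q4 | q4
          · exact fin' q2 p2 p4 q4
          · exact fin q1 p1 p4 q4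
        · exact fin q1 p1 q2 p2
      · rcases q2 with q2 | q2
        · exact fin' q2 p2 q1 p1
        · rcases q3 with q3 | q3
          · exact fin p3 q3 q2 p2
          · exact fin' p3 q3 q1 p1

end step2
end S14

namespace S14

/-! ### Ordering of the attachments, and the spider -/

section step3
variable {U : Type} {G : SimpleGraph U} {C : Set U} {f g : ℕ → U} {m l : ℕ}

/-- first and last neighbours of `c` on the path `f` -/
structure Ext (G : SimpleGraph U) (f : ℕ → U) (m : ℕ) (c : U) (lo hi : ℕ) : Prop where
  le : lo ≤ hi
  hi_le : hi ≤ m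
  alo : G.Adj c (f lo)
  ahi : G.Adj c (f hi)
  all : ∀ j ≤ m, G.Adj c (f j) → lo ≤ j ∧ j ≤ hi

theorem exists_ext {c : U} (h : ∃ i ≤ m, G.Adj c (f i)) : ∃ lo hi, Ext G f m c lo hi := by
  classical
  obtain ⟨i0, hi0, ha0⟩ := h
  have hex : ∃ i, i ≤ m ∧ G.Adj c (f i) := ⟨i0, hi0, ha0⟩
  obtain ⟨hum, hxu⟩ := Nat.find_spec hex
  refine ⟨Nat.find hex, Nat.findGreatest (fun s => G.Adj c (f s)) m,
    Nat.le_findGreatest hum hxu, Nat.findGreatest_le m, hxu,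
    Nat.findGreatest_spec (P := fun s => G.Adj c (f s)) hum hxu, ?_⟩
  intro j hj ha
  exact ⟨Nat.find_min' hex ⟨hj, ha⟩, Nat.le_findGreatest hj ha⟩

theorem Ext.rev {c : U} {lo hi : ℕ} (h : Ext G f m c lo hi) :
    Ext G (fun t => f (m - t)) m c (m - hi) (m - lo) := by
  obtain ⟨h1, h2, h3, h4, h5⟩ := h
  refine ⟨by omega, by omega, ?_, ?_, ?_⟩
  · show G.Adj c (f (m - (m - hi)))
    rwa [show m - (m - hi) = hi by omega]
  · show G.Adj c (f (m - (m - lo)))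
    rwa [show m - (m - lo) = lo by omega]
  · intro j hj ha
    have := h5 (m - j) (by omega) ha
    omega

theorem Ext.gap (h : Base G C f m g l) {c : U} {lo hi : ℕ} (e : Ext G f m c lo hi) :
    hi ≠ lo + 1 := by
  rintro rfl
  exact no_consec h.tri h.hf e.hi_le e.alo e.ahi

theorem star_theta (h : Base G C f m g l) {c c' : U} (hc : c ∈ C) (hc' : c' ∈ C) (hne : c ≠ c')
    {i j i' j' : ℕ} (hj : j ≤ m) (hj' : j' ≤ m) (hji : j + 1 < i')
    (t1 : Tch G (seg f i j) c) (t2 : Tch G (seg f i j) c') (t3 : Tch G (seg f i' j') c)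
    (t4 : Tch G (seg f i' j') c') : False :=
  theta (D1 := seg f i j) (D2 := seg f i' j') (D3 := seg g 0 l) h.hT hne (h.hC c hc c' hc' hne)
    (h.hf.conn _ hj) (h.hf.conn _ hj') h.connB t1 t2 t3 t4 (h.tchB hc) (h.tchB hc')
    (h.hf.anti hji hj') (h.hAB.mono (seg_subset (by omega) hj) subset_rfl)
    (h.hAB.mono (seg_subset (by omega) hj') subset_rfl)

def low (f : ℕ → U) (i : ℕ) : Set U := {v | ∃ t < i, v = f t}

theorem low_leg (hf : IndP G f m) {i : ℕ} (hi : i ≤ m) {x : U} (hx : G.Adj x (f 0)) :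
    Leg G (low f i) x (f i) := by
  rcases Nat.eq_zero_or_pos i with rfl | h0
  · have : low f 0 = ∅ := by
      ext v; constructor
      · rintro ⟨t, ht, _⟩; omega
      · intro h; exact h.elim
    rw [this]
    exact Leg.empty hx.symm
  · have : low f i = seg f 0 (i - 1) := by
      ext v; constructor
      · rintro ⟨t, ht, rfl⟩; exact mem_seg (by omega) (by omega)
      · rintro ⟨t, ht, ht', rfl⟩; exact ⟨t, by omega, rfl⟩
    refine ⟨this ▸ hf.conn 0 (by omega), Or.inr ⟨⟨f 0, ⟨0, h0, rfl⟩, hx⟩, ?_⟩⟩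
    refine ⟨f (i - 1), ⟨i - 1, by omega, rfl⟩, ?_⟩
    rw [hf.adj_iff (by omega) (by omega)]; omega

theorem high_leg (hf : IndP G f m) {i : ℕ} (hi : i ≤ m) {y : U} (hy : G.Adj y (f m)) :
    Leg G (seg f (i + 1) m) y (f i) := by
  rcases Nat.eq_or_lt_of_le hi with rfl | h0
  · have : seg f (i + 1) i = ∅ := by
      ext v; constructor
      · rintro ⟨t, ht, _, _⟩; omega
      · intro h; exact h.elim
    rw [this]
    exact Leg.empty hy.symm
  · exact ⟨hf.conn _ le_rfl, Or.inr ⟨seg_tch (by omega) le_rfl hy,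
      seg_tch le_rfl (by omega) (hf.adj h0)⟩⟩

theorem endAt_adj0 (h : Base G C f m g l) {x : U} {i : ℕ} (hx : EndAt G C f m i x) :
    G.Adj x (f i) := by
  obtain ⟨j, hj, ha⟩ := h.tA x hx.1
  rwa [hx.2 j hj ha] at ha

def SS (G : SimpleGraph U) (A : Set U) (t z w : U) : Prop :=
  Mid G A t w z ∨ ∃ p, Inner G A t z w p ∧ ¬ G.Adj p w

theorem SS_contra (hT : ¬ ContainsTheta G) {A B : Set U} (hAB : Anti G A B) {t z w : U}
    (hzw : Ind2 G z w) (h1 : SS G A t z w) (h2 : SS G B t w z) : False := by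
  rcases h1 with h1 | ⟨p, h1, hp⟩
  · rcases h2 with h2 | ⟨q, h2, hq⟩
    · exact mid_mid hT hAB h1 h2 hzw.1.symm hzw.symm.2
    · exact inner_mid hT hAB.symm h2 h1 hq
  · rcases h2 with h2 | ⟨q, h2, hq⟩
    · exact inner_mid hT hAB h1 h2 hp
    · exact inner_inner hT hAB h1 h2.swap23

theorem SS_of_lt (h : Base G C f m g l) {x z w : U} (hx : EndAt G C f m 0 x) (hz : z ∈ C)
    (hw : w ∈ C) (hxz : x ≠ z) (hxw : x ≠ w) (hzw : z ≠ w) {lz rz lw rw : ℕ}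
    (ez : Ext G f m z lz rz) (ew : Ext G f m w lw rw) (hlt : lz < lw) :
    SS G (seg f 0 m) x z w := by
  classical
  have hx0 := endAt_adj0 h hx
  have hlwm : lw ≤ m := ew.le.trans ew.hi_le
  have hs := Nat.findGreatest_spec (P := fun s => G.Adj z (f s)) (le_of_lt hlt) ez.alo
  have hsl := Nat.findGreatest_le (P := fun s => G.Adj z (f s)) lw
  have hls := Nat.le_findGreatest (P := fun s => G.Adj z (f s)) (le_of_lt hlt) ez.alo
  have hsmax : ∀ t, Nat.findGreatest (fun s => G.Adj z (f s)) lw < t → t ≤ lw →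
      ¬ G.Adj z (f t) := fun t h1 h2 => Nat.findGreatest_is_greatest h1 h2
  generalize Nat.findGreatest (fun s => G.Adj z (f s)) lw = s at *
  have iX : ∀ {i j : ℕ}, 1 ≤ i → j ≤ m → ∀ e ∈ seg f i j, Ind2 G x e := by
    rintro i j hi hj _ ⟨t, h1, h2, rfl⟩
    refine ⟨h.neA hx.1 (by omega), fun ha => ?_⟩
    have := hx.2 t (by omega) ha; omega
  rcases Nat.eq_or_lt_of_le hls with heq | hlt'
  · right
    subst heq
    refine ⟨f lz, ⟨mem_seg (by omega) (by omega), low f lz, ∅, seg f (lz + 1) lw, ?_, by simp,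
      seg_subset (by omega) hlwm, low_leg h.hf (by omega) hx0, Leg.empty ez.alo.symm,
      ⟨h.hf.conn _ hlwm, Or.inr ⟨seg_tch (by omega) le_rfl ew.alo,
        seg_tch le_rfl (by omega) (h.hf.adj (by omega))⟩⟩, ?_, ?_, ?_⟩, ?_⟩
    · rintro _ ⟨t, ht, rfl⟩; exact mem_seg (by omega) (by omega)
    · refine anti_insert (h.ind hx.1 hz hxz) (by simp) ?_ anti_empty_right
      rintro _ ⟨t, ht, rfl⟩
      refine ⟨(h.neA hz (by omega)).symm, fun ha => ?_⟩
      have := ez.all t (by omega) ha.symm; omega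
    · refine anti_insert (h.ind hx.1 hw hxw) (iX (by omega) hlwm) ?_ ?_
      · rintro _ ⟨t, ht, rfl⟩
        refine ⟨(h.neA hw (by omega)).symm, fun ha => ?_⟩
        have := ew.all t (by omega) ha.symm; omega
      · rintro _ ⟨t, ht, rfl⟩ _ ⟨t', h1, h2, rfl⟩
        refine ⟨fun he => ?_, fun ha => ?_⟩
        · have := h.hf.inj (by omega) (by omega) he; omega
        · have := (h.hf.adj_iff (by omega) (by omega)).1 ha; omega
    · refine anti_insert (h.ind hz hw hzw) ?_ (by simp) anti_empty_left
      rintro _ ⟨t, h1, h2, rfl⟩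
      exact ⟨h.neA hz (by omega), hsmax t (by omega) h2⟩
    · intro ha
      have := ew.all lz (by omega) ha.symm; omega
  · left
    have : s ≠ lz + 1 := by
      rintro rfl
      exact no_consec h.tri h.hf (by omega) ez.alo hs
    refine ⟨seg f 0 lz, seg f s lw, seg_subset le_rfl (by omega), seg_subset (by omega) hlwm,
      h.hf.conn _ (by omega), h.hf.conn _ hlwm, seg_tch le_rfl (by omega) hx0,
      seg_tch (by omega) le_rfl ez.alo, seg_tch hsl le_rfl ew.alo, seg_tch le_rfl hsl hs, ?_⟩
    refine anti_insert (h.ind hx.1 hw hxw) (iX (by omega) hlwm) ?_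
      (h.hf.anti (by omega) hlwm)
    rintro _ ⟨t, _, ht, rfl⟩
    refine ⟨(h.neA hw (by omega)).symm, fun ha => ?_⟩
    have := ew.all t (by omega) ha.symm; omega

/-- paths with common ends `x` and `y` -/
structure Base2 (G : SimpleGraph U) (C : Set U) (f : ℕ → U) (m : ℕ) (g : ℕ → U) (l : ℕ)
    (x y : U) : Prop where
  base : Base G C f m g l
  hxy : x ≠ y
  xA : EndAt G C f m 0 x
  xB : EndAt G C g l 0 x
  yA : EndAt G C f m m y
  yB : EndAt G C g l l y

variable {x y : U}

theorem Base2.swap (h : Base2 G C f m g l x y) : Base2 G C g l f m x y :=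
  ⟨h.base.swap, h.hxy, h.xB, h.xA, h.yB, h.yA⟩

theorem Base2.rev (h : Base2 G C f m g l x y) :
    Base2 G C (fun t => f (m - t)) m (fun t => g (l - t)) l y x :=
  ⟨h.base.revf.revg, h.hxy.symm, by simpa using endAt_rev le_rfl h.yA,
    by simpa using endAt_rev le_rfl h.yB, by simpa using endAt_rev (Nat.zero_le _) h.xA,
    by simpa using endAt_rev (Nat.zero_le _) h.xB⟩

/-- an element of `C` other than `x, y` together with its extents -/
structure Elt (G : SimpleGraph U) (C : Set U) (f : ℕ → U) (m : ℕ) (g : ℕ → U) (l : ℕ)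
    (x y z : U) (lA rA lB rB : ℕ) : Prop where
  mem : z ∈ C
  nx : x ≠ z
  ny : y ≠ z
  eA : Ext G f m z lA rA
  eB : Ext G g l z lB rB

variable {z w : U} {lA rA lB rB lA' rA' lB' rB' : ℕ}

theorem Elt.swap (h : Elt G C f m g l x y z lA rA lB rB) :
    Elt G C g l f m x y z lB rB lA rA := ⟨h.mem, h.nx, h.ny, h.eB, h.eA⟩

theorem Elt.rev (h : Elt G C f m g l x y z lA rA lB rB) :
    Elt G C (fun t => f (m - t)) m (fun t => g (l - t)) l y x z (m - rA) (m - lA) (l - rB)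
      (l - lB) := ⟨h.mem, h.ny, h.nx, h.eA.rev, h.eB.rev⟩

theorem H1 (h : Base2 G C f m g l x y) (hz : Elt G C f m g l x y z lA rA lB rB)
    (hw : Elt G C f m g l x y w lA' rA' lB' rB') (hzw : z ≠ w) :
    ¬ (lA < lA' ∧ lB' < lB) := by
  rintro ⟨h1, h2⟩
  exact SS_contra h.base.hT h.base.hAB (h.base.ind hz.mem hw.mem hzw)
    (SS_of_lt h.base h.xA hz.mem hw.mem hz.nx hw.nx hzw hz.eA hw.eA h1)
    (SS_of_lt h.base.swap h.xB hw.mem hz.mem hw.nx hz.nx hzw.symm hw.eB hz.eB h2)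

theorem H2 (h : Base2 G C f m g l x y) (hz : Elt G C f m g l x y z lA rA lB rB)
    (hw : Elt G C f m g l x y w lA' rA' lB' rB') (hzw : z ≠ w) :
    ¬ (rA' < rA ∧ rB < rB') := by
  rintro ⟨h1, h2⟩
  have e1 := hz.eA.hi_le
  have e2 := hw.eB.hi_le
  exact H1 h.rev hz.rev hw.rev hzw ⟨by omega, by omega⟩

theorem inner_single (h : Base2 G C f m g l x y) (hz : Elt G C f m g l x y z lA rA lB rB)
    (he : lA = rA) : Inner G (seg f 0 m) x y z (f lA) := by
  subst he
  have hm := hz.eA.hi_le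
  have hs : ∀ j ≤ m, G.Adj z (f j) → j = lA := by
    intro j hj ha
    have := hz.eA.all j hj ha; omega
  refine ⟨mem_seg (by omega) hm, low f lA, seg f (lA + 1) m, ∅, ?_, seg_subset (by omega) le_rfl,
    by simp, low_leg h.base.hf hm (endAt_adj0 h.base h.xA),
    high_leg h.base.hf hm (endAt_adj0 h.base h.yA), Leg.empty hz.eA.alo.symm, ?_, ?_, ?_⟩
  · rintro _ ⟨t, ht, rfl⟩; exact mem_seg (by omega) (by omega)
  · refine anti_insert (h.base.ind h.xA.1 h.yA.1 h.hxy) ?_ ?_ ?_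
    · rintro _ ⟨t, h1, h2, rfl⟩
      refine ⟨h.base.neA h.xA.1 (by omega), fun ha => ?_⟩
      have := h.xA.2 t (by omega) ha; omega
    · rintro _ ⟨t, ht, rfl⟩
      refine ⟨(h.base.neA h.yA.1 (by omega)).symm, fun ha => ?_⟩
      have := h.yA.2 t (by omega) ha.symm; omega
    · rintro _ ⟨t, ht, rfl⟩ _ ⟨t', h1, h2, rfl⟩
      refine ⟨fun he => ?_, fun ha => ?_⟩
      · have := h.base.hf.inj (by omega) (by omega) he; omega
      · have := (h.base.hf.adj_iff (by omega) (by omega)).1 ha; omega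
  · refine anti_insert (h.base.ind h.xA.1 hz.mem hz.nx) (by simp) ?_ anti_empty_right
    rintro _ ⟨t, ht, rfl⟩
    refine ⟨(h.base.neA hz.mem (by omega)).symm, fun ha => ?_⟩
    have := hs t (by omega) ha.symm; omega
  · refine anti_insert (h.base.ind h.yA.1 hz.mem hz.ny) (by simp) ?_ anti_empty_right
    rintro _ ⟨t, h1, ht, rfl⟩
    refine ⟨(h.base.neA hz.mem (by omega)).symm, fun ha => ?_⟩
    have := hs t (by omega) ha.symm; omega

theorem H3 (h : Base2 G C f m g l x y) (hz : Elt G C f m g l x y z lA rA lB rB) :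
    ¬ (lA = rA ∧ lB = rB) := by
  rintro ⟨h1, h2⟩
  exact inner_inner h.base.hT h.base.hAB (inner_single h hz h1) (inner_single h.swap hz.swap h2)

/-- no containment of overlapping extents -/
theorem N1_cont (h : Base2 G C f m g l x y) (hz : Elt G C f m g l x y z lA rA lB rB)
    (hw : Elt G C f m g l x y w lA' rA' lB' rB') (hzw : z ≠ w) (h1 : lA ≤ lA') (h2 : rA' ≤ rA)
    (h3 : lA' < rA) (h4 : lA < rA') : False := by
  have g1 := hw.eA.gap h.base
  have g2 := hw.eB.gap h.base.swap
  have a1 := hw.eA.le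
  have a2 := hz.eA.hi_le
  have a3 := hw.eB.le
  have a4 := hz.eB.hi_le
  have a5 := hz.eB.le
  by_cases hs : lA' = rA'
  · have k1 := H1 h hz hw hzw
    have k2 := H2 h hz hw hzw
    have k3 := H3 h hw
    refine star_theta (i := lB) (j := lB') (i' := rB') (j' := rB) h.base.swap hz.mem hw.mem hzw
      (by omega) (by omega)
      (by omega) (seg_tch le_rfl (by omega) hz.eB.alo) (seg_tch (by omega) le_rfl hw.eB.alo)
      (seg_tch (by omega) le_rfl hz.eB.ahi) (seg_tch le_rfl (by omega) hw.eB.ahi)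
  · refine star_theta (i := lA) (j := lA') (i' := rA') (j' := rA) h.base hz.mem hw.mem hzw
      (by omega) (by omega)
      (by omega) (seg_tch le_rfl (by omega) hz.eA.alo) (seg_tch (by omega) le_rfl hw.eA.alo)
      (seg_tch (by omega) le_rfl hz.eA.ahi) (seg_tch le_rfl (by omega) hw.eA.ahi)

theorem N1_cross (h : Base2 G C f m g l x y) (hz : Elt G C f m g l x y z lA rA lB rB)
    (hw : Elt G C f m g l x y w lA' rA' lB' rB') (hzw : z ≠ w) (h1 : lA < lA') (h2 : rA < rA')
    (h3 : lA' < rA) : False := by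
  have a2 := hw.eA.hi_le
  by_cases hs : rA = lA' + 1
  · subst hs
    have hwB := h.base.notB hw.mem
    have hAB1 : ∀ {i j : ℕ}, j ≤ m → (∀ t, i ≤ t → t ≤ j → ¬ G.Adj w (f t)) →
        Anti G (seg f i j) (insert w (seg g 0 l)) := by
      rintro i j hj hn _ ⟨t, e1, e2, rfl⟩ e (rfl | he)
      · exact ⟨(h.base.neA hw.mem (by omega)).symm, fun ha => hn t e1 e2 ha.symm⟩
      · exact h.base.hAB _ (mem_seg (by omega) (by omega)) e he
    refine theta (a := f lA') (b := z) (D1 := seg f lA (lA' - 1))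
      (D2 := seg f (lA' + 1) (lA' + 1)) (D3 := insert w (seg g 0 l)) h.base.hT
      (h.base.neA hz.mem (by omega)).symm
      (fun ha => no_consec h.base.tri h.base.hf (by omega) ha.symm hz.eA.ahi)
      (h.base.hf.conn _ (by omega)) (h.base.hf.conn _ (by omega))
      (h.base.connB.insert (h.base.tchB hw.mem))
      (seg_tch (t := lA' - 1) (by omega) le_rfl (by
          rw [h.base.hf.adj_iff (by omega) (by omega)]; omega))
      (seg_tch le_rfl (by omega) hz.eA.alo)
      (seg_tch le_rfl le_rfl (h.base.hf.adj (by omega)))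
      (seg_tch le_rfl le_rfl hz.eA.ahi)
      ⟨w, Set.mem_insert _ _, hw.eA.alo.symm⟩ ((h.base.tchB hz.mem).mono (Set.subset_insert _ _))
      (h.base.hf.anti (by omega) (by omega)) (hAB1 (by omega) ?_) (hAB1 (by omega) ?_)
    · intro t e1 e2 ha
      have := hw.eA.all t (by omega) ha; omega
    · intro t e1 e2 ha
      obtain rfl : t = lA' + 1 := by omega
      exact no_consec h.base.tri h.base.hf (by omega) hw.eA.alo ha
  · refine star_theta (i := lA) (j := lA') (i' := rA) (j' := rA') h.base hz.mem hw.mem hzw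
      (by omega) (by omega)
      (by omega) (seg_tch le_rfl (by omega) hz.eA.alo) (seg_tch (by omega) le_rfl hw.eA.alo)
      (seg_tch le_rfl (by omega) hz.eA.ahi) (seg_tch (by omega) le_rfl hw.eA.ahi)

theorem N1 (h : Base2 G C f m g l x y) (hz : Elt G C f m g l x y z lA rA lB rB)
    (hw : Elt G C f m g l x y w lA' rA' lB' rB') (hzw : z ≠ w) : rA ≤ lA' ∨ rA' ≤ lA := by
  by_contra hcon
  push Not at hcon
  obtain ⟨h1, h2⟩ := hcon
  rcases Nat.lt_or_ge lA lA' with a | a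
  · rcases Nat.lt_or_ge rA rA' with b | b
    · exact N1_cross h hz hw hzw a b h1
    · exact N1_cont h hz hw hzw (by omega) b h1 h2
  · rcases Nat.lt_or_ge rA rA' with b | b
    · exact N1_cont h hw hz hzw.symm a (by omega) h2 h1
    · rcases Nat.eq_or_lt_of_le a with a | a
      · exact N1_cont h hz hw hzw (by omega) b h1 h2
      · rcases Nat.eq_or_lt_of_le b with b | b
        · exact N1_cont h hw hz hzw.symm (by omega) (by omega) h2 h1
        · exact N1_cross h hw hz hzw.symm a b h2

theorem N2 (h : Base2 G C f m g l x y) (hz : Elt G C f m g l x y z lA rA lB rB)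
    (hw : Elt G C f m g l x y w lA' rA' lB' rB') (hzw : z ≠ w) :
    (rA ≤ lA' ∧ rB ≤ lB') ∨ (rA' ≤ lA ∧ rB' ≤ lB) := by
  have p1 := N1 h hz hw hzw
  have p2 := N1 h.swap hz.swap hw.swap hzw
  have p3 := H1 h hz hw hzw
  have p4 := H1 h hw hz hzw.symm
  have p5 := H2 h hz hw hzw
  have p6 := H2 h hw hz hzw.symm
  have p7 := H3 h hz
  have p8 := H3 h hw
  have q1 := hz.eA.le
  have q2 := hz.eB.le
  have q3 := hw.eA.le
  have q4 := hw.eB.le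
  omega

/-! #### The spider -/

def Wf (f g : ℕ → U) (m l lB : ℕ) (x y : U) (i : ℕ) : U :=
  if i ≤ lB then g (lB - i) else if i = lB + 1 then x else if i ≤ lB + m + 2 then f (i - lB - 2)
  else if i = lB + m + 3 then y else g (l - (i - (lB + m + 4)))

theorem Wf_cases (hl : lB ≤ rB) (hr : rB ≤ l) {i : ℕ} (hi : i ≤ lB + m + 4 + l - rB) :
    (∃ t, i + t = lB ∧ Wf f g m l lB x y i = g t) ∨ (i = lB + 1 ∧ Wf f g m l lB x y i = x) ∨
    (∃ t, t ≤ m ∧ i = lB + 2 + t ∧ Wf f g m l lB x y i = f t) ∨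
    (i = lB + m + 3 ∧ Wf f g m l lB x y i = y) ∨
    (∃ t, rB ≤ t ∧ t ≤ l ∧ i + t = lB + m + 4 + l ∧ Wf f g m l lB x y i = g t) := by
  unfold Wf
  by_cases h1 : i ≤ lB
  · left; exact ⟨lB - i, by omega, by simp [h1]⟩
  right
  by_cases h2 : i = lB + 1
  · left; exact ⟨h2, by simp [h2]⟩
  right
  by_cases h3 : i ≤ lB + m + 2
  · left; exact ⟨i - lB - 2, by omega, by omega, by simp [h1, h2, h3]⟩
  right
  by_cases h4 : i = lB + m + 3
  · left; exact ⟨h4, by rw [if_neg h1, if_neg h2, if_neg h3, if_pos h4]⟩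
  right
  exact ⟨l - (i - (lB + m + 4)), by omega, by omega, by omega, by
    rw [if_neg h1, if_neg h2, if_neg h3, if_neg h4]⟩

theorem Wf_pair (h : Base2 G C f m g l x y) (hl : lB ≤ rB) (hr : rB ≤ l) {i j : ℕ} (hi : 2 ≤ i)
    (hij : i < j) (hj : j ≤ lB + m + 4 + l - rB) :
    Wf f g m l lB x y i ≠ Wf f g m l lB x y j ∧
      (G.Adj (Wf f g m l lB x y i) (Wf f g m l lB x y j) ↔ j = i + 1) := by
  have hb := h.base
  have xf : ∀ t ≤ m, (G.Adj x (f t) ↔ t = 0) := fun t ht =>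
    ⟨fun ha => h.xA.2 t ht ha, fun e => e ▸ endAt_adj0 hb h.xA⟩
  have yf : ∀ t ≤ m, (G.Adj y (f t) ↔ t = m) := fun t ht =>
    ⟨fun ha => h.yA.2 t ht ha, fun e => e ▸ endAt_adj0 hb h.yA⟩
  have xg : ∀ t ≤ l, (G.Adj x (g t) ↔ t = 0) := fun t ht =>
    ⟨fun ha => h.xB.2 t ht ha, fun e => e ▸ endAt_adj0 hb.swap h.xB⟩
  have yg : ∀ t ≤ l, (G.Adj y (g t) ↔ t = l) := fun t ht =>
    ⟨fun ha => h.yB.2 t ht ha, fun e => e ▸ endAt_adj0 hb.swap h.yB⟩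
  have nxf : ∀ t ≤ m, x ≠ f t := fun t ht => hb.neA h.xA.1 ht
  have nyf : ∀ t ≤ m, y ≠ f t := fun t ht => hb.neA h.yA.1 ht
  have nxg : ∀ t ≤ l, x ≠ g t := fun t ht => hb.neB h.xA.1 ht
  have nyg : ∀ t ≤ l, y ≠ g t := fun t ht => hb.neB h.yA.1 ht
  have fg : ∀ s ≤ m, ∀ t ≤ l, f s ≠ g t ∧ ¬ G.Adj (f s) (g t) := fun s hs t ht =>
    hb.hAB _ (mem_seg (by omega) hs) _ (mem_seg (by omega) ht)
  have hxy := hb.ind h.xA.1 h.yA.1 h.hxy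
  have gg : ∀ s ≤ l, ∀ t ≤ l, s ≠ t → g s ≠ g t := fun s hs t ht hne he =>
    hne (hb.hg.inj hs ht he)
  have ff : ∀ s ≤ m, ∀ t ≤ m, s ≠ t → f s ≠ f t := fun s hs t ht hne he =>
    hne (hb.hf.inj hs ht he)
  rcases Wf_cases (f := f) (g := g) (m := m) (x := x) (y := y) hl hr (by omega : i ≤ _) with
    ⟨s, hs, ei⟩ | ⟨hs, ei⟩ | ⟨s, hsm, hs, ei⟩ | ⟨hs, ei⟩ | ⟨s, hs1, hs2, hs, ei⟩ <;>
  rcases Wf_cases (f := f) (g := g) (m := m) (x := x) (y := y) hl hr hj with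
    ⟨t, ht, ej⟩ | ⟨ht, ej⟩ | ⟨t, htm, ht, ej⟩ | ⟨ht, ej⟩ | ⟨t, ht1, ht2, ht, ej⟩ <;>
  rw [ei, ej] <;> try (exfalso; omega)
  · exact ⟨gg s (by omega) t (by omega) (by omega), by
      rw [hb.hg.adj_iff (by omega) (by omega)]; omega⟩
  · exact ⟨(nxg s (by omega)).symm, by rw [G.adj_comm, xg s (by omega)]; omega⟩
  · exact ⟨(fg t htm s (by omega)).1.symm,
      iff_of_false (fun ha => (fg t htm s (by omega)).2 ha.symm) (by omega)⟩
  · exact ⟨(nyg s (by omega)).symm, by rw [G.adj_comm, yg s (by omega)]; omega⟩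
  · exact ⟨gg s (by omega) t (by omega) (by omega), by
      rw [hb.hg.adj_iff (by omega) (by omega)]; omega⟩
  · exact ⟨nxf t htm, by rw [xf t htm]; omega⟩
  · exact ⟨hxy.1, iff_of_false hxy.2 (by omega)⟩
  · exact ⟨nxg t ht2, by rw [xg t ht2]; omega⟩
  · exact ⟨ff s hsm t htm (by omega), by rw [hb.hf.adj_iff hsm htm]; omega⟩
  · exact ⟨(nyf s hsm).symm, by rw [G.adj_comm, yf s hsm]; omega⟩
  · exact ⟨(fg s hsm t ht2).1, iff_of_false (fg s hsm t ht2).2 (by omega)⟩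
  · exact ⟨nyg t ht2, by rw [yg t ht2]; omega⟩
  · exact ⟨gg s (by omega) t (by omega) (by omega), by
      rw [hb.hg.adj_iff (by omega) (by omega)]; omega⟩

theorem Wf_z (h : Base2 G C f m g l x y) (hz : Elt G C f m g l x y z lA rA lB rB) {i : ℕ}
    (hi : 2 ≤ i) (hj : i ≤ lB + m + 4 + l - rB) :
    Wf f g m l lB x y i ≠ z ∧ (G.Adj z (Wf f g m l lB x y i) →
      (lB + 2 + lA ≤ i ∧ i ≤ lB + 2 + rA) ∨ i = lB + m + 4 + l - rB) := by
  have hb := h.base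
  have hr := hz.eB.hi_le
  rcases Wf_cases (f := f) (g := g) (m := m) (x := x) (y := y) hz.eB.le hr hj with
    ⟨s, hs, ei⟩ | ⟨hs, ei⟩ | ⟨s, hsm, hs, ei⟩ | ⟨hs, ei⟩ | ⟨s, hs1, hs2, hs, ei⟩ <;>
  rw [ei]
  · have := hz.eB.le
    refine ⟨(hb.neB hz.mem (by omega)).symm, fun ha => ?_⟩
    have := hz.eB.all s (by omega) ha; omega
  · exact ⟨hz.nx, fun ha => absurd ha.symm (hb.ind h.xA.1 hz.mem hz.nx).2⟩
  · refine ⟨(hb.neA hz.mem (by omega)).symm, fun ha => ?_⟩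
    have := hz.eA.all s (by omega) ha; omega
  · exact ⟨hz.ny, fun ha => absurd ha.symm (hb.ind h.yA.1 hz.mem hz.ny).2⟩
  · refine ⟨(hb.neB hz.mem (by omega)).symm, fun ha => ?_⟩
    have := hz.eB.all s (by omega) ha; omega

theorem spider_of_index {W : ℕ → U} {z : U} {k last p q : ℕ} (hk : 1 ≤ k)
    (hW : ∀ i j, 2 ≤ i → i < j → j ≤ last → W i ≠ W j ∧ (G.Adj (W i) (W j) ↔ j = i + 1))
    (hz : ∀ i, 2 ≤ i → i ≤ last → W i ≠ z ∧ (G.Adj z (W i) → (p ≤ i ∧ i ≤ q) ∨ i = last))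
    (hp : G.Adj z (W p)) (hq : G.Adj z (W q)) (hl : G.Adj z (W last)) (hpk : k + 1 ≤ p)
    (hpq : p + 2 ≤ q) (hql : q + 2 * k ≤ last) : ContainsSpider G k := by
  let idx : Fin 3 → ℕ → ℕ := fun j i => if j = 0 then p - i else if j = 1 then q + i else last - i
  have i0 : ∀ i, idx 0 i = p - i := fun i => rfl
  have i1 : ∀ i, idx 1 i = q + i := fun i => rfl
  have i2 : ∀ i, idx 2 i = last - i := fun i => rfl
  have hr : ∀ j, ∀ i < k, 2 ≤ idx j i ∧ idx j i ≤ last := by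
    intro j i hi
    fin_cases j
    · show 2 ≤ idx 0 i ∧ idx 0 i ≤ last
      rw [i0]; omega
    · show 2 ≤ idx 1 i ∧ idx 1 i ≤ last
      rw [i1]; omega
    · show 2 ≤ idx 2 i ∧ idx 2 i ≤ last
      rw [i2]; omega
  have hinj : ∀ i j, 2 ≤ i → i ≤ last → 2 ≤ j → j ≤ last → W i = W j → i = j := by
    intro i j a b c d e
    rcases lt_trichotomy i j with h | h | h
    · exact absurd e (hW i j a h d).1
    · exact h
    · exact absurd e.symm (hW j i c h b).1
  have hadj : ∀ i j, 2 ≤ i → i ≤ last → 2 ≤ j → j ≤ last →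
      (G.Adj (W i) (W j) ↔ (j = i + 1 ∨ i = j + 1)) := by
    intro i j a b c d
    rcases lt_trichotomy i j with h | h | h
    · rw [(hW i j a h d).2]; omega
    · subst h; simp
    · rw [G.adj_comm, (hW j i c h b).2]; omega
  have idxinj : ∀ j₁ j₂, ∀ a < k, ∀ b < k, idx j₁ a = idx j₂ b → j₁ = j₂ ∧ a = b := by
    intro j₁ j₂ a ha b hb
    fin_cases j₁ <;> fin_cases j₂ <;>
    simp only [Fin.zero_eta, Fin.mk_one, Fin.reduceFinMk, i0, i1, i2] <;> intro h <;>
    first | (exfalso; omega) | exact ⟨trivial, by omega⟩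
  have idxadj : ∀ j₁ j₂, ∀ a < k, ∀ b < k, (idx j₂ b = idx j₁ a + 1 ∨ idx j₁ a = idx j₂ b + 1) ↔
      (j₁ = j₂ ∧ (a + 1 = b ∨ b + 1 = a)) := by
    intro j₁ j₂ a ha b hb
    fin_cases j₁ <;> fin_cases j₂ <;>
    simp only [Fin.zero_eta, Fin.mk_one, Fin.reduceFinMk, i0, i1, i2] <;>
    first
      | exact iff_of_false (by omega) (fun hh => absurd hh.1 (by decide))
      | (simp only [true_and]; omega)
  refine ⟨z, fun j i => W (idx j i), ?_, ?_, ?_, ?_⟩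
  · intro j i
    exact (hz _ (hr j i i.2).1 (hr j i i.2).2).1
  · intro j₁ m₁ j₂ m₂ he
    have := hinj _ _ (hr j₁ m₁ m₁.2).1 (hr j₁ m₁ m₁.2).2 (hr j₂ m₂ m₂.2).1 (hr j₂ m₂ m₂.2).2 he
    obtain ⟨e1, e2⟩ := idxinj j₁ j₂ m₁ m₁.2 m₂ m₂.2 this
    exact ⟨e1, Fin.ext e2⟩
  · intro j i
    constructor
    · intro ha
      have h1 := (hz _ (hr j i i.2).1 (hr j i i.2).2).2 ha
      have hi := i.2
      fin_cases j <;> simp only [Fin.zero_eta, Fin.mk_one, Fin.reduceFinMk, i0, i1, i2] at h1 <;>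
        omega
    · intro h0
      fin_cases j
      · show G.Adj z (W (idx 0 i)); rw [i0, h0]; exact hp
      · show G.Adj z (W (idx 1 i)); rw [i1, h0]; exact hq
      · show G.Adj z (W (idx 2 i)); rw [i2, h0]; exact hl
  · intro j₁ m₁ j₂ m₂
    rw [hadj _ _ (hr j₁ m₁ m₁.2).1 (hr j₁ m₁ m₁.2).2 (hr j₂ m₂ m₂.2).1 (hr j₂ m₂ m₂.2).2,
      idxadj j₁ j₂ m₁ m₁.2 m₂ m₂.2]

theorem spider_of_elt (h : Base2 G C f m g l x y) (hz : Elt G C f m g l x y z lA rA lB rB)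
    {k : ℕ} (hk : 1 ≤ k) (h1 : 2 * k - 2 ≤ lA + lB) (h2 : 2 * k - 2 + rA + rB ≤ m + l)
    (hA : lA ≠ rA) : ContainsSpider G k := by
  have hg := hz.eA.gap h.base
  have hle := hz.eA.le
  have hr := hz.eA.hi_le
  have hr' := hz.eB.hi_le
  have hle' := hz.eB.le
  have wf : ∀ t ≤ m, Wf f g m l lB x y (lB + 2 + t) = f t := by
    intro t ht
    unfold Wf
    rw [if_neg (by omega), if_neg (by omega), if_pos (by omega)]
    congr 1; omega
  have wg : Wf f g m l lB x y (lB + m + 4 + l - rB) = g rB := by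
    unfold Wf
    rw [if_neg (by omega), if_neg (by omega), if_neg (by omega), if_neg (by omega)]
    congr 1; omega
  refine spider_of_index (W := Wf f g m l lB x y) (z := z) (last := lB + m + 4 + l - rB)
    (p := lB + 2 + lA) (q := lB + 2 + rA) hk
    (fun i j a b c => Wf_pair h hle' hr' a b c) (fun i a b => Wf_z h hz a b) ?_ ?_ ?_
    (by omega) (by omega) (by omega)
  · rw [wf _ (by omega)]; exact hz.eA.alo
  · rw [wf _ (by omega)]; exact hz.eA.ahi
  · rw [wg]; exact hz.eB.ahi

theorem step3 [Finite U] (h : Base2 G C f m g l x y) {k : ℕ} (hk : 1 ≤ k)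
    (hcard : 2 * k + 1 ≤ C.ncard) : ContainsSpider G k := by
  classical
  have hext : ∀ z : U, ∃ a b c d : ℕ, z ∈ C → Ext G f m z a b ∧ Ext G g l z c d := by
    intro z
    by_cases hz : z ∈ C
    · obtain ⟨a, b, h1⟩ := exists_ext (h.base.tA z hz)
      obtain ⟨c, d, h2⟩ := exists_ext (h.base.tB z hz)
      exact ⟨a, b, c, d, fun _ => ⟨h1, h2⟩⟩
    · exact ⟨0, 0, 0, 0, fun h => absurd h hz⟩
  choose lA rA lB rB hE using hext
  let Z : Finset U := (Set.toFinite (C \ {x, y})).toFinset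
  have hZ : ∀ z ∈ Z, Elt G C f m g l x y z (lA z) (rA z) (lB z) (rB z) := by
    intro z hz
    rw [Set.Finite.mem_toFinset] at hz
    obtain ⟨h1, h2⟩ := hz
    simp only [Set.mem_insert_iff, Set.mem_singleton_iff, not_or] at h2
    exact ⟨h1, Ne.symm h2.1, Ne.symm h2.2, (hE z h1).1, (hE z h1).2⟩
  have hZc : 2 * k - 1 ≤ Z.card := by
    have e1 : Z.card = (C \ {x, y}).ncard := (Set.ncard_eq_toFinset_card _ _).symm
    have e2 := Set.le_ncard_sdiff ({x, y} : Set U) C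
    have e3 : ({x, y} : Set U).ncard = 2 := Set.ncard_pair h.hxy
    omega
  have hord : ∀ z ∈ Z, ∀ w ∈ Z, z ≠ w → (lA z + lB z) / 2 ≠ (lA w + lB w) / 2 ∧
      ((m - rA z) + (l - rB z)) / 2 ≠ ((m - rA w) + (l - rB w)) / 2 := by
    intro z hz w hw hne
    have p := N2 h (hZ z hz) (hZ w hw) hne
    have a1 := (hZ z hz).eA.gap h.base
    have a2 := (hZ z hz).eB.gap h.base.swap
    have a3 := (hZ w hw).eA.gap h.base
    have a4 := (hZ w hw).eB.gap h.base.swap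
    have b1 := H3 h (hZ z hz)
    have b2 := H3 h (hZ w hw)
    have c1 := (hZ z hz).eA.le
    have c2 := (hZ z hz).eB.le
    have c3 := (hZ w hw).eA.le
    have c4 := (hZ w hw).eB.le
    have d1 := (hZ z hz).eA.hi_le
    have d2 := (hZ z hz).eB.hi_le
    have d3 := (hZ w hw).eA.hi_le
    have d4 := (hZ w hw).eB.hi_le
    omega
  have hcount : ∀ φ : U → ℕ, (∀ z ∈ Z, ∀ w ∈ Z, z ≠ w → φ z ≠ φ w) →
      (Z.filter (fun z => φ z < k - 1)).card ≤ k - 1 := by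
    intro φ hφ
    have : (Z.filter (fun z => φ z < k - 1)).card ≤ (Finset.range (k - 1)).card := by
      refine Finset.card_le_card_of_injOn φ ?_ ?_
      · intro z hz
        have := (Finset.mem_filter.1 hz).2
        simpa using this
      · intro z hz w hw he
        by_contra hne
        exact hφ z (Finset.mem_filter.1 hz).1 w (Finset.mem_filter.1 hw).1 hne he
    simpa using this
  have c1 := hcount (fun z => (lA z + lB z) / 2) (fun z hz w hw hne => (hord z hz w hw hne).1)
  have c2 := hcount (fun z => ((m - rA z) + (l - rB z)) / 2)
    (fun z hz w hw hne => (hord z hz w hw hne).2)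
  have : ∃ z ∈ Z, k - 1 ≤ (lA z + lB z) / 2 ∧ k - 1 ≤ ((m - rA z) + (l - rB z)) / 2 := by
    by_contra hcon
    push Not at hcon
    have hsub : Z ⊆ Z.filter (fun z => (lA z + lB z) / 2 < k - 1) ∪
        Z.filter (fun z => ((m - rA z) + (l - rB z)) / 2 < k - 1) := by
      intro z hz
      rw [Finset.mem_union, Finset.mem_filter, Finset.mem_filter]
      rcases Nat.lt_or_ge ((lA z + lB z) / 2) (k - 1) with h1 | h1
      · exact Or.inl ⟨hz, h1⟩
      · exact Or.inr ⟨hz, hcon z hz h1⟩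
    have := (Finset.card_le_card hsub).trans (Finset.card_union_le _ _)
    omega
  obtain ⟨z, hz, k1, k2⟩ := this
  have e := hZ z hz
  have d1 := e.eA.hi_le
  have d2 := e.eB.hi_le
  by_cases hs : lA z = rA z
  · have : lB z ≠ rB z := fun h' => H3 h e ⟨hs, h'⟩
    exact spider_of_elt h.swap e.swap hk (by omega) (by omega) this
  · exact spider_of_elt h e hk (by omega) (by omega) hs

theorem exists_end0 (hf : IndP G f m) (h : MinT G (seg f 0 m) C) : ∃ c, EndAt G C f m 0 c := by
  have heq : seg f 0 m \ {f 0} = seg f 1 m := by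
    ext v; constructor
    · rintro ⟨⟨t, _, ht, rfl⟩, hne⟩
      refine mem_seg ?_ ht
      by_contra h0
      have : t = 0 := by omega
      subst this
      exact hne rfl
    · rintro ⟨t, h1, ht, rfl⟩
      refine ⟨mem_seg (by omega) ht, fun he => ?_⟩
      have := hf.inj ht (by omega) he; omega
  obtain ⟨c, hc, hn⟩ := h.2.2 (f 0) (mem_seg le_rfl (by omega)) (by
    rw [heq]; exact hf.conn _ le_rfl)
  rw [heq] at hn
  refine ⟨c, hc, fun j hj ha => ?_⟩
  by_contra h0
  exact hn (seg_tch (by omega) hj ha)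

theorem exists_end1 (hf : IndP G f m) (h : MinT G (seg f 0 m) C) : ∃ c, EndAt G C f m m c := by
  obtain ⟨c, hc⟩ := exists_end0 (f := fun t => f (m - t)) (C := C) hf.reverse
    (by rw [seg_rev_all]; exact h)
  exact ⟨c, endAt_of_rev le_rfl (by simpa using hc)⟩

theorem sep_ind [Finite U] (hT : ¬ ContainsTheta G) (tri : NoTri G) {k : ℕ} (hk : 1 ≤ k)
    (hS : ¬ ContainsSpider G k) {A B : Set U} (hA : Conn G A) (hB : Conn G B)
    (hAB : Anti G A B) (hC : ∀ c ∈ C, ∀ c' ∈ C, c ≠ c' → ¬ G.Adj c c')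
    (tA : ∀ c ∈ C, Tch G A c) (tB : ∀ c ∈ C, Tch G B c) : C.ncard < 2 * k + 1 := by
  by_contra hcard
  push Not at hcard
  have hCn : C.Nonempty := Set.nonempty_of_ncard_ne_zero (by omega)
  obtain ⟨A', hA'A, hA'⟩ := exists_minT hA tA
  obtain ⟨B', hB'B, hB'⟩ := exists_minT hB tB
  have hAB' : Anti G A' B' := hAB.mono hA'A hB'B
  obtain ⟨m, f, hf, rfl⟩ := path_of_min hT tri hC hCn hAB' hA' hB'.1 hB'.2.1
  obtain ⟨l, g, hg, rfl⟩ := path_of_min hT tri hC hCn hAB'.symm hB' hA'.1 hA'.2.1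
  have hb : Base G C f m g l := by
    refine ⟨hT, tri, hC, hf, hg, hAB', ?_, ?_, exists_end0 hf hA', exists_end1 hf hA',
      exists_end0 hg hB', exists_end1 hg hB'⟩
    · intro c hc
      obtain ⟨_, ⟨t, _, ht, rfl⟩, ha⟩ := hA'.2.1 c hc
      exact ⟨t, ht, ha⟩
    · intro c hc
      obtain ⟨_, ⟨t, _, ht, rfl⟩, ha⟩ := hB'.2.1 c hc
      exact ⟨t, ht, ha⟩
  have h3 : ∃ a ∈ C, ∃ b ∈ C, ∃ c ∈ C, a ≠ b ∧ a ≠ c ∧ b ≠ c := by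
    obtain ⟨a, b, c, ha, hb, hc, h⟩ := (Set.two_lt_ncard_iff (Set.toFinite C)).1
      (by omega : 2 < C.ncard)
    exact ⟨a, ha, b, hb, c, hc, h⟩
  obtain ⟨g', hb', x, y, hxy, h1, h2, h3, h4⟩ := step2 hb h3
  exact hS (step3 ⟨hb', hxy, h1, h2, h3, h4⟩ hk hcard)

end step3
end S14

namespace S14

/-! ### Ramsey -/

section ramsey
variable {U : Type} {G : SimpleGraph U}

/-- independent finset -/
def Indep (G : SimpleGraph U) (I : Finset U) : Prop := ∀ c ∈ I, ∀ c' ∈ I, ¬ G.Adj c c'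

open Classical in
theorem greedy {t : ℕ} (ht : 1 ≤ t) : ∀ (j : ℕ) (X : Finset U),
    (∀ x ∈ X, (X.filter (fun y => G.Adj x y)).card < t) → j * t ≤ X.card →
    ∃ I ⊆ X, I.card = j ∧ Indep G I := by
  intro j
  induction j with
  | zero => intro X _ _; exact ⟨∅, by simp, by simp, by simp [Indep]⟩
  | succ j ih =>
    intro X hX hc
    have hne : X.Nonempty := by
      rw [← Finset.card_pos]
      have : (j + 1) * t = j * t + t := by ring
      omega
    obtain ⟨x, hx⟩ := hne
    set X' := X.filter (fun y => ¬ (G.Adj x y) ∧ y ≠ x) with hX'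
    have hsub : X' ⊆ X := Finset.filter_subset _ _
    have h1 : X ⊆ X' ∪ (insert x (X.filter (fun y => G.Adj x y))) := by
      intro y hy
      simp only [hX', Finset.mem_union, Finset.mem_filter, Finset.mem_insert]
      tauto
    have h2 := Finset.card_le_card h1
    have h3 := Finset.card_union_le X' (insert x (X.filter (fun y => G.Adj x y)))
    have h4 := Finset.card_insert_le x (X.filter (fun y => G.Adj x y))
    have h5 := hX x hx
    have h6 : (j + 1) * t = j * t + t := by ring
    obtain ⟨I, hI, hIc, hInd⟩ := ih X' (fun y hy =>
      lt_of_le_of_lt (Finset.card_le_card (Finset.filter_subset_filter _ hsub)) (hX y (hsub hy)))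
      (by omega)
    have hxI : ∀ y ∈ I, ¬ G.Adj x y ∧ y ≠ x := fun y hy => (Finset.mem_filter.1 (hI hy)).2
    refine ⟨insert x I, ?_, ?_, ?_⟩
    · intro y hy
      rcases Finset.mem_insert.1 hy with rfl | hy
      · exact hx
      · exact hsub (hI hy)
    · rw [Finset.card_insert_of_notMem (fun h => (hxI x h).2 rfl), hIc]
    · intro a ha b hb
      rcases Finset.mem_insert.1 ha with ha | ha <;> rcases Finset.mem_insert.1 hb with hb | hb
      · rw [ha, hb]; exact G.irrefl
      · rw [ha]; exact (hxI b hb).1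
      · rw [hb]; exact fun h => (hxI a ha).1 h.symm
      · exact hInd a ha b hb

open Classical in
theorem indep_of_card (tri : NoTri G) {t : ℕ} (ht : 1 ≤ t) (X : Finset U) (hX : t * t ≤ X.card) :
    ∃ I ⊆ X, I.card = t ∧ Indep G I := by
  by_cases h : ∀ x ∈ X, (X.filter (fun y => G.Adj x y)).card < t
  · exact greedy ht t X h hX
  · push Not at h
    obtain ⟨x, hx, h⟩ := h
    obtain ⟨I, hI, hc⟩ := Finset.exists_subset_card_eq h
    refine ⟨I, hI.trans (Finset.filter_subset _ _), hc, fun a ha b hb hab => ?_⟩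
    have h1 := (Finset.mem_filter.1 (hI ha)).2
    have h2 := (Finset.mem_filter.1 (hI hb)).2
    exact tri x a b h1 hab h2

theorem noTri_of {W : Type} {H : SimpleGraph W} (h : H.CliqueFree 3) : NoTri H := by
  classical
  intro a b c h1 h2 h3
  exact h {a, b, c} (is3Clique_triple_iff.2 ⟨h1, h3, h2⟩)

theorem ramsey_holds {t : ℕ} (ht : 1 ≤ t) : RamseyProp (ramseyNumber 3 t) 3 t := by
  have : ({n : ℕ | RamseyProp n 3 t}).Nonempty := by
    refine ⟨t * t, fun H => ?_⟩
    by_cases h : H.CliqueFree 3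
    · right
      obtain ⟨I, _, hc, hI⟩ := indep_of_card (noTri_of h) ht Finset.univ (by simp)
      refine ⟨I, ?_, hc⟩
      intro a ha b hb hab
      exact ⟨hab, hI a ha b hb⟩
    · left
      unfold CliqueFree at h
      push Not at h
      exact h
  exact Nat.sInf_mem this

theorem ramsey_ge {t n : ℕ} (ht : 3 ≤ t) (h : RamseyProp n 3 t) : 5 ≤ n := by
  by_contra hn
  push Not at hn
  let H : SimpleGraph (Fin n) :=
    { Adj := fun i j => i ≠ j ∧ i.1 / 2 = j.1 / 2
      symm := ⟨fun i j h => ⟨h.1.symm, h.2.symm⟩⟩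
      loopless := ⟨fun i h => h.1 rfl⟩ }
  rcases h H with ⟨S, hS⟩ | ⟨S, hS⟩
  · obtain ⟨a, b, c, hab, hac, hbc, rfl⟩ := is3Clique_iff.1 hS
    have h1 : a ≠ b ∧ a.1 / 2 = b.1 / 2 := hab
    have h2 : a ≠ c ∧ a.1 / 2 = c.1 / 2 := hac
    have h3 : b ≠ c ∧ b.1 / 2 = c.1 / 2 := hbc
    have e1 := fun h => h1.1 (Fin.ext h)
    have e2 := fun h => h2.1 (Fin.ext h)
    have e3 := fun h => h3.1 (Fin.ext h)
    omega
  · have hinj : Set.InjOn (fun i : Fin n => i.1 / 2) S := by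
      intro a ha b hb hab
      by_contra hne
      have := hS.1 ha hb hne
      exact this.2 ⟨hne, hab⟩
    have h1 : S.card ≤ (Finset.range 2).card := by
      refine Finset.card_le_card_of_injOn _ ?_ hinj
      intro a _
      have := a.2
      simp only [Finset.coe_range, Set.mem_Iio]
      omega
    have h2 := hS.2
    simp at h1
    omega

theorem sepBound [Finite U] (hT : ¬ ContainsTheta G) (tri : G.CliqueFree 3) {k : ℕ} (hk : 1 ≤ k)
    (hS : ¬ ContainsSpider G k) {A B : Set U} (hA : Conn G A) (hB : Conn G B)
    (hAB : Anti G A B) (C : Finset U)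
    (tA : ∀ c ∈ C, Tch G A c) (tB : ∀ c ∈ C, Tch G B c) :
    C.card < ramseyNumber 3 (4 * k - 1) := by
  by_contra hcard
  push Not at hcard
  obtain ⟨C', hC', hc⟩ := Finset.exists_subset_card_eq hcard
  let e := (C'.equivFinOfCardEq hc).symm
  let φ : Fin (ramseyNumber 3 (4 * k - 1)) → U := fun i => (e i).1
  have hφ : Function.Injective φ := fun i j h => e.injective (Subtype.ext h)
  rcases ramsey_holds (by omega : 1 ≤ 4 * k - 1) (G.comap φ) with ⟨S, hS3⟩ | ⟨S, hSi⟩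
  · obtain ⟨a, b, c, hab, hac, hbc, -⟩ := is3Clique_iff.1 hS3
    exact noTri_of tri _ _ _ hab hbc hac
  · classical
    have := sep_ind hT (noTri_of tri) hk hS (C := ((S.image φ : Finset U) : Set U)) hA hB hAB ?_ ?_ ?_
    · rw [Set.ncard_coe_finset, Finset.card_image_of_injective _ hφ, hSi.2] at this
      omega
    · intro c hc c' hc' hne hadj
      simp only [Finset.coe_image, Set.mem_image, Finset.mem_coe] at hc hc'
      obtain ⟨i, hi, rfl⟩ := hc
      obtain ⟨j, hj, rfl⟩ := hc'
      have := hSi.1 hi hj (fun h => hne (by rw [h]))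
      exact this.2 hadj
    · intro c hc
      simp only [Finset.coe_image, Set.mem_image, Finset.mem_coe] at hc
      obtain ⟨i, hi, rfl⟩ := hc
      exact tA _ (hC' (e i).2)
    · intro c hc
      simp only [Finset.coe_image, Set.mem_image, Finset.mem_coe] at hc
      obtain ⟨i, hi, rfl⟩ := hc
      exact tB _ (hC' (e i).2)

end ramsey
end S14

namespace S14

/-! ### Trees and gluing -/

section trees
variable {U : Type}

theorem walk_sum_inl {ι κ : Type} {S : SimpleGraph ι} {T : SimpleGraph κ} :
    ∀ {x y : ι ⊕ κ} (p : (S ⊕g T).Walk x y) (a b : ι) (hx : x = Sum.inl a) (hy : y = Sum.inl b),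
      ∃ q : S.Walk a b, p.copy hx hy = q.map (Embedding.sumInl (G := S) (H := T)).toHom := by
  intro x y p
  induction p with
  | nil =>
    intro a b hx hy
    subst hx
    obtain rfl : a = b := Sum.inl_injective hy
    exact ⟨.nil, rfl⟩
  | @cons u v w h p ih =>
    intro a b hx hy
    subst hx
    cases v with
    | inl c =>
      obtain ⟨q, hq⟩ := ih c b rfl hy
      refine ⟨.cons (sum_adj_inl.1 h) q, ?_⟩
      subst hy
      simp only [Walk.copy_rfl_rfl] at hq ⊢
      rw [hq]
      rfl
    | inr c => exact absurd h (by simp)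

theorem walk_sum_inr {ι κ : Type} {S : SimpleGraph ι} {T : SimpleGraph κ} :
    ∀ {x y : ι ⊕ κ} (p : (S ⊕g T).Walk x y) (a b : κ) (hx : x = Sum.inr a) (hy : y = Sum.inr b),
      ∃ q : T.Walk a b, p.copy hx hy = q.map (Embedding.sumInr (G := S) (H := T)).toHom := by
  intro x y p
  induction p with
  | nil =>
    intro a b hx hy
    subst hx
    obtain rfl : a = b := Sum.inr_injective hy
    exact ⟨.nil, rfl⟩
  | @cons u v w h p ih =>
    intro a b hx hy
    subst hx
    cases v with
    | inr c =>
      obtain ⟨q, hq⟩ := ih c b rfl hy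
      refine ⟨.cons (sum_adj_inr.1 h) q, ?_⟩
      subst hy
      simp only [Walk.copy_rfl_rfl] at hq ⊢
      rw [hq]
      rfl
    | inl c => exact absurd h (by simp)

theorem acyclic_sum {ι κ : Type} {S : SimpleGraph ι} {T : SimpleGraph κ} (hS : S.IsAcyclic)
    (hT : T.IsAcyclic) : (S ⊕g T).IsAcyclic := by
  intro x p hp
  cases x with
  | inl a =>
    obtain ⟨q, hq⟩ := walk_sum_inl p a a rfl rfl
    simp only [Walk.copy_rfl_rfl] at hq
    rw [hq] at hp
    exact hS q ((Walk.isCycle_map_iff_of_injective (Embedding.sumInl (G := S) (H := T)).injective).1 hp)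
  | inr a =>
    obtain ⟨q, hq⟩ := walk_sum_inr p a a rfl rfl
    simp only [Walk.copy_rfl_rfl] at hq
    rw [hq] at hp
    exact hT q ((Walk.isCycle_map_iff_of_injective (Embedding.sumInr (G := S) (H := T)).injective).1 hp)

theorem Conn.map {ι κ : Type} {S : SimpleGraph ι} {T : SimpleGraph κ} (f : ι → κ)
    (hf : ∀ a b, S.Adj a b → T.Adj (f a) (f b)) {D : Set ι} (h : Conn S D) : Conn T (f '' D) := by
  rintro _ ⟨x, hx, rfl⟩ _ ⟨y, hy, rfl⟩
  have := h x hx y hy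
  induction this with
  | refl => exact .refl
  | tail _ hst ih =>
    exact (ih hst.2.1).tail ⟨hf _ _ hst.1, ⟨_, hst.2.1, rfl⟩, ⟨_, hst.2.2, rfl⟩⟩

/-- clique for a relation -/
def Clq (H : U → U → Prop) (K : Finset U) : Prop := ∀ u ∈ K, ∀ v ∈ K, u ≠ v → H u v

/-- a tree decomposition of a relation on `X` with bags of size at most `N` -/
def TD (H : U → U → Prop) (X : Finset U) (N : ℕ) : Prop :=
  ∃ (ι : Type) (_ : Finite ι) (T : SimpleGraph ι) (B : ι → Finset U), T.IsTree ∧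
    (∀ i, B i ⊆ X) ∧ (∀ i, (B i).card ≤ N) ∧ (∀ K ⊆ X, Clq H K → ∃ i, K ⊆ B i) ∧
    ∀ v, Conn T {i | v ∈ B i}

theorem TD.single (H : U → U → Prop) (X : Finset U) (N : ℕ) (h : X.card ≤ N) : TD H X N := by
  refine ⟨Unit, inferInstance, ⊥, fun _ => X, ?_, fun _ => subset_rfl, fun _ => h,
    fun K hK _ => ⟨(), hK⟩, ?_⟩
  · exact IsTree.of_subsingleton
  · intro v x hx y hy
    exact .refl

theorem TD.glue {H1 H2 H : U → U → Prop} {X1 X2 X Y : Finset U} {N : ℕ} (h1 : TD H1 X1 N)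
    (h2 : TD H2 X2 N) (hY1 : Y ⊆ X1) (hY2 : Y ⊆ X2) (hY : ∀ v ∈ X1, v ∈ X2 → v ∈ Y)
    (hX1 : X1 ⊆ X) (hX2 : X2 ⊆ X) (c1 : Clq H1 Y) (c2 : Clq H2 Y)
    (hK : ∀ K ⊆ X, Clq H K → (K ⊆ X1 ∧ Clq H1 K) ∨ (K ⊆ X2 ∧ Clq H2 K)) : TD H X N := by
  obtain ⟨ι, _, S, B, hS, hBX, hBc, hBK, hBv⟩ := h1
  obtain ⟨κ, _, T, C, hT, hCX, hCc, hCK, hCv⟩ := h2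
  obtain ⟨i0, hi0⟩ := hBK Y hY1 c1
  obtain ⟨j0, hj0⟩ := hCK Y hY2 c2
  refine ⟨ι ⊕ κ, inferInstance, S.sum T ⊔ edge (Sum.inl i0) (Sum.inr j0), Sum.elim B C,
    ?_, ?_, ?_, ?_, ?_⟩
  · refine ⟨hS.1.sum_sup_edge hT.1, ?_⟩
    exact (acyclic_sum hS.2 hT.2).sup_edge_of_not_reachable (not_reachable_sum_inl_inr _ _)
  · rintro (i | j)
    · exact (hBX i).trans hX1
    · exact (hCX j).trans hX2
  · rintro (i | j)
    · exact hBc i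
    · exact hCc j
  · intro K hKX hKc
    rcases hK K hKX hKc with ⟨h1, h2⟩ | ⟨h1, h2⟩
    · obtain ⟨i, hi⟩ := hBK K h1 h2
      exact ⟨Sum.inl i, hi⟩
    · obtain ⟨i, hi⟩ := hCK K h1 h2
      exact ⟨Sum.inr i, hi⟩
  · intro v
    have e : {i | v ∈ (Sum.elim B C) i} =
        Sum.inl '' {i | v ∈ B i} ∪ Sum.inr '' {i | v ∈ C i} := by
      ext (i | j) <;> simp
    rw [e]
    have q1 : Conn (S.sum T ⊔ edge (Sum.inl i0) (Sum.inr j0)) (Sum.inl '' {i | v ∈ B i}) := by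
      refine (hBv v).map (T := S.sum T ⊔ edge (Sum.inl i0) (Sum.inr j0)) Sum.inl ?_
      intro a b hab
      exact Or.inl (sum_adj_inl.2 hab)
    have q2 : Conn (S.sum T ⊔ edge (Sum.inl i0) (Sum.inr j0)) (Sum.inr '' {i | v ∈ C i}) := by
      refine (hCv v).map (T := S.sum T ⊔ edge (Sum.inl i0) (Sum.inr j0)) Sum.inr ?_
      intro a b hab
      exact Or.inl (sum_adj_inr.2 hab)
    rcases Set.eq_empty_or_nonempty {i | v ∈ B i} with hb | ⟨i, hi⟩
    · rw [hb]; simpa using q2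
    rcases Set.eq_empty_or_nonempty {i | v ∈ C i} with hc | ⟨j, hj⟩
    · rw [hc]; simpa using q1
    have hvY : v ∈ Y := hY v (hBX i hi) (hCX j hj)
    refine q1.union q2 ⟨_, ⟨i0, hi0 hvY, rfl⟩, _, ⟨j0, hj0 hvY, rfl⟩, Or.inr ?_⟩
    right
    simp [edge]

theorem path_in_of_conn {ι : Type} {T : SimpleGraph ι} (hT : T.IsTree) {S : Set ι}
    (hS : Conn T S) {i j : ι} (hi : i ∈ S) (hj : j ∈ S) (p : T.Walk i j) (hp : p.IsPath) :
    ∀ x ∈ p.support, x ∈ S := by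
  classical
  have : ∃ q : T.Walk i j, ∀ x ∈ q.support, x ∈ S := by
    have := hS i hi j hj
    clear p hp
    induction this with
    | refl => exact ⟨.nil, by simpa using hi⟩
    | tail _ hst ih =>
      obtain ⟨q, hq⟩ := ih hst.2.1
      refine ⟨q.concat hst.1, ?_⟩
      intro x hx
      rw [Walk.support_concat] at hx
      simp at hx
      rcases hx with hx | rfl
      · exact hq x hx
      · exact hj
  obtain ⟨q, hq⟩ := this
  have e := (hT.2.subsingleton_path i j).elim ⟨p, hp⟩ q.toPath
  have e' : p = q.toPath.1 := congrArg Subtype.val e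
  intro x hx
  rw [e'] at hx
  exact hq x (q.support_toPath_subset_support hx)

theorem treewidth_le_of_TD [Fintype U] {G : SimpleGraph U} {H : U → U → Prop}
    (hH : ∀ u v, G.Adj u v → H u v) {N : ℕ} (h : TD H Finset.univ N) : treewidth G ≤ N - 1 := by
  obtain ⟨ι, _, T, B, hT, _, hBc, hBK, hBv⟩ := h
  obtain ⟨m, ⟨e⟩⟩ := Finite.exists_equiv_fin ι
  refine Nat.sInf_le ⟨m, T.map e.toEmbedding, fun i => B (e.symm i), ⟨?_, ?_, ?_, ?_⟩, ?_⟩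
  · exact (Iso.isTree_iff (SimpleGraph.Iso.map e T)).1 hT
  · intro v
    obtain ⟨i, hi⟩ := hBK {v} (Finset.subset_univ _) (by
      intro a ha b hb hab
      simp at ha hb
      exact absurd (ha.trans hb.symm) hab)
    exact ⟨e i, by simpa using hi⟩
  · intro u v huv
    classical
    obtain ⟨i, hi⟩ := hBK {u, v} (Finset.subset_univ _) (by
      intro a ha b hb hab
      simp at ha hb
      rcases ha with rfl | rfl <;> rcases hb with rfl | rfl
      · exact absurd rfl hab
      · exact hH _ _ huv
      · exact hH _ _ huv.symm
      · exact absurd rfl hab)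
    exact ⟨e i, by simpa using hi (by simp), by simpa using hi (by simp)⟩
  · intro v i j hi hj p hp x hx
    have hc : Conn (T.map e.toEmbedding) (e '' {i | v ∈ B i}) :=
      (hBv v).map e (fun a b hab => (SimpleGraph.map_adj_apply (f := e.toEmbedding)).2 hab)
    have hT' : (T.map e.toEmbedding).IsTree := (Iso.isTree_iff (SimpleGraph.Iso.map e T)).1 hT
    obtain ⟨y, hy, rfl⟩ := path_in_of_conn hT' hc (i := i) (j := j) ⟨e.symm i, hi, by simp⟩
      ⟨e.symm j, hj, by simp⟩ p hp x hx
    simpa using hy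
  · intro i
    have := hBc (e.symm i)
    show (B (e.symm i)).card ≤ N - 1 + 1
    omega

end trees
end S14

namespace S14

/-! ### Counting triples -/

section count
variable {U : Type}

open Classical in
theorem count3 {I : Finset U} {s : ℕ} (P Q S : U → U → U → Prop)
    (cover : ∀ u ∈ I, ∀ v ∈ I, ∀ w ∈ I, u ≠ v → u ≠ w → v ≠ w → P u v w ∨ Q u v w ∨ S u v w)
    (hP : ∀ u ∈ I, ∀ v ∈ I, u ≠ v → ∀ C ⊆ I, (∀ w ∈ C, w ≠ u ∧ w ≠ v ∧ P u v w) → C.card ≤ s)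
    (hQ : ∀ u ∈ I, ∀ w ∈ I, u ≠ w → ∀ C ⊆ I, (∀ v ∈ C, v ≠ u ∧ v ≠ w ∧ Q u v w) → C.card ≤ s)
    (hS : ∀ v ∈ I, ∀ w ∈ I, v ≠ w → ∀ C ⊆ I, (∀ u ∈ C, u ≠ v ∧ u ≠ w ∧ S u v w) → C.card ≤ s)
    (h2 : 2 ≤ I.card) : I.card - 2 ≤ 3 * s := by
  set T : Finset (U × U × U) := (I ×ˢ I ×ˢ I).filter
    (fun a => a.1 ≠ a.2.1 ∧ a.1 ≠ a.2.2 ∧ a.2.1 ≠ a.2.2) with hTdef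
  have memT : ∀ u v w, (u, v, w) ∈ T ↔ (u ∈ I ∧ v ∈ I ∧ w ∈ I) ∧ u ≠ v ∧ u ≠ w ∧ v ≠ w := by
    intro u v w
    simp [hTdef]
  have low : (I.card - 2) * I.offDiag.card ≤ T.card := by
    refine Finset.mul_card_image_le_card_of_maps_to (f := fun a => (a.1, a.2.1)) ?_ _ ?_
    · rintro ⟨u, v, w⟩ h
      rw [memT] at h
      simp [h.1, h.2]
    · rintro ⟨u, v⟩ h
      rw [Finset.mem_offDiag] at h
      have e1 : I.card - 2 ≤ ((I.erase u).erase v).card := by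
        have := Finset.pred_card_le_card_erase (s := I) (a := u)
        have := Finset.pred_card_le_card_erase (s := I.erase u) (a := v)
        omega
      refine e1.trans (Finset.card_le_card_of_injOn (fun w => (u, v, w)) ?_ ?_)
      · intro w hw
        simp only [Finset.coe_erase, Set.mem_diff, Finset.mem_coe, Set.mem_singleton_iff] at hw
        simp only [Finset.coe_filter, Set.mem_setOf_eq, memT]
        simp only at h
        exact ⟨⟨⟨h.1, h.2.1, hw.1.1⟩, h.2.2, fun e => hw.1.2 e.symm, fun e => hw.2 e.symm⟩, trivial⟩
      · intro a _ b _ hab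
        simpa using hab
  have bP : (T.filter (fun a => P a.1 a.2.1 a.2.2)).card ≤ s * I.offDiag.card := by
    refine Finset.card_le_mul_card_image_of_maps_to (f := fun a => (a.1, a.2.1)) ?_ _ ?_
    · rintro ⟨u, v, w⟩ h
      have h := (memT _ _ _).1 (Finset.mem_filter.1 h).1
      simp [h.1, h.2]
    · rintro ⟨u, v⟩ h
      rw [Finset.mem_offDiag] at h
      have hinj : Set.InjOn (fun a : U × U × U => a.2.2)
          ((T.filter (fun a => P a.1 a.2.1 a.2.2)).filter (fun a => (a.1, a.2.1) = (u, v))) := by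
        rintro ⟨a, b, c⟩ ha ⟨a', b', c'⟩ ha' he
        simp only [Finset.coe_filter, Set.mem_setOf_eq, Prod.mk.injEq] at ha ha' he ⊢
        exact ⟨ha.2.1.trans ha'.2.1.symm, ha.2.2.trans ha'.2.2.symm, he⟩
      rw [← Finset.card_image_of_injOn hinj]
      have key : ∀ w ∈ ((T.filter (fun a => P a.1 a.2.1 a.2.2)).filter
          (fun a => (a.1, a.2.1) = (u, v))).image (fun a : U × U × U => a.2.2),
          w ∈ I ∧ w ≠ u ∧ w ≠ v ∧ P u v w := by
        intro w hw
        obtain ⟨⟨a, b, c⟩, ha, rfl⟩ := Finset.mem_image.1 hw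
        simp only [Finset.mem_filter, memT, Prod.mk.injEq] at ha
        obtain ⟨⟨⟨hI, hne⟩, hp⟩, rfl, rfl⟩ := ha
        exact ⟨hI.2.2, fun e => hne.2.1 e.symm, fun e => hne.2.2 e.symm, hp⟩
      exact hP u h.1 v h.2.1 h.2.2 _ (fun w hw => (key w hw).1) (fun w hw => (key w hw).2)
  have bQ : (T.filter (fun a => Q a.1 a.2.1 a.2.2)).card ≤ s * I.offDiag.card := by
    refine Finset.card_le_mul_card_image_of_maps_to (f := fun a => (a.1, a.2.2)) ?_ _ ?_
    · rintro ⟨u, v, w⟩ h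
      have h := (memT _ _ _).1 (Finset.mem_filter.1 h).1
      simp [h.1, h.2]
    · rintro ⟨u, v⟩ h
      rw [Finset.mem_offDiag] at h
      have hinj : Set.InjOn (fun a : U × U × U => a.2.1)
          ((T.filter (fun a => Q a.1 a.2.1 a.2.2)).filter (fun a => (a.1, a.2.2) = (u, v))) := by
        rintro ⟨a, b, c⟩ ha ⟨a', b', c'⟩ ha' he
        simp only [Finset.coe_filter, Set.mem_setOf_eq, Prod.mk.injEq] at ha ha' he ⊢
        exact ⟨ha.2.1.trans ha'.2.1.symm, he, ha.2.2.trans ha'.2.2.symm⟩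
      rw [← Finset.card_image_of_injOn hinj]
      have key : ∀ w ∈ ((T.filter (fun a => Q a.1 a.2.1 a.2.2)).filter
          (fun a => (a.1, a.2.2) = (u, v))).image (fun a : U × U × U => a.2.1),
          w ∈ I ∧ w ≠ u ∧ w ≠ v ∧ Q u w v := by
        intro w hw
        obtain ⟨⟨a, b, c⟩, ha, rfl⟩ := Finset.mem_image.1 hw
        simp only [Finset.mem_filter, memT, Prod.mk.injEq] at ha
        obtain ⟨⟨⟨hI, hne⟩, hp⟩, rfl, rfl⟩ := ha
        exact ⟨hI.2.1, fun e => hne.1 e.symm, hne.2.2, hp⟩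
      exact hQ u h.1 v h.2.1 h.2.2 _ (fun w hw => (key w hw).1) (fun w hw => (key w hw).2)
  have bS : (T.filter (fun a => S a.1 a.2.1 a.2.2)).card ≤ s * I.offDiag.card := by
    refine Finset.card_le_mul_card_image_of_maps_to (f := fun a => (a.2.1, a.2.2)) ?_ _ ?_
    · rintro ⟨u, v, w⟩ h
      have h := (memT _ _ _).1 (Finset.mem_filter.1 h).1
      simp [h.1, h.2]
    · rintro ⟨u, v⟩ h
      rw [Finset.mem_offDiag] at h
      have hinj : Set.InjOn (fun a : U × U × U => a.1)
          ((T.filter (fun a => S a.1 a.2.1 a.2.2)).filter (fun a => (a.2.1, a.2.2) = (u, v))) := by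
        rintro ⟨a, b, c⟩ ha ⟨a', b', c'⟩ ha' he
        simp only [Finset.coe_filter, Set.mem_setOf_eq, Prod.mk.injEq] at ha ha' he ⊢
        exact ⟨he, ha.2.1.trans ha'.2.1.symm, ha.2.2.trans ha'.2.2.symm⟩
      rw [← Finset.card_image_of_injOn hinj]
      have key : ∀ w ∈ ((T.filter (fun a => S a.1 a.2.1 a.2.2)).filter
          (fun a => (a.2.1, a.2.2) = (u, v))).image (fun a : U × U × U => a.1),
          w ∈ I ∧ w ≠ u ∧ w ≠ v ∧ S w u v := by
        intro w hw
        obtain ⟨⟨a, b, c⟩, ha, rfl⟩ := Finset.mem_image.1 hw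
        simp only [Finset.mem_filter, memT, Prod.mk.injEq] at ha
        obtain ⟨⟨⟨hI, hne⟩, hp⟩, rfl, rfl⟩ := ha
        exact ⟨hI.1, hne.1, hne.2.1, hp⟩
      exact hS u h.1 v h.2.1 h.2.2 _ (fun w hw => (key w hw).1) (fun w hw => (key w hw).2)
  have hcov : T ⊆ T.filter (fun a => P a.1 a.2.1 a.2.2) ∪ (T.filter (fun a => Q a.1 a.2.1 a.2.2) ∪
      T.filter (fun a => S a.1 a.2.1 a.2.2)) := by
    rintro ⟨u, v, w⟩ h
    have h' := (memT _ _ _).1 h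
    have := cover u h'.1.1 v h'.1.2.1 w h'.1.2.2 h'.2.1 h'.2.2.1 h'.2.2.2
    simp only [Finset.mem_union, Finset.mem_filter]
    tauto
  have hc1 := Finset.card_le_card hcov
  have hc2 := Finset.card_union_le (T.filter (fun a => P a.1 a.2.1 a.2.2))
    (T.filter (fun a => Q a.1 a.2.1 a.2.2) ∪ T.filter (fun a => S a.1 a.2.1 a.2.2))
  have hc3 := Finset.card_union_le (T.filter (fun a => Q a.1 a.2.1 a.2.2))
    (T.filter (fun a => S a.1 a.2.1 a.2.2))
  have hpos : 0 < I.offDiag.card := by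
    obtain ⟨a, ha, b, hb, hab⟩ := Finset.one_lt_card.1 (by omega : 1 < I.card)
    exact Finset.card_pos.2 ⟨(a, b), by simp [ha, hb, hab]⟩
  have : (I.card - 2) * I.offDiag.card ≤ (3 * s) * I.offDiag.card := by
    have : 3 * s * I.offDiag.card = s * I.offDiag.card + s * I.offDiag.card
      + s * I.offDiag.card := by ring
    omega
  exact Nat.le_of_mul_le_mul_right this hpos

end count
end S14

namespace S14

/-! ### Components, separators and the main induction -/

section main
variable {U : Type} {G : SimpleGraph U}

/-- component of `u` in `G - Y` -/
def comp (G : SimpleGraph U) (Y : Finset U) (u : U) : Set U :=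
  {w | Relation.ReflTransGen (Stp G {z | z ∉ Y}) u w}

theorem comp_self (Y : Finset U) (u : U) : u ∈ comp G Y u := Relation.ReflTransGen.refl

theorem comp_conn (Y : Finset U) (u : U) : Conn G (comp G Y u) := by
  have key : ∀ w, Relation.ReflTransGen (Stp G {z | z ∉ Y}) u w →
      Relation.ReflTransGen (Stp G (comp G Y u)) u w := by
    intro w hw
    induction hw with
    | refl => exact .refl
    | tail h hst ih => exact ih.tail ⟨hst.1, h, h.tail hst⟩
  intro x hx y hy
  exact (rtg_symm (key x hx)).trans (key y hy)

theorem comp_disj {Y : Finset U} {u : U} (hu : u ∉ Y) : ∀ w ∈ comp G Y u, w ∉ Y := by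
  intro w hw
  change Relation.ReflTransGen (Stp G {z | z ∉ Y}) u w at hw
  induction hw with
  | refl => exact hu
  | tail _ hst _ => exact hst.2.2

theorem comp_closed {Y : Finset U} {u : U} (hu : u ∉ Y) :
    ∀ a ∈ comp G Y u, ∀ b, G.Adj a b → b ∉ Y → b ∈ comp G Y u := by
  intro a ha b hab hb
  exact Relation.ReflTransGen.tail ha ⟨hab, comp_disj hu a ha, hb⟩

theorem comp_sub {Y : Finset U} {u : U} {K : Set U} (hu : u ∈ K)
    (hK : ∀ a ∈ K, ∀ b, G.Adj a b → b ∉ Y → b ∈ K) : comp G Y u ⊆ K := by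
  intro w hw
  change Relation.ReflTransGen (Stp G {z | z ∉ Y}) u w at hw
  induction hw with
  | refl => exact hu
  | tail _ hst ih => exact hK _ ih _ hst.1 hst.2.2

theorem comp_symm {Y : Finset U} {u v : U} (h : v ∈ comp G Y u) : u ∈ comp G Y v :=
  rtg_symm h

theorem comp_trans {Y : Finset U} {u v w : U} (h : v ∈ comp G Y u) (hvw : w ∈ comp G Y v) :
    w ∈ comp G Y u := Relation.ReflTransGen.trans h hvw

/-- torso adjacency -/
def HX (G : SimpleGraph U) (X : Finset U) (u v : U) : Prop :=
  G.Adj u v ∨ ∃ D : Set U, Conn G D ∧ (∀ d ∈ D, d ∉ X) ∧ Tch G D u ∧ Tch G D v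

/-- small attachments -/
def Inv (G : SimpleGraph U) (X : Finset U) (s : ℕ) : Prop :=
  ∀ D : Set U, Conn G D → (∀ d ∈ D, d ∉ X) → ∀ C ⊆ X, (∀ c ∈ C, Tch G D c) → C.card ≤ s

/-- the separator bound -/
def SB (G : SimpleGraph U) (R : ℕ) : Prop :=
  ∀ A B : Set U, Conn G A → Conn G B → Anti G A B → ∀ C : Finset U, (∀ c ∈ C, Tch G A c) →
    (∀ c ∈ C, Tch G B c) → C.card < R

theorem conn_star {v : U} {ι : Type} {S : Set ι} {K : ι → Set U} (hK : ∀ i ∈ S, Conn G (K i))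
    (hv : ∀ i ∈ S, Tch G (K i) v) : Conn G ({v} ∪ ⋃ i ∈ S, K i) := by
  have key : ∀ x ∈ ({v} ∪ ⋃ i ∈ S, K i : Set U),
      Relation.ReflTransGen (Stp G ({v} ∪ ⋃ i ∈ S, K i)) v x := by
    rintro x (hx | hx)
    · rw [Set.mem_singleton_iff.1 hx]
    · simp only [Set.mem_iUnion] at hx
      obtain ⟨i, hi, hx⟩ := hx
      have hs : K i ⊆ ({v} ∪ ⋃ i ∈ S, K i : Set U) := by
        intro y hy
        right
        simp only [Set.mem_iUnion]
        exact ⟨i, hi, hy⟩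
      obtain ⟨d, hd, ha⟩ := hv i hi
      exact Relation.ReflTransGen.head ⟨ha, Or.inl rfl, hs hd⟩ (rtg_mono hs (hK i hi d hd x hx))
  intro x hx y hy
  exact (rtg_symm (key x hx)).trans (key y hy)

theorem complete_case (tri : NoTri G) {R : ℕ} (hR : 1 ≤ R) (sb : SB G R) {X : Finset U}
    (hinv : Inv G X (R - 1)) (hX : Clq (HX G X) X) : X.card < (3 * R) * (3 * R) := by
  by_contra hcard
  push Not at hcard
  obtain ⟨I, hIX, hIc, hI⟩ := indep_of_card tri (by omega) X hcard
  have hd : ∀ u v, ∃ d, u ∈ I → v ∈ I → u ≠ v →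
      d ∉ X ∧ Tch G (comp G X d) u ∧ Tch G (comp G X d) v := by
    intro u v
    by_cases h : u ∈ I ∧ v ∈ I ∧ u ≠ v
    · obtain ⟨hu, hv, huv⟩ := h
      rcases hX u (hIX hu) v (hIX hv) huv with h | ⟨D, hD, hDX, ⟨d, hd, hud⟩, hDv⟩
      · exact absurd h (hI u hu v hv)
      · have hs : D ⊆ comp G X d := by
          refine hD.subset_of_closed ⟨d, hd, comp_self X d⟩ ?_
          intro a ha b hb hab
          exact comp_closed (hDX d hd) a ha b hab (hDX b hb)
        exact ⟨d, fun _ _ _ => ⟨hDX d hd, ⟨d, hs hd, hud⟩, hDv.mono hs⟩⟩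
    · exact ⟨u, fun h1 h2 h3 => absurd ⟨h1, h2, h3⟩ h⟩
  choose d hd using hd
  have hcount := count3 (I := I) (s := R - 1) (fun u v w => Tch G (comp G X (d u v)) w)
    (fun u v w => Tch G (comp G X (d u w)) v)
    (fun u v w => ¬ Tch G (comp G X (d u v)) w ∧ ¬ Tch G (comp G X (d u w)) v)
    (by intro u _ v _ w _ _ _ _; tauto) ?_ ?_ ?_ (by omega)
  · omega
  · intro u hu v hv huv C hC h
    exact hinv _ (comp_conn _ _) (comp_disj (hd u v hu hv huv).1) C (hC.trans hIX)
      (fun c hc => (h c hc).2.2)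
  · intro u hu v hv huv C hC h
    exact hinv _ (comp_conn _ _) (comp_disj (hd u v hu hv huv).1) C (hC.trans hIX)
      (fun c hc => (h c hc).2.2)
  · intro v hv w hw hvw C hC h
    have hA : Conn G ({v} ∪ ⋃ u ∈ (C : Set U), comp G X (d u v)) :=
      conn_star (fun u _ => comp_conn _ _) (fun u hu => (hd u v (hC hu) hv (h u hu).1).2.2)
    have hB : Conn G ({w} ∪ ⋃ u ∈ (C : Set U), comp G X (d u w)) :=
      conn_star (fun u _ => comp_conn _ _) (fun u hu => (hd u w (hC hu) hw (h u hu).2.1).2.2)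
    have hlt := sb _ _ hA hB ?_ C ?_ ?_
    · omega
    · rintro a (ha | ha) b (hb | hb)
      · rw [Set.mem_singleton_iff.1 ha, Set.mem_singleton_iff.1 hb]
        exact ⟨hvw, hI v hv w hw⟩
      · rw [Set.mem_singleton_iff.1 ha]
        simp only [Set.mem_iUnion] at hb
        obtain ⟨u, hu, hb⟩ := hb
        have hu : u ∈ C := hu
        refine ⟨?_, fun hvb => (h u hu).2.2.2 ⟨b, hb, hvb⟩⟩
        rintro rfl
        exact comp_disj (hd u w (hC hu) hw (h u hu).2.1).1 _ hb (hIX hv)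
      · rw [Set.mem_singleton_iff.1 hb]
        simp only [Set.mem_iUnion] at ha
        obtain ⟨u, hu, ha⟩ := ha
        have hu : u ∈ C := hu
        refine ⟨?_, fun hvb => (h u hu).2.2.1 ⟨a, ha, hvb.symm⟩⟩
        rintro rfl
        exact comp_disj (hd u v (hC hu) hv (h u hu).1).1 _ ha (hIX hw)
      · simp only [Set.mem_iUnion] at ha hb
        obtain ⟨u, hu, ha⟩ := ha
        obtain ⟨u', hu', hb⟩ := hb
        have hu : u ∈ C := hu
        have hu' : u' ∈ C := hu'
        obtain ⟨q1, q2, q3⟩ := hd u v (hC hu) hv (h u hu).1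
        obtain ⟨r1, r2, r3⟩ := hd u' w (hC hu') hw (h u' hu').2.1
        have no : b ∉ comp G X (d u v) := by
          intro hb'
          have hs : comp G X (d u' w) ⊆ comp G X (d u v) := by
            intro z hz
            exact comp_trans hb' (comp_trans (comp_symm hb) hz)
          exact (h u hu).2.2.1 (r3.mono hs)
        refine ⟨?_, fun hab => no (comp_closed q1 a ha b hab (comp_disj r1 b hb))⟩
        rintro rfl
        exact no ha
    · intro c hc
      refine (hd c v (hC hc) hv (h c hc).1).2.1.mono ?_
      intro z hz
      right
      simp only [Set.mem_iUnion]
      exact ⟨c, hc, hz⟩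
    · intro c hc
      refine (hd c w (hC hc) hw (h c hc).2.1).2.1.mono ?_
      intro z hz
      right
      simp only [Set.mem_iUnion]
      exact ⟨c, hc, hz⟩

open Classical in
theorem exists_sep {X : Finset U} {u v : U} (hu : u ∈ X) (hv : v ∈ X) (huv : u ≠ v)
    (hn : ¬ HX G X u v) : ∃ Y ⊆ X, u ∉ Y ∧ v ∉ Y ∧ v ∉ comp G Y u ∧
      ∀ y ∈ Y, Tch G (comp G Y u) y ∧ Tch G (comp G Y v) y := by
  have hne : ({Y : Finset U | Y ⊆ X ∧ u ∉ Y ∧ v ∉ Y ∧ v ∉ comp G Y u}).Nonempty := by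
    refine ⟨(X.erase u).erase v, ?_, by simp, by simp, ?_⟩
    · exact (Finset.erase_subset _ _).trans (Finset.erase_subset _ _)
    · intro hvc
      have := comp_sub (G := G) (Y := (X.erase u).erase v) (u := u)
        (K := {t | t = u ∨ ∃ D : Set U, Conn G D ∧ (∀ d ∈ D, d ∉ X) ∧ t ∈ D ∧ Tch G D u})
        (Or.inl rfl) ?_ hvc
      · rcases this with h | ⟨D, _, hD, h, _⟩
        · exact huv h.symm
        · exact hD v h hv
      · rintro a (rfl | ⟨D, hD, hDX, haD, hDu⟩) b hab hb
        · by_cases hbX : b ∈ X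
          · by_cases hbv : b = v
            · subst hbv
              exact absurd (Or.inl hab) hn
            · exact absurd (Finset.mem_erase.2 ⟨hbv, Finset.mem_erase.2 ⟨hab.ne', hbX⟩⟩) hb
          · right
            refine ⟨{b}, Conn.singleton b, ?_, rfl, b, rfl, hab⟩
            intro d hd
            rw [Set.mem_singleton_iff.1 hd]
            exact hbX
        · by_cases hbX : b ∈ X
          · by_cases hbu : b = u
            · exact Or.inl hbu
            by_cases hbv : b = v
            · subst hbv
              exact absurd (Or.inr ⟨D, hD, hDX, hDu, a, haD, hab.symm⟩) hn
            · exact absurd (Finset.mem_erase.2 ⟨hbv, Finset.mem_erase.2 ⟨hbu, hbX⟩⟩) hb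
          · right
            refine ⟨insert b D, hD.insert ⟨a, haD, hab.symm⟩, ?_, Or.inl rfl,
              hDu.mono (Set.subset_insert _ _)⟩
            rintro d (rfl | hd)
            · exact hbX
            · exact hDX d hd
  obtain ⟨Y, ⟨hYX, huY, hvY, hsep⟩, hmin⟩ :=
    WellFounded.has_min (wellFounded_lt : WellFounded ((· < ·) : Finset U → Finset U → Prop)) _ hne
  refine ⟨Y, hYX, huY, hvY, hsep, fun y hy => ?_⟩
  have h1 : v ∈ comp G (Y.erase y) u := by
    by_contra h
    refine hmin (Y.erase y) ⟨(Finset.erase_subset _ _).trans hYX, ?_, ?_, h⟩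
      (Finset.erase_ssubset hy)
    · exact fun h => huY (Finset.mem_of_mem_erase h)
    · exact fun h => hvY (Finset.mem_of_mem_erase h)
  constructor
  · by_contra hno
    refine hsep (comp_sub (comp_self Y u) ?_ h1)
    intro a ha b hab hb
    by_cases hbY : b ∈ Y
    · by_cases hby : b = y
      · subst hby
        exact absurd ⟨a, ha, hab.symm⟩ hno
      · exact absurd (Finset.mem_erase.2 ⟨hby, hbY⟩) hb
    · exact comp_closed huY a ha b hab hbY
  · by_contra hno
    refine hsep (comp_symm (comp_sub (comp_self Y v) ?_ (comp_symm h1)))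
    intro a ha b hab hb
    by_cases hbY : b ∈ Y
    · by_cases hby : b = y
      · subst hby
        exact absurd ⟨a, ha, hab.symm⟩ hno
      · exact absurd (Finset.mem_erase.2 ⟨hby, hbY⟩) hb
    · exact comp_closed hvY a ha b hab hbY

open Classical in
theorem main_ind (tri : NoTri G) {R N : ℕ} (hR : 1 ≤ R) (hN : (3 * R) * (3 * R) ≤ N)
    (sb : SB G R) : ∀ (n : ℕ) (X : Finset U), X.card ≤ n → Inv G X (R - 1) → TD (HX G X) X N := by
  intro n
  induction n with
  | zero =>
    intro X hX _
    exact TD.single _ _ _ (by omega)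
  | succ n ih =>
    intro X hXn hinv
    by_cases hcl : Clq (HX G X) X
    · exact TD.single _ _ _ ((complete_case tri hR sb hinv hcl).le.trans hN)
    unfold Clq at hcl
    push Not at hcl
    obtain ⟨u, hu, v, hv, huv, hn⟩ := hcl
    obtain ⟨Y, hYX, huY, hvY, hsep, hY⟩ := exists_sep hu hv huv hn
    set A := comp G Y u with hAdef
    set B := comp G Y v with hBdef
    have hAconn : Conn G A := comp_conn Y u
    have hBconn : Conn G B := comp_conn Y v
    have hAY : ∀ a ∈ A, a ∉ Y := comp_disj huY
    have hBY : ∀ a ∈ B, a ∉ Y := comp_disj hvY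
    have hAcl : ∀ a ∈ A, ∀ b, G.Adj a b → b ∉ Y → b ∈ A := comp_closed huY
    have hBA : ∀ b ∈ B, b ∉ A := by
      intro b hb hb'
      exact hsep (comp_trans hb' (comp_symm hb))
    have hAnti : Anti G A B := by
      intro a ha b hb
      refine ⟨?_, fun hab => hBA b hb (hAcl a ha b hab (hBY b hb))⟩
      rintro rfl
      exact hBA a hb ha
    have hYc : Y.card ≤ R - 1 := by
      have := sb A B hAconn hBconn hAnti Y (fun y hy => (hY y hy).1) (fun y hy => (hY y hy).2)
      omega
    have hDA : ∀ D : Set U, Conn G D → (∀ d ∈ D, d ∉ Y) → (∃ d ∈ D, d ∈ A) → D ⊆ A := by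
      intro D hD hDY hm
      refine hD.subset_of_closed hm ?_
      intro a ha b hb hab
      exact hAcl a ha b hab (hDY b hb)
    set X1 := X.filter (fun x => x ∈ A) ∪ Y with hX1
    set X2 := X.filter (fun x => x ∉ A) with hX2
    have m1 : ∀ x, x ∈ X1 ↔ (x ∈ X ∧ x ∈ A) ∨ x ∈ Y := by
      intro x; simp [hX1]
    have m2 : ∀ x, x ∈ X2 ↔ x ∈ X ∧ x ∉ A := by
      intro x; simp [hX2]
    have s1 : X1 ⊆ X := by
      intro x hx
      rcases (m1 x).1 hx with h | h
      · exact h.1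
      · exact hYX h
    have s2 : X2 ⊆ X := fun x hx => ((m2 x).1 hx).1
    have y1 : Y ⊆ X1 := fun y hy => (m1 y).2 (Or.inr hy)
    have y2 : Y ⊆ X2 := fun y hy => (m2 y).2 ⟨hYX hy, fun h => hAY y h hy⟩
    have l1 : X1.card ≤ n := by
      have : X1 ⊂ X := by
        refine Finset.ssubset_iff_of_subset s1 |>.2 ⟨v, hv, fun h => ?_⟩
        rcases (m1 v).1 h with h | h
        · exact hsep h.2
        · exact hvY h
      have := Finset.card_lt_card this
      omega
    have l2 : X2.card ≤ n := by
      have : X2 ⊂ X := by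
        refine Finset.ssubset_iff_of_subset s2 |>.2 ⟨u, hu, fun h => ?_⟩
        exact ((m2 u).1 h).2 (comp_self Y u)
      have := Finset.card_lt_card this
      omega
    have i1 : Inv G X1 (R - 1) := by
      intro D hD hDX C hC hCD
      by_cases h : ∀ d ∈ D, d ∉ X
      · exact hinv D hD h C (hC.trans s1) hCD
      · push Not at h
        obtain ⟨d, hd, hdX⟩ := h
        have hdA : d ∉ A := fun h => hDX d hd ((m1 d).2 (Or.inl ⟨hdX, h⟩))
        have hDY : ∀ e ∈ D, e ∉ Y := fun e he h => hDX e he (y1 h)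
        refine (Finset.card_le_card (?_ : C ⊆ Y)).trans hYc
        intro c hc
        rcases (m1 c).1 (hC hc) with h | h
        · obtain ⟨e, he, hce⟩ := hCD c hc
          exact absurd (hDA D hD hDY ⟨e, he, hAcl c h.2 e hce (hDY e he)⟩ hd) hdA
        · exact h
    have i2 : Inv G X2 (R - 1) := by
      intro D hD hDX C hC hCD
      by_cases h : ∀ d ∈ D, d ∉ X
      · exact hinv D hD h C (hC.trans s2) hCD
      · push Not at h
        obtain ⟨d, hd, hdX⟩ := h
        have hdA : d ∈ A := by
          by_contra h
          exact hDX d hd ((m2 d).2 ⟨hdX, h⟩)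
        have hDY : ∀ e ∈ D, e ∉ Y := fun e he h => hDX e he (y2 h)
        refine (Finset.card_le_card (?_ : C ⊆ Y)).trans hYc
        intro c hc
        by_contra hcY
        obtain ⟨e, he, hce⟩ := hCD c hc
        exact ((m2 c).1 (hC hc)).2 (hAcl e (hDA D hD hDY ⟨d, hd, hdA⟩ he) c hce.symm hcY)
    refine TD.glue (ih X1 l1 i1) (ih X2 l2 i2) y1 y2 ?_ s1 s2 ?_ ?_ ?_
    · intro x hx1 hx2
      rcases (m1 x).1 hx1 with h | h
      · exact absurd h.2 ((m2 x).1 hx2).2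
      · exact h
    · intro y hy y' hy' _
      refine Or.inr ⟨B, hBconn, ?_, (hY y hy).2, (hY y' hy').2⟩
      intro b hb hb1
      rcases (m1 b).1 hb1 with h | h
      · exact hBA b hb h.2
      · exact hBY b hb h
    · intro y hy y' hy' _
      exact Or.inr ⟨A, hAconn, fun a ha h => ((m2 a).1 h).2 ha, (hY y hy).1, (hY y' hy').1⟩
    · intro K hKX hK
      have mono : ∀ Z ⊆ X, Clq (HX G Z) K := by
        intro Z hZ a ha b hb hab
        rcases hK a ha b hb hab with h | ⟨D, hD, hDX, h⟩
        · exact Or.inl h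
        · exact Or.inr ⟨D, hD, fun d hd h => hDX d hd (hZ h), h⟩
      by_cases hKA : ∃ a ∈ K, a ∈ A
      · left
        refine ⟨?_, mono X1 s1⟩
        obtain ⟨a, haK, haA⟩ := hKA
        intro b hb
        rw [m1]
        by_contra hno
        push Not at hno
        have hbA : b ∉ A := hno.1 (hKX hb)
        have hab : a ≠ b := by
          rintro rfl
          exact hbA haA
        rcases hK a haK b hb hab with h | ⟨D, hD, hDX, ⟨d, hd, had⟩, ⟨e, he, hbe⟩⟩
        · exact hbA (hAcl a haA b h hno.2)
        · have hDY : ∀ e ∈ D, e ∉ Y := fun e he h => hDX e he (hYX h)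
          have := hDA D hD hDY ⟨d, hd, hAcl a haA d had (hDY d hd)⟩ he
          exact hbA (hAcl e this b hbe.symm hno.2)
      · right
        push Not at hKA
        exact ⟨fun b hb => (m2 b).2 ⟨hKX hb, hKA b hb⟩, mono X2 s2⟩

theorem final [Fintype U] (hT : ¬ ContainsTheta G) (tri : G.CliqueFree 3) {k : ℕ} (hk : 1 ≤ k)
    (hS : ¬ ContainsSpider G k) : treewidth G ≤ 2 * (ramseyNumber 3 (4 * k - 1)) ^ 3 - 1 := by
  have hR : 5 ≤ ramseyNumber 3 (4 * k - 1) :=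
    ramsey_ge (by omega) (ramsey_holds (by omega : 1 ≤ 4 * k - 1))
  have sb : SB G (ramseyNumber 3 (4 * k - 1)) := fun A B hA hB hAB C tA tB =>
    sepBound hT tri hk hS hA hB hAB C tA tB
  generalize ramseyNumber 3 (4 * k - 1) = R at hR sb ⊢
  refine treewidth_le_of_TD (H := HX G Finset.univ) (fun u v h => Or.inl h) ?_
  refine main_ind (noTri_of tri) (by omega) ?_ sb _ Finset.univ le_rfl ?_
  · have : R ^ 3 = R * (R * R) := by ring
    rw [this]
    nlinarith [Nat.mul_le_mul_right (R * R) hR]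
  · intro D hD hDX C hC hCD
    have : C = ∅ := by
      rw [Finset.eq_empty_iff_forall_notMem]
      intro c hc
      obtain ⟨d, hd, _⟩ := hCD c hc
      exact hDX d hd (Finset.mem_univ d)
    simp [this]

end main
end S14

/-- For `k ≥ 1`, every (theta, triangle, `S_{k,k,k}`)-free graph has
treewidth at most `2·R(3, 4k-1)³ - 1`. -/
theorem statement14 (G : SimpleGraph V) (k : ℕ) (hk : 1 ≤ k)
    (hTheta : ¬ContainsTheta G) (hTri : G.CliqueFree 3) (hS : ¬ContainsSpider G k) :
    treewidth G ≤ 2 * (ramseyNumber 3 (4 * k - 1)) ^ 3 - 1 := by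
  exact S14.final hTheta hTri hk hS
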